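/- arXiv:1801.04591 — 3 statements merged into one kernel-verified Lean document; each statement's English description precedes it below -/
import Mathlib

section
/- Let u ∈ C¹_c(ℝ) (continuously differentiable with compact support) and let p > 1. Then, with S_δ u(x) := δ⌊u(x)/δ⌋, one has S_δ u → u in L^p(ℝ) as δ → 0⁺ and lim_{δ→0⁺} Λ_{δ,p}(φ_1, S_δ u, ℝ) = (2/p) · ((1 − 2^{1−p})/(p−1)) · ∫_ℝ |u'(x)|^p dx. -/
/-!
The value `S_δ u x / δ` is the integer `⌊u x / δ⌋`, so the interaction `φ_1` is active at `(x, y)`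
exactly when the floors of `u x / δ` and `u y / δ` differ by at least two. After the substitution
`y = x + δ h` (`Lambda_eq`) all powers of `δ` cancel and
`Λ = ∫ |h|^(-1-p) · jumpVol u δ h dh`, where `jumpVol u δ h` is the measure of the set of `x` at
which the floors of `u x / δ` and `u (x + δ h) / δ` are at least two apart.

For fixed `h`, the increment `(u (x + δ h) - u x) / δ` tends to `h u'(x)`, while the phase
`u x / δ mod 1` oscillates without converging. The phase is averaged out by replacing the integrand
at `x` with its mean over the window `[x, x + √δ]`, which does not change the integral over `ℝ`
(`jumpVol_eq_avg`). The window shrinks, so `u'` is almost constant on it; if `u'(x) ≠ 0` the phase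
runs through about `|u'(x)| / √δ → ∞` periods, hence is asymptotically equidistributed
(`tendsto_integral_periodic`, by the change of variables `w = u / δ`). Replacing the true increment
by its limit only matters when the phase is within `ε` of a critical value, which has frequency
`2 ε` (`jmp_sub_le`, `integral_nearInt`). This yields
`jumpVol u δ h → ∫ phaseAvg (h u'(x)) dx`, where `phaseAvg t` is the probability that the floors of
`θ` and `θ + t` differ by at least two for `θ` uniform in `(0, 1]` (`tendsto_jumpVol`).

As `u` is `L`-Lipschitz, `jumpVol u δ h` vanishes for `|h| ≤ 1 / L`, and it is at most twice the
measure of an interval containing the support; dominated convergence in `h` gives the limit of `Λ`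
(`tendsto_integral`). The limit is evaluated by scaling `s = h u'(x)`, which produces `|u'(x)|^p`
(`lintegral_singKer_scaled`), and by integrating in `s` for fixed `θ`: the jump occurs for
`s ≥ 2 - θ` or `s < -(1 + θ)`, and both contributions integrate over `θ` to `∫_1^2 s^(-p) ds / p`
(`lintegral_singKer_phaseAvg`).
-/

open MeasureTheory Filter Set Topology ENNReal

/-- The functional `Λ_{δ,p}(φ,u,Ω)` in dimension one. -/
noncomputable def Lambda1 (φ : ℝ → ℝ) (p δ : ℝ) (u : ℝ → ℝ) (Ω : Set ℝ) : ℝ≥0∞ :=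
  ∫⁻ x in Ω, ∫⁻ y in Ω, ENNReal.ofReal (φ (|u y - u x| / δ) * δ ^ p / |y - x| ^ (1 + p))

/-- The interaction law `φ_k`. -/
noncomputable def phik (k t : ℝ) : ℝ := if t ≤ k then 0 else 1

/-! ### Jumps of the floor function -/

/-- Indicator, with values in `{0, 1}`, of the event that the floors of `a` and `b` are at least two
apart. -/
noncomputable def jmp (a b : ℝ) : ℝ := if 2 ≤ |⌊b⌋ - ⌊a⌋| then 1 else 0

lemma jmp_nonneg (a b : ℝ) : 0 ≤ jmp a b := by unfold jmp; split_ifs <;> norm_num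
lemma jmp_le_one (a b : ℝ) : jmp a b ≤ 1 := by unfold jmp; split_ifs <;> norm_num

lemma jmp_eq_zero {a b : ℝ} (h : |b - a| ≤ 1) : jmp a b = 0 := by
  unfold jmp
  rw [if_neg]
  rw [abs_le] at h
  rw [not_le, abs_lt]
  have h1 := Int.floor_le a
  have h2 := Int.lt_floor_add_one a
  have h3 := Int.floor_le b
  have h4 := Int.lt_floor_add_one b
  constructor
  · have : ((-2 : ℤ) : ℝ) < ((⌊b⌋ - ⌊a⌋ : ℤ) : ℝ) := by push_cast; linarith
    exact_mod_cast this
  · have : ((⌊b⌋ - ⌊a⌋ : ℤ) : ℝ) < ((2 : ℤ) : ℝ) := by push_cast; linarith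
    exact_mod_cast this

lemma jmp_congr {a b c : ℝ} (h : ⌊b⌋ = ⌊c⌋) : jmp a b = jmp a c := by
  unfold jmp; rw [h]

lemma jmp_add_one (a b : ℝ) : jmp (a + 1) (b + 1) = jmp a b := by
  unfold jmp; simp

lemma measurable_jmp : Measurable (fun z : ℝ × ℝ => jmp z.1 z.2) := by
  unfold jmp
  refine Measurable.ite ?_ measurable_const measurable_const
  have h : Measurable (fun z : ℝ × ℝ => |⌊z.2⌋ - ⌊z.1⌋|) := by
    have : Measurable (fun z : ℤ × ℤ => |z.2 - z.1|) := measurable_of_countable _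
    exact this.comp ((Int.measurable_floor.comp measurable_fst).prodMk
      (Int.measurable_floor.comp measurable_snd))
  exact measurableSet_le measurable_const h

@[fun_prop]
lemma measurable_jmp_comp {α : Type*} [MeasurableSpace α] {f g : α → ℝ} (hf : Measurable f)
    (hg : Measurable g) : Measurable (fun x => jmp (f x) (g x)) := by
  have h1 : Measurable (fun x => (f x, g x)) := hf.prodMk hg
  have h2 := measurable_jmp.comp h1
  simpa only [Function.comp_def] using h2

/-- The interaction law `φ_1` applied to two values of a segmentation is a floor jump. -/
lemma phik_eq_jmp {δ : ℝ} (hδ : 0 < δ) (a b : ℝ) :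
    (if |δ * (⌊b⌋ : ℝ) - δ * (⌊a⌋ : ℝ)| / δ ≤ 1 then (0:ℝ) else 1) = jmp a b := by
  have : |δ * (⌊b⌋ : ℝ) - δ * (⌊a⌋ : ℝ)| / δ = ((|⌊b⌋ - ⌊a⌋| : ℤ) : ℝ) := by
    rw [← mul_sub, abs_mul, abs_of_pos hδ, mul_div_cancel_left₀ _ hδ.ne']
    push_cast; rfl
  rw [this]
  unfold jmp
  split_ifs with h1 h2 h2
  · have : |⌊b⌋ - ⌊a⌋| ≤ 1 := by exact_mod_cast h1
    omega
  · rfl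
  · rfl
  · exfalso; apply h1
    have : |⌊b⌋ - ⌊a⌋| ≤ 1 := by omega
    exact_mod_cast this

lemma lintegral_scale {a : ℝ} (ha : a ≠ 0) (f : ℝ → ℝ≥0∞) (hf : Measurable f) :
    ∫⁻ y, f y = ENNReal.ofReal |a| * ∫⁻ h, f (a * h) := by
  conv_lhs => rw [← Real.smul_map_volume_mul_left ha]
  rw [lintegral_smul_measure, lintegral_map hf (by fun_prop), smul_eq_mul]

/-- The number of integers in the half-open interval `(w - ε, w + ε]`. -/
noncomputable def nearInt (ε w : ℝ) : ℝ := ⌊w + ε⌋ - ⌊w - ε⌋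

@[fun_prop]
lemma measurable_nearInt (ε : ℝ) : Measurable (nearInt ε) := by unfold nearInt; fun_prop

lemma nearInt_nonneg {ε : ℝ} (hε : 0 < ε) (w : ℝ) : 0 ≤ nearInt ε w := by
  unfold nearInt
  have : ⌊w - ε⌋ ≤ ⌊w + ε⌋ := Int.floor_mono (by linarith)
  rw [sub_nonneg]; exact_mod_cast this

lemma nearInt_le_one {ε : ℝ} (hε : ε < 1 / 2) (w : ℝ) : nearInt ε w ≤ 1 := by
  unfold nearInt
  have : ⌊w + ε⌋ ≤ ⌊w - ε⌋ + 1 := by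
    rw [← Int.floor_add_one]; exact Int.floor_mono (by linarith)
  have : (⌊w + ε⌋ : ℝ) ≤ ⌊w - ε⌋ + 1 := by exact_mod_cast this
  linarith

lemma nearInt_periodic (ε : ℝ) : Function.Periodic (nearInt ε) 1 := by
  intro w
  unfold nearInt
  rw [show w + 1 + ε = w + ε + 1 by ring, show w + 1 - ε = w - ε + 1 by ring]
  simp

lemma integral_fract_shift (c : ℝ) :
    ∫ w in (0:ℝ)..1, Int.fract (w + c) = ∫ w in (0:ℝ)..1, Int.fract w := by
  rw [intervalIntegral.integral_comp_add_right (fun w => Int.fract w) c]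
  have h : Function.Periodic (fun w : ℝ => Int.fract w) 1 := fun w => Int.fract_add_one w
  have := h.intervalIntegral_add_eq c 0
  rw [zero_add] at this ⊢
  rw [add_comm, this]

lemma intervalIntegrable_of_bdd {f : ℝ → ℝ} (hf : Measurable f) {C : ℝ}
    (h : ∀ x, |f x| ≤ C) (a b : ℝ) :
    IntervalIntegrable f volume a b := by
  rw [intervalIntegrable_iff]
  refine Measure.integrableOn_of_bounded (M := C) ?_ hf.aestronglyMeasurable ?_
  · simp
  · exact ae_of_all _ h

lemma integral_nearInt {ε : ℝ} : ∫ w in (0:ℝ)..1, nearInt ε w = 2 * ε := by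
  have hb : ∀ x : ℝ, |Int.fract x| ≤ 1 := fun x => by
    rw [Int.abs_fract]; exact (Int.fract_lt_one x).le
  -- The fractional parts at `w + ε` and `w - ε` have the same mean over a period.
  have h : ∀ w, nearInt ε w = 2 * ε - Int.fract (w + ε) + Int.fract (w + -ε) := fun w => by
    unfold nearInt Int.fract; rw [← sub_eq_add_neg]; ring
  simp_rw [h]
  have i1 : ∀ c : ℝ, IntervalIntegrable (fun w : ℝ => Int.fract (w + c)) volume 0 1 := fun c =>
    intervalIntegrable_of_bdd (by fun_prop) (fun x => hb _) _ _
  rw [intervalIntegral.integral_add ((intervalIntegrable_const).sub (i1 _)) (i1 _),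
    intervalIntegral.integral_sub intervalIntegrable_const (i1 _), integral_fract_shift,
    integral_fract_shift]
  simp

/-- Moving the second argument of `jmp` by at most `ε` changes the result only if an integer is
crossed, so only if the argument is within `ε` of an integer. -/
lemma jmp_sub_le {ε a b c : ℝ} (hε : 0 < ε) (h : |b - c| ≤ ε) :
    |jmp a b - jmp a c| ≤ nearInt ε c := by
  rw [abs_le] at h
  by_cases h0 : ⌊c + ε⌋ = ⌊c - ε⌋
  · have e1 : ⌊c⌋ = ⌊c - ε⌋ := le_antisymm
      (h0 ▸ Int.floor_mono (by linarith)) (Int.floor_mono (by linarith))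
    have e2 : ⌊b⌋ = ⌊c - ε⌋ := le_antisymm
      (h0 ▸ Int.floor_mono (by linarith)) (Int.floor_mono (by linarith))
    rw [jmp_congr (e2.trans e1.symm), sub_self, abs_zero]
    exact nearInt_nonneg hε c
  · have h1 : ⌊c - ε⌋ ≤ ⌊c + ε⌋ := Int.floor_mono (by linarith)
    have h2 : ⌊c - ε⌋ + 1 ≤ ⌊c + ε⌋ := by omega
    have h3 : (⌊c - ε⌋ : ℝ) + 1 ≤ ⌊c + ε⌋ := by exact_mod_cast h2
    have := jmp_nonneg a b
    have := jmp_nonneg a c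
    have := jmp_le_one a b
    have := jmp_le_one a c
    unfold nearInt
    rw [abs_le]; constructor <;> linarith

/-- The integral of a `1`-periodic function with values in `[0, 1]` over an interval is its mean times
the length, up to a bounded error coming from the last incomplete period. -/
lemma periodic_bound {g : ℝ → ℝ} (hg : Measurable g) (h0 : ∀ x, 0 ≤ g x) (h1 : ∀ x, g x ≤ 1)
    (hp : Function.Periodic g 1) (a b : ℝ) :
    |(∫ w in a..b, g w) - (b - a) * ∫ w in (0:ℝ)..1, g w| ≤ 2 := by
  have hi : ∀ a b, IntervalIntegrable g volume a b := fun a b =>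
    intervalIntegrable_of_bdd hg (C := 1) (fun x => by rw [abs_of_nonneg (h0 x)]; exact h1 x) a b
  have hm0 : 0 ≤ ∫ w in (0:ℝ)..1, g w :=
    intervalIntegral.integral_nonneg zero_le_one fun x _ => h0 x
  have hnorm : ∀ a b, |∫ w in a..b, g w| ≤ |b - a| := fun a b => by
    have := intervalIntegral.norm_integral_le_of_norm_le_const (a := a) (b := b) (f := g) (C := 1)
      (fun x _ => by rw [Real.norm_eq_abs, abs_of_nonneg (h0 x)]; exact h1 x)
    simpa using this
  have hm1 : ∫ w in (0:ℝ)..1, g w ≤ 1 := by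
    have := hnorm 0 1
    rw [abs_of_nonneg hm0] at this; simpa using this
  set m := ∫ w in (0:ℝ)..1, g w with hm
  have hz := hp.intervalIntegral_add_zsmul_eq ⌊b - a⌋ a hi
  have hz' := hp.intervalIntegral_add_eq a 0
  rw [hz', zero_add, ← hm] at hz
  simp only [zsmul_eq_mul, mul_one] at hz
  have hadd := intervalIntegral.integral_add_adjacent_intervals (hi a (a + ⌊b - a⌋))
    (hi (a + ⌊b - a⌋) b)
  rw [← hadd, hz]
  have hr := hnorm (a + ⌊b - a⌋) b
  have f1 := Int.floor_le (b - a)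
  have f2 := Int.lt_floor_add_one (b - a)
  rw [abs_of_nonneg (a := b - (a + ⌊b - a⌋)) (by linarith)] at hr
  rw [abs_le] at hr ⊢
  have : (b - a - ⌊b - a⌋) * m ≤ 1 := by nlinarith
  have : 0 ≤ (b - a - ⌊b - a⌋) * m := mul_nonneg (by linarith) hm0
  constructor <;> linarith

/-! ### Equidistribution of the phase on shrinking windows -/

lemma tendsto_sqrt_right : Tendsto (fun δ : ℝ => √δ) (𝓝[>] 0) (𝓝 0) := by
  have : Tendsto (fun δ : ℝ => √δ) (𝓝 0) (𝓝 (√0)) := Real.continuous_sqrt.tendsto 0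
  rw [Real.sqrt_zero] at this
  exact this.mono_left nhdsWithin_le_nhds

lemma eventually_deriv_close {u : ℝ → ℝ} (hu : ContDiff ℝ 1 u) (x : ℝ) {e : ℝ} (he : 0 < e) :
    ∀ᶠ δ : ℝ in 𝓝[>] 0, ∀ s ∈ Icc (0:ℝ) 1, |deriv u (x + √δ * s) - deriv u x| ≤ e := by
  have hc : Continuous (deriv u) := hu.continuous_deriv le_rfl
  obtain ⟨r, hr, H⟩ := Metric.continuousAt_iff.1 (hc.continuousAt (x := x)) e he
  filter_upwards [tendsto_sqrt_right.eventually (gt_mem_nhds hr)] with δ hδ s hs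
  have := H (x := x + √δ * s) (by
    rw [Real.dist_eq, add_sub_cancel_left, abs_mul, abs_of_nonneg (Real.sqrt_nonneg δ),
      abs_of_nonneg hs.1]
    nlinarith [Real.sqrt_nonneg δ, hs.2])
  rw [Real.dist_eq] at this
  exact this.le

/-- The rescaled increment converges to `h u'(x)` uniformly over base points in `[x, x + √δ]`. Strict
differentiability is needed because the base point moves with `δ`. -/
lemma eventually_increment_close {u : ℝ → ℝ} (hu : ContDiff ℝ 1 u) (x h : ℝ) {e : ℝ}
    (he : 0 < e) : ∀ᶠ δ : ℝ in 𝓝[>] 0, ∀ s ∈ Icc (0:ℝ) 1,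
      |u (x + √δ * s + δ * h) / δ - (u (x + √δ * s) / δ + h * deriv u x)| ≤ e := by
  have hd : HasStrictDerivAt u (deriv u x) x := hu.contDiffAt.hasStrictDerivAt one_ne_zero
  have hc : 0 < e / (|h| + 1) := by positivity
  have ho := hd.hasStrictFDerivAt.isLittleO.def hc
  obtain ⟨r, hr, H⟩ := Metric.eventually_nhds_iff.1 ho
  have h1 : Tendsto (fun δ : ℝ => √δ + δ * |h|) (𝓝[>] 0) (𝓝 0) := by
    have h2 : Tendsto (fun δ : ℝ => δ * |h|) (𝓝[>] 0) (𝓝 0) := by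
      have : Tendsto (fun δ : ℝ => δ * |h|) (𝓝 0) (𝓝 (0 * |h|)) := by
        exact (continuous_id.mul continuous_const).tendsto 0
      rw [zero_mul] at this
      exact this.mono_left nhdsWithin_le_nhds
    simpa using tendsto_sqrt_right.add h2
  filter_upwards [h1.eventually (gt_mem_nhds hr), self_mem_nhdsWithin] with δ hδ hpos s hs
  have hpos : 0 < δ := hpos
  have hsq := Real.sqrt_nonneg δ
  have a1 : |√δ * s| ≤ √δ := by
    rw [abs_mul, abs_of_nonneg hsq, abs_of_nonneg hs.1]; nlinarith [hs.2]
  have a2 : |δ * h| = δ * |h| := by rw [abs_mul, abs_of_pos hpos]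
  have a3 : 0 ≤ δ * |h| := by positivity
  have := H (y := (x + √δ * s + δ * h, x + √δ * s)) (by
    rw [Prod.dist_eq, max_lt_iff, Real.dist_eq, Real.dist_eq]
    constructor
    · rw [show x + √δ * s + δ * h - x = √δ * s + δ * h by ring]
      have := abs_add_le (√δ * s) (δ * h)
      linarith
    · rw [show x + √δ * s - x = √δ * s by ring]
      linarith)
  simp only [ContinuousLinearMap.toSpanSingleton_apply, add_sub_cancel_left, smul_eq_mul,
    Real.norm_eq_abs] at this
  rw [show u (x + √δ * s + δ * h) / δ - (u (x + √δ * s) / δ + h * deriv u x)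
    = (u (x + √δ * s + δ * h) - u (x + √δ * s) - δ * h * deriv u x) / δ by field_simp; ring,
    abs_div, abs_of_pos hpos, div_le_iff₀ hpos]
  refine this.trans ?_
  rw [a2]
  have : |h| / (|h| + 1) ≤ 1 := by rw [div_le_one (by positivity)]; linarith
  calc e / (|h| + 1) * (δ * |h|) = (|h| / (|h| + 1)) * (e * δ) := by ring
    _ ≤ 1 * (e * δ) := by gcongr
    _ = e * δ := one_mul _

/-- Quantitative equidistribution: if `u'` varies by at most `e < |u'(x)|` on `[x, x + √δ]`, the mean
of `g (u / δ)` over this window is close to the mean of `g` over a period. -/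
lemma integral_periodic_bound {u : ℝ → ℝ} (hu : ContDiff ℝ 1 u) (x : ℝ) {g : ℝ → ℝ}
    (hg : Measurable g) (h0 : ∀ x, 0 ≤ g x) (h1 : ∀ x, g x ≤ 1) (hp : Function.Periodic g 1)
    {e δ : ℝ} (he : e < |deriv u x|) (hδ : 0 < δ)
    (H : ∀ s ∈ Icc (0:ℝ) 1, |deriv u (x + √δ * s) - deriv u x| ≤ e) :
    |(∫ s in (0:ℝ)..1, g (u (x + √δ * s) / δ)) - ∫ w in (0:ℝ)..1, g w|
      ≤ 2 * (e + √δ) / |deriv u x| := by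
  have hsq : 0 < √δ := Real.sqrt_pos.2 hδ
  have he0 : 0 ≤ e := (abs_nonneg _).trans (H 0 (by simp))
  set a := deriv u x with ha
  set v : ℝ → ℝ := fun s => u (x + √δ * s) / δ with hv
  set v' : ℝ → ℝ := fun s => deriv u (x + √δ * s) / √δ with hv'
  have hcd : Continuous (deriv u) := hu.continuous_deriv le_rfl
  have hvd : ∀ s, HasDerivAt v (v' s) s := fun s => by
    have h1 : HasDerivAt u (deriv u (x + √δ * s)) (x + √δ * s) :=
      (hu.differentiable one_ne_zero _).hasDerivAt
    have h2 : HasDerivAt (fun s => x + √δ * s) (√δ) s := by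
      simpa using ((hasDerivAt_id s).const_mul (√δ)).const_add x
    have h3 := (h1.comp s h2).div_const δ
    convert! h3 using 1
    simp only [hv']
    rw [div_eq_div_iff hsq.ne' hδ.ne', mul_assoc, Real.mul_self_sqrt hδ.le]
  have hvc : Continuous v := continuous_iff_continuousAt.2 fun s => (hvd s).continuousAt
  have hv'c : Continuous v' := by fun_prop
  have hgv : Measurable (fun s => g (v s)) := hg.comp hvc.measurable
  -- Since `e < |u'(x)|`, the derivative `v'` has constant sign, so that no continuity of `g` is needed
  -- for the change of variables.
  have hcv : ∫ s in (0:ℝ)..1, g (v s) * v' s = ∫ w in v 0..v 1, g w := by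
    rcases le_total 0 a with hs | hs
    · rw [abs_of_nonneg hs] at he
      refine intervalIntegral.integral_comp_mul_deriv_of_deriv_nonneg (g := g) (f := v)
        hvc.continuousOn (fun s _ => hvd s) fun s hs' => ?_
      simp only [zero_le_one, inf_of_le_left, sup_of_le_right] at hs'
      have := (abs_le.1 (H s ⟨hs'.1.le, hs'.2.le⟩)).1
      exact div_nonneg (by linarith) hsq.le
    · rw [abs_of_nonpos hs] at he
      refine intervalIntegral.integral_comp_mul_deriv_of_deriv_nonpos (g := g) (f := v)
        hvc.continuousOn (fun s _ => hvd s) fun s hs' => ?_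
      simp only [zero_le_one, inf_of_le_left, sup_of_le_right] at hs'
      have := (abs_le.1 (H s ⟨hs'.1.le, hs'.2.le⟩)).2
      exact div_nonpos_of_nonpos_of_nonneg (by linarith) hsq.le
  have hgi : IntervalIntegrable (fun s => g (v s)) volume 0 1 :=
    intervalIntegrable_of_bdd hgv (C := 1) (fun s => by rw [abs_of_nonneg (h0 _)]; exact h1 _) _ _
  have hgvi : IntervalIntegrable (fun s => g (v s) * v' s) volume 0 1 :=
    hgi.mul_continuousOn hv'c.continuousOn
  have hclose : ∀ s ∈ Icc (0:ℝ) 1, |v' s - a / √δ| ≤ e / √δ := fun s hs => by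
    simp only [hv']
    rw [← sub_div, abs_div, abs_of_pos hsq]
    gcongr
    exact H s hs
  -- `v'` is within `e / √δ` of the constant `u'(x) / √δ`, both under the integral of `g ∘ v` and for
  -- the number of periods `v 1 - v 0`.
  have E1 : |(∫ w in v 0..v 1, g w) - (a / √δ) * ∫ s in (0:ℝ)..1, g (v s)| ≤ e / √δ := by
    rw [← hcv, ← intervalIntegral.integral_const_mul,
      ← intervalIntegral.integral_sub hgvi (hgi.const_mul _)]
    have := intervalIntegral.norm_integral_le_of_norm_le_const (a := 0) (b := 1)
      (f := fun s => g (v s) * v' s - a / √δ * g (v s)) (C := e / √δ) (fun s hs => by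
        rw [uIoc_of_le zero_le_one] at hs
        rw [show g (v s) * v' s - a / √δ * g (v s) = g (v s) * (v' s - a / √δ) by ring,
          Real.norm_eq_abs, abs_mul, abs_of_nonneg (h0 _)]
        have := hclose s ⟨hs.1.le, hs.2⟩
        calc g (v s) * |v' s - a / √δ| ≤ 1 * |v' s - a / √δ| := by gcongr; exact h1 _
          _ ≤ e / √δ := by rw [one_mul]; exact this)
    simpa using this
  have E2 : |(v 1 - v 0) - a / √δ| ≤ e / √δ := by
    have hi : ∫ s in (0:ℝ)..1, v' s = v 1 - v 0 :=
      intervalIntegral.integral_eq_sub_of_hasDerivAt (fun s _ => hvd s)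
        (hv'c.intervalIntegrable _ _)
    have : ∫ s in (0:ℝ)..1, (v' s - a / √δ) = (v 1 - v 0) - a / √δ := by
      rw [intervalIntegral.integral_sub (hv'c.intervalIntegrable _ _) intervalIntegrable_const, hi]
      simp
    rw [← this]
    have := intervalIntegral.norm_integral_le_of_norm_le_const (a := 0) (b := 1)
      (f := fun s => v' s - a / √δ) (C := e / √δ) (fun s hs => by
        rw [uIoc_of_le zero_le_one] at hs
        exact hclose s ⟨hs.1.le, hs.2⟩)
    simpa using this
  have E3 := periodic_bound hg h0 h1 hp (v 0) (v 1)
  set m := ∫ w in (0:ℝ)..1, g w with hm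
  set N := ∫ s in (0:ℝ)..1, g (v s) with hN
  set P := ∫ w in v 0..v 1, g w with hP
  have hm0 : 0 ≤ m := intervalIntegral.integral_nonneg zero_le_one fun x _ => h0 x
  have hm1 : m ≤ 1 := by
    have := intervalIntegral.integral_mono_on (μ := volume) (a := 0) (b := 1) (f := g)
      (g := fun _ => (1:ℝ)) zero_le_one
      (intervalIntegrable_of_bdd hg (C := 1) (fun x => by rw [abs_of_nonneg (h0 x)]; exact h1 x) _ _)
      intervalIntegrable_const (fun x _ => h1 x)
    simpa using this
  have E4 : |((v 1 - v 0) - a / √δ) * m| ≤ e / √δ := by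
    rw [abs_mul, abs_of_nonneg hm0]
    calc _ ≤ e / √δ * 1 := by gcongr
      _ = _ := mul_one _
  have E5 : |a / √δ * (N - m)| ≤ 2 * (e / √δ) + 2 := by
    rw [abs_le] at E1 E3 E4 ⊢
    constructor <;> linarith
  have hapos : 0 < |a| := he0.trans_lt he
  rw [abs_mul, abs_div, abs_of_pos hsq] at E5
  rw [le_div_iff₀ hapos]
  have E6 := mul_le_mul_of_nonneg_right E5 hsq.le
  have r1 : |a| / √δ * |N - m| * √δ = |N - m| * |a| := by field_simp
  have r2 : (2 * (e / √δ) + 2) * √δ = 2 * (e + √δ) := by field_simp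
  rw [r1, r2] at E6
  exact E6

/-- Over the window `[x, x + √δ]`, the phase `u / δ mod 1` is asymptotically equidistributed as soon as
`u'(x) ≠ 0`. -/
lemma tendsto_integral_periodic {u : ℝ → ℝ} (hu : ContDiff ℝ 1 u) (x : ℝ) (hx : deriv u x ≠ 0)
    {g : ℝ → ℝ} (hg : Measurable g) (h0 : ∀ x, 0 ≤ g x) (h1 : ∀ x, g x ≤ 1)
    (hp : Function.Periodic g 1) :
    Tendsto (fun δ : ℝ => ∫ s in (0:ℝ)..1, g (u (x + √δ * s) / δ)) (𝓝[>] 0)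
      (𝓝 (∫ w in (0:ℝ)..1, g w)) := by
  have ha : 0 < |deriv u x| := abs_pos.2 hx
  rw [Metric.tendsto_nhds]
  intro η hη
  set e := min (η / 6 * |deriv u x|) (|deriv u x| / 2) with he
  have he0 : 0 < e := by positivity
  have he1 : e ≤ η / 6 * |deriv u x| := min_le_left _ _
  have he2 : e < |deriv u x| := (min_le_right _ _).trans_lt (by linarith)
  filter_upwards [eventually_deriv_close hu x he0, self_mem_nhdsWithin,
    tendsto_sqrt_right.eventually (gt_mem_nhds he0)] with δ H hδ hs
  rw [Real.dist_eq]
  refine (integral_periodic_bound hu x hg h0 h1 hp he2 hδ H).trans_lt ?_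
  rw [div_lt_iff₀ ha]
  nlinarith

/-- The window averages of the jump indicator converge to the average over a uniform phase. When
`u'(x) = 0` both sides vanish, since the increments eventually stay below `1`. -/
lemma tendsto_average {u : ℝ → ℝ} (hu : ContDiff ℝ 1 u) (x h : ℝ) :
    Tendsto (fun δ : ℝ => ∫ s in (0:ℝ)..1, jmp (u (x + √δ * s) / δ) (u (x + √δ * s + δ * h) / δ))
      (𝓝[>] 0) (𝓝 (∫ w in (0:ℝ)..1, jmp w (w + h * deriv u x))) := by
  have huc : Continuous u := hu.continuous
  have hum : Measurable u := huc.measurable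
  by_cases hx : deriv u x = 0
  · have : ∫ w in (0:ℝ)..1, jmp w (w + h * deriv u x) = 0 := by
      rw [hx]
      simp [jmp]
    rw [this]
    refine tendsto_const_nhds.congr' ?_
    filter_upwards [eventually_increment_close hu x h one_pos] with δ H
    symm
    rw [intervalIntegral.integral_congr (g := fun _ => (0:ℝ)), intervalIntegral.integral_zero]
    intro s hs
    rw [uIcc_of_le zero_le_one] at hs
    refine jmp_eq_zero ?_
    have := H s hs
    simpa [hx] using this
  · set t := h * deriv u x with ht
    have per : ∀ w, jmp (w + 1) (w + 1 + t) = jmp w (w + t) := fun w => by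
      rw [show w + 1 + t = w + t + 1 by ring, jmp_add_one]
    have T1 := tendsto_integral_periodic hu x hx (g := fun w => jmp w (w + t)) (by fun_prop)
      (fun _ => jmp_nonneg _ _)
      (fun _ => jmp_le_one _ _) per
    rw [Metric.tendsto_nhds] at T1 ⊢
    intro η hη
    set ε := min (η / 8) (1 / 4) with hε
    have hε0 : 0 < ε := by positivity
    have hε1 : ε ≤ η / 8 := min_le_left _ _
    have hε2 : ε < 1 / 2 := (min_le_right _ _).trans_lt (by norm_num)
    have T2 := tendsto_integral_periodic hu x hx (g := fun w => nearInt ε (w + t)) (by fun_prop)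
      (fun _ => nearInt_nonneg hε0 _) (fun _ => nearInt_le_one hε2 _)
      (fun w => by
        show nearInt ε (w + 1 + t) = _
        rw [show w + 1 + t = w + t + 1 by ring, nearInt_periodic])
    have hD : ∫ w in (0:ℝ)..1, nearInt ε (w + t) = 2 * ε := by
      rw [intervalIntegral.integral_comp_add_right (fun w => nearInt ε w) t,
        ← integral_nearInt (ε := ε)]
      have := (nearInt_periodic ε).intervalIntegral_add_eq t 0
      rw [zero_add] at this ⊢
      rw [add_comm 1 t, this]
    rw [hD] at T2
    filter_upwards [T1 (η / 4) (by positivity), T2.eventually (gt_mem_nhds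
      (show 2 * ε < η / 2 by linarith)), eventually_increment_close hu x h hε0] with δ B1 B2 H
    rw [Real.dist_eq] at B1 ⊢
    have bj : ∀ a b, |jmp a b| ≤ 1 := fun a b => by
      rw [abs_of_nonneg (jmp_nonneg _ _)]; exact jmp_le_one _ _
    have i1 : IntervalIntegrable
        (fun s => jmp (u (x + √δ * s) / δ) (u (x + √δ * s + δ * h) / δ)) volume 0 1 :=
      intervalIntegrable_of_bdd (by fun_prop) (fun _ => bj _ _) _ _
    have i2 : IntervalIntegrable
        (fun s => jmp (u (x + √δ * s) / δ) (u (x + √δ * s) / δ + t)) volume 0 1 :=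
      intervalIntegrable_of_bdd (by fun_prop) (fun _ => bj _ _) _ _
    have i3 : IntervalIntegrable (fun s => nearInt ε (u (x + √δ * s) / δ + t)) volume 0 1 :=
      intervalIntegrable_of_bdd (C := 1) (by fun_prop) (fun _ => by
        rw [abs_of_nonneg (nearInt_nonneg hε0 _)]; exact nearInt_le_one hε2 _) _ _
    -- Replacing the increment by its limit `t` costs at most the frequency of phases near a critical
    -- value.
    have key : |(∫ s in (0:ℝ)..1, jmp (u (x + √δ * s) / δ) (u (x + √δ * s + δ * h) / δ))
        - ∫ s in (0:ℝ)..1, jmp (u (x + √δ * s) / δ) (u (x + √δ * s) / δ + t)|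
        ≤ ∫ s in (0:ℝ)..1, nearInt ε (u (x + √δ * s) / δ + t) := by
      rw [← intervalIntegral.integral_sub i1 i2]
      refine (intervalIntegral.abs_integral_le_integral_abs zero_le_one).trans ?_
      refine intervalIntegral.integral_mono_on zero_le_one (i1.sub i2).abs i3 fun s hs => ?_
      exact jmp_sub_le hε0 (H s hs)
    rw [abs_lt] at B1 ⊢
    rw [abs_le] at key
    constructor <;> linarith

/-! ### Rescaling the functional and passing to the limit -/

/-- The kernel `|h|^(-1-p)`; its value at `h = 0` is `0`, because of division by zero. -/
noncomputable def singKer (p h : ℝ) : ℝ≥0∞ := ENNReal.ofReal (1 / |h| ^ (1 + p))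

@[fun_prop]
lemma measurable_singKer (p : ℝ) : Measurable (singKer p) := by unfold singKer; fun_prop

/-- The measure of the set of `x` for which the floors of `u x / δ` and `u (x + δ h) / δ` are at
least two apart. -/
noncomputable def jumpVol (u : ℝ → ℝ) (δ h : ℝ) : ℝ≥0∞ :=
  ∫⁻ x, ENNReal.ofReal (jmp (u x / δ) (u (x + δ * h) / δ))

/-- The probability, for a uniform phase `θ ∈ (0, 1]`, that the floors of `θ` and `θ + t` are at
least two apart. -/
noncomputable def phaseAvg (t : ℝ) : ℝ≥0∞ :=
  ∫⁻ θ in Ioc (0:ℝ) 1, ENNReal.ofReal (jmp θ (θ + t))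

lemma measurable_jumpVol {u : ℝ → ℝ} (hu : Measurable u) (δ : ℝ) : Measurable (jumpVol u δ) := by
  unfold jumpVol
  exact Measurable.lintegral_prod_right'
    (f := fun z : ℝ × ℝ => ENNReal.ofReal (jmp (u z.2 / δ) (u (z.2 + δ * z.1) / δ))) (by fun_prop)

@[fun_prop]
lemma measurable_phaseAvg : Measurable phaseAvg := by
  unfold phaseAvg
  exact Measurable.lintegral_prod_right'
    (f := fun z : ℝ × ℝ => ENNReal.ofReal (jmp z.2 (z.2 + z.1))) (by fun_prop)

/-- Substituting `y = x + δ h` cancels every power of `δ`. -/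
lemma Lambda_eq {u : ℝ → ℝ} (hu : Measurable u) {p δ : ℝ} (hδ : 0 < δ) :
    Lambda1 (phik 1) p δ (fun x => δ * (⌊u x / δ⌋ : ℝ)) univ
      = ∫⁻ h, singKer p h * jumpVol u δ h := by
  unfold Lambda1 phik jumpVol
  simp only [Measure.restrict_univ]
  simp_rw [phik_eq_jmp hδ]
  have inner : ∀ x, ∫⁻ y, ENNReal.ofReal (jmp (u x / δ) (u y / δ) * δ ^ p / |y - x| ^ (1 + p))
      = ∫⁻ h, singKer p h * ENNReal.ofReal (jmp (u x / δ) (u (x + δ * h) / δ)) := fun x => by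
    rw [← lintegral_add_left_eq_self _ x, lintegral_scale hδ.ne' _ (by fun_prop),
      ← lintegral_const_mul _ (by fun_prop)]
    refine lintegral_congr fun h => ?_
    unfold singKer
    rw [← ENNReal.ofReal_mul (abs_nonneg _), ← ENNReal.ofReal_mul (by positivity)]
    congr 1
    rw [add_sub_cancel_left, abs_mul, abs_of_pos hδ, Real.mul_rpow hδ.le (abs_nonneg h),
      Real.rpow_add hδ, Real.rpow_one]
    have : δ ^ p ≠ 0 := (Real.rpow_pos_of_pos hδ p).ne'
    by_cases H : |h| ^ (1 + p) = 0
    · rw [H]; simp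
    · field_simp
  simp_rw [inner]
  rw [lintegral_lintegral_swap (by unfold Function.uncurry; fun_prop)]
  refine lintegral_congr fun h => ?_
  rw [lintegral_const_mul _ (by fun_prop)]

/-- By translation invariance, averaging the integrand over the window `[x, x + √δ]` does not change
its integral. -/
lemma jumpVol_eq_avg {u : ℝ → ℝ} (hu : Measurable u) (δ h : ℝ) :
    jumpVol u δ h = ∫⁻ x, ∫⁻ s in Ioc (0:ℝ) 1,
      ENNReal.ofReal (jmp (u (x + √δ * s) / δ) (u (x + √δ * s + δ * h) / δ)) := by
  rw [lintegral_lintegral_swap (by unfold Function.uncurry; fun_prop)]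
  have : ∀ s : ℝ, ∫⁻ x, ENNReal.ofReal (jmp (u (x + √δ * s) / δ) (u (x + √δ * s + δ * h) / δ))
      = jumpVol u δ h := fun s =>
    lintegral_add_right_eq_self (fun x => ENNReal.ofReal (jmp (u x / δ) (u (x + δ * h) / δ))) _
  simp_rw [this]
  simp

lemma lintegral_Ioc_eq {f : ℝ → ℝ} (hf : IntervalIntegrable f volume 0 1)
    (h0 : ∀ x ∈ Ioc (0:ℝ) 1, 0 ≤ f x) :
    ∫⁻ s in Ioc (0:ℝ) 1, ENNReal.ofReal (f s) = ENNReal.ofReal (∫ s in (0:ℝ)..1, f s) := by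
  rw [intervalIntegral.integral_of_le zero_le_one, ofReal_integral_eq_lintegral_ofReal]
  · exact (intervalIntegrable_iff_integrableOn_Ioc_of_le zero_le_one).1 hf
  · exact (ae_restrict_iff' measurableSet_Ioc).2 (ae_of_all _ h0)

lemma abs_jmp_le (a b : ℝ) : |jmp a b| ≤ 1 := by
  rw [abs_of_nonneg (jmp_nonneg _ _)]; exact jmp_le_one _ _

lemma tendsto_jumpVol {u : ℝ → ℝ} (hu : ContDiff ℝ 1 u) {ρ : ℝ}
    (hρ : ∀ x, ρ < |x| → u x = 0) (h : ℝ) :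
    Tendsto (fun δ => jumpVol u δ h) (𝓝[>] 0) (𝓝 (∫⁻ x, phaseAvg (h * deriv u x))) := by
  have hum : Measurable u := hu.continuous.measurable
  simp_rw [jumpVol_eq_avg hum]
  -- For `δ < 1`, points of the window and their translates by `δ h` stay within `1 + |h|` of `x`.
  set R := ρ + 1 + |h| with hR
  refine tendsto_lintegral_filter_of_dominated_convergence
    ((Icc (-R) R).indicator fun _ => 1) ?_ ?_ ?_ ?_
  · refine Eventually.of_forall fun δ => ?_
    exact Measurable.lintegral_prod_right'
      (f := fun z : ℝ × ℝ => ENNReal.ofReal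
        (jmp (u (z.1 + √δ * z.2) / δ) (u (z.1 + √δ * z.2 + δ * h) / δ))) (by fun_prop)
  · have h1 : ∀ᶠ δ : ℝ in 𝓝[>] 0, δ < 1 :=
      (gt_mem_nhds one_pos).filter_mono nhdsWithin_le_nhds
    filter_upwards [h1, self_mem_nhdsWithin] with δ hδ1 hδ
    have hδ : 0 < δ := hδ
    refine ae_of_all _ fun x => ?_
    by_cases hx : x ∈ Icc (-R) R
    · rw [indicator_of_mem hx]
      calc _ ≤ ∫⁻ s in Ioc (0:ℝ) 1, (1 : ℝ≥0∞) := lintegral_mono fun s => by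
            rw [ENNReal.ofReal_le_one]; exact jmp_le_one _ _
        _ = 1 := by simp
    · rw [indicator_of_notMem hx, nonpos_iff_eq_zero]
      have hx' : R < |x| := by
        by_contra hc
        exact hx (abs_le.1 (not_lt.1 hc))
      refine setLIntegral_eq_zero measurableSet_Ioc fun s hs => ?_
      have hsq : √δ ≤ 1 := Real.sqrt_le_one.2 hδ1.le
      have hsq0 := Real.sqrt_nonneg δ
      have a1 : |√δ * s| ≤ 1 := by
        rw [abs_mul, abs_of_nonneg hsq0, abs_of_nonneg hs.1.le]; nlinarith [hs.2, hs.1]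
      have a2 : |δ * h| ≤ |h| := by
        rw [abs_mul, abs_of_pos hδ]; nlinarith [abs_nonneg h]
      have a0 := abs_nonneg h
      have b1 : |x| ≤ |x + √δ * s| + |√δ * s| := by
        simpa using abs_sub (x + √δ * s) (√δ * s)
      have b2 : |x + √δ * s| ≤ |x + √δ * s + δ * h| + |δ * h| := by
        simpa using abs_sub (x + √δ * s + δ * h) (δ * h)
      rw [hρ (x + √δ * s) (by linarith), hρ (x + √δ * s + δ * h) (by linarith)]
      simp [jmp]
  · rw [lintegral_indicator measurableSet_Icc]
    simp
  · refine ae_of_all _ fun x => ?_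
    have e1 : phaseAvg (h * deriv u x)
        = ENNReal.ofReal (∫ w in (0:ℝ)..1, jmp w (w + h * deriv u x)) :=
      lintegral_Ioc_eq (intervalIntegrable_of_bdd (by fun_prop) (fun _ => abs_jmp_le _ _) _ _)
        fun _ _ => jmp_nonneg _ _
    rw [e1]
    refine (ENNReal.tendsto_ofReal (tendsto_average hu x h)).congr fun δ => ?_
    exact (lintegral_Ioc_eq (intervalIntegrable_of_bdd (by fun_prop) (fun _ => abs_jmp_le _ _) _ _)
        fun _ _ => jmp_nonneg _ _).symm

/-- A jump requires `u x ≠ 0` or `u (x + δ h) ≠ 0`. -/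
lemma jumpVol_le {u : ℝ → ℝ} {ρ : ℝ} (hρ : ∀ x, ρ < |x| → u x = 0) (δ h : ℝ) :
    jumpVol u δ h ≤ volume (Icc (-ρ) ρ) + volume (Icc (-ρ) ρ) := by
  set f : ℝ → ℝ≥0∞ := (Icc (-ρ) ρ).indicator fun _ => 1 with hf
  have hfm : Measurable f := measurable_const.indicator measurableSet_Icc
  have hfi : ∫⁻ x, f x = volume (Icc (-ρ) ρ) := by
    rw [hf, lintegral_indicator measurableSet_Icc]; simp
  have hfx : ∀ x, x ∉ Icc (-ρ) ρ → u x = 0 := fun x hx => hρ x <| by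
    by_contra hc
    exact hx (abs_le.1 (not_lt.1 hc))
  calc jumpVol u δ h ≤ ∫⁻ x, (f x + f (x + δ * h)) := by
        refine lintegral_mono fun x => ?_
        have h1 : ENNReal.ofReal (jmp (u x / δ) (u (x + δ * h) / δ)) ≤ 1 := by
          rw [ENNReal.ofReal_le_one]; exact jmp_le_one _ _
        by_cases c1 : x ∈ Icc (-ρ) ρ
        · refine h1.trans (le_trans ?_ le_self_add)
          rw [hf, indicator_of_mem c1]
        · by_cases c2 : x + δ * h ∈ Icc (-ρ) ρ
          · refine h1.trans (le_trans ?_ le_add_self)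
            rw [hf, indicator_of_mem c2]
          · rw [hfx _ c1, hfx _ c2]
            simp [jmp]
    _ = _ := by
        rw [lintegral_add_left hfm, lintegral_add_right_eq_self f, hfi]

lemma tendsto_integral {u : ℝ → ℝ} (hu : ContDiff ℝ 1 u) {ρ : ℝ}
    (hρ : ∀ x, ρ < |x| → u x = 0) {L : ℝ} (hL : 0 < L)
    (hlip : ∀ x y, |u x - u y| ≤ L * |x - y|) {p : ℝ} (hp : 1 < p) :
    Tendsto (fun δ => ∫⁻ h, singKer p h * jumpVol u δ h) (𝓝[>] 0)
      (𝓝 (∫⁻ h, singKer p h * ∫⁻ x, phaseAvg (h * deriv u x))) := by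
  have hum : Measurable u := hu.continuous.measurable
  set C : ℝ := (1 + L) ^ (1 + p) with hC
  set V := volume (Icc (-ρ) ρ) + volume (Icc (-ρ) ρ) with hV
  have hVfin : V ≠ ∞ := by
    rw [hV]; simp [Real.volume_Icc]
  refine tendsto_lintegral_filter_of_dominated_convergence
    (fun h => ENNReal.ofReal (C * (1 + ‖h‖) ^ (-(1 + p))) * V) ?_ ?_ ?_ ?_
  · exact Eventually.of_forall fun δ => (measurable_singKer p).mul (measurable_jumpVol hum δ)
  · filter_upwards [self_mem_nhdsWithin] with δ hδ
    have hδ : 0 < δ := hδ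
    refine ae_of_all _ fun h => ?_
    -- Increments of at most `1` do not jump; otherwise `|h| > 1 / L` and the kernel is comparable to
    -- the integrable function `(1 + |h|)^(-1-p)`.
    by_cases hh : L * |h| ≤ 1
    · have : jumpVol u δ h = 0 := by
        unfold jumpVol
        rw [lintegral_eq_zero_iff (by fun_prop)]
        refine ae_of_all _ fun x => ?_
        show ENNReal.ofReal (jmp (u x / δ) (u (x + δ * h) / δ)) = 0
        rw [jmp_eq_zero]
        · simp
        · rw [← sub_div, abs_div, abs_of_pos hδ, div_le_one hδ]
          refine (hlip _ _).trans ?_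
          rw [add_sub_cancel_left, abs_mul, abs_of_pos hδ]
          nlinarith
      rw [this]; simp
    · rw [not_le] at hh
      have hh0 : 0 < |h| := by
        by_contra hc
        have := abs_nonneg h
        have : |h| = 0 := by linarith
        rw [this] at hh; linarith
      refine mul_le_mul' (ENNReal.ofReal_le_ofReal ?_) (jumpVol_le hρ δ h)
      rw [Real.norm_eq_abs, Real.rpow_neg (by positivity), ← div_eq_mul_inv,
        div_le_div_iff₀ (by positivity) (by positivity), one_mul, hC,
        ← Real.mul_rpow (by positivity) (by positivity)]
      refine Real.rpow_le_rpow (by positivity) ?_ (by linarith)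
      nlinarith
  · rw [lintegral_mul_const _ (by fun_prop)]
    refine ENNReal.mul_ne_top ?_ hVfin
    have : Integrable (fun h : ℝ => C * (1 + ‖h‖) ^ (-(1 + p))) :=
      (integrable_one_add_norm (by simp; linarith)).const_mul C
    rw [← ofReal_integral_eq_lintegral_ofReal this (ae_of_all _ fun h => by positivity)]
    exact ENNReal.ofReal_ne_top
  · refine ae_of_all _ fun h => ?_
    exact ENNReal.Tendsto.const_mul (tendsto_jumpVol hu hρ h) (Or.inr ENNReal.ofReal_ne_top)

/-! ### Evaluation of the limit -/

lemma lintegral_singKer_Ici {p c : ℝ} (hp : 1 < p) (hc : 0 < c) :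
    ∫⁻ s in Ici c, singKer p s = ENNReal.ofReal (c ^ (-p) / p) := by
  rw [setLIntegral_congr Ioi_ae_eq_Ici.symm]
  have e : ∫⁻ s in Ioi c, singKer p s = ∫⁻ s in Ioi c, ENNReal.ofReal (s ^ (-(1 + p))) := by
    refine setLIntegral_congr_fun measurableSet_Ioi fun s hs => ?_
    have hs : 0 < s := hc.trans hs
    simp only [singKer]
    rw [abs_of_pos hs, Real.rpow_neg hs.le, one_div]
  rw [e, ← ofReal_integral_eq_lintegral_ofReal (integrableOn_Ioi_rpow_of_lt (by linarith) hc),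
    integral_Ioi_rpow_of_lt (by linarith) hc]
  · congr 1
    rw [show -(1 + p) + 1 = -p by ring, neg_div_neg_eq]
  · refine (ae_restrict_iff' measurableSet_Ioi).2 (ae_of_all _ fun s hs => ?_)
    exact Real.rpow_nonneg (hc.trans hs).le _

lemma lintegral_singKer_Iio {p c : ℝ} (hp : 1 < p) (hc : 0 < c) :
    ∫⁻ s in Iio (-c), singKer p s = ENNReal.ofReal (c ^ (-p) / p) := by
  rw [← lintegral_singKer_Ici hp hc, setLIntegral_congr Ioi_ae_eq_Ici.symm,
    ← lintegral_indicator measurableSet_Iio, ← lintegral_indicator measurableSet_Ioi,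
    lintegral_scale (a := -1) (by norm_num) _ ((measurable_singKer p).indicator measurableSet_Iio)]
  simp only [abs_neg, abs_one, ENNReal.ofReal_one, one_mul]
  refine lintegral_congr fun s => ?_
  simp only [indicator, mem_Iio, mem_Ioi, singKer]
  simp

/-- For a phase `θ ∈ (0, 1)`, where `⌊θ⌋ = 0`, the increments `s` producing a jump form two half-lines. -/
lemma jmp_phase {θ : ℝ} (h0 : 0 < θ) (h1 : θ < 1) (s : ℝ) :
    jmp θ (θ + s) = (Ici (2 - θ) ∪ Iio (-(1 + θ))).indicator (fun _ => 1) s := by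
  have hf : ⌊θ⌋ = 0 := Int.floor_eq_zero_iff.2 ⟨h0.le, h1⟩
  unfold jmp
  rw [hf, sub_zero]
  have hiff : (2 ≤ |⌊θ + s⌋|) ↔ s ∈ Ici (2 - θ) ∪ Iio (-(1 + θ)) := by
    rw [le_abs, mem_union, mem_Ici, mem_Iio]
    refine or_congr ?_ ?_
    · rw [Int.le_floor]; push_cast
      constructor <;> intro <;> linarith
    · rw [show (2 ≤ -⌊θ + s⌋) ↔ ⌊θ + s⌋ < -1 by omega, Int.floor_lt]; push_cast
      constructor <;> intro <;> linarith
  simp only [hiff, indicator]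

/-- Both summands integrate to `∫_1^2 s^(-p) ds / p`. -/
lemma shape_integral {p : ℝ} (hp : 1 < p) :
    ∫ θ in (0:ℝ)..1, ((2 - θ) ^ (-p) / p + (1 + θ) ^ (-p) / p)
      = (2 / p) * ((1 - (2 : ℝ) ^ (1 - p)) / (p - 1)) := by
  have hb : ∫ s in (1:ℝ)..2, s ^ (-p) = (1 - (2 : ℝ) ^ (1 - p)) / (p - 1) := by
    rw [integral_rpow (Or.inr ⟨by linarith, by
      rw [uIcc_of_le (by norm_num)]; rintro ⟨h, -⟩; linarith⟩)]
    rw [show -p + 1 = 1 - p by ring, Real.one_rpow, ← neg_div_neg_eq]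
    congr 1 <;> ring
  have c1 : ContinuousOn (fun θ : ℝ => (2 - θ) ^ (-p) / p) (uIcc 0 1) := by
    rw [uIcc_of_le zero_le_one]
    refine ContinuousOn.div_const (ContinuousOn.rpow_const (by fun_prop) fun x hx => ?_) _
    left; have := hx.2; intro h; linarith
  have c2 : ContinuousOn (fun θ : ℝ => (1 + θ) ^ (-p) / p) (uIcc 0 1) := by
    rw [uIcc_of_le zero_le_one]
    refine ContinuousOn.div_const (ContinuousOn.rpow_const (by fun_prop) fun x hx => ?_) _
    left; have := hx.1; intro h; linarith
  rw [intervalIntegral.integral_add c1.intervalIntegrable c2.intervalIntegrable,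
    intervalIntegral.integral_div, intervalIntegral.integral_div,
    intervalIntegral.integral_comp_sub_left (fun s : ℝ => s ^ (-p)) 2,
    intervalIntegral.integral_comp_add_left (fun s : ℝ => s ^ (-p)) 1]
  norm_num only
  rw [hb]; ring

lemma lintegral_singKer_phaseAvg {p : ℝ} (hp : 1 < p) :
    ∫⁻ s, singKer p s * phaseAvg s
      = ENNReal.ofReal ((2 / p) * ((1 - (2 : ℝ) ^ (1 - p)) / (p - 1))) := by
  have e1 : ∀ s, singKer p s * phaseAvg s
      = ∫⁻ θ in Ioc (0:ℝ) 1, singKer p s * ENNReal.ofReal (jmp θ (θ + s)) := fun s => by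
    unfold phaseAvg
    rw [lintegral_const_mul _ (by fun_prop)]
  simp_rw [e1]
  rw [lintegral_lintegral_swap (by unfold Function.uncurry; fun_prop)]
  have e2 : ∀ θ ∈ Ioo (0:ℝ) 1, ∫⁻ s, singKer p s * ENNReal.ofReal (jmp θ (θ + s))
      = ENNReal.ofReal ((2 - θ) ^ (-p) / p + (1 + θ) ^ (-p) / p) := fun θ hθ => by
    have hd : Disjoint (Ici (2 - θ)) (Iio (-(1 + θ))) := by
      rw [Set.disjoint_left]
      intro s h1 h2
      rw [mem_Ici] at h1; rw [mem_Iio] at h2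
      linarith [hθ.1, hθ.2]
    have hm : MeasurableSet (Ici (2 - θ) ∪ Iio (-(1 + θ))) :=
      measurableSet_Ici.union measurableSet_Iio
    have : ∀ s, singKer p s * ENNReal.ofReal (jmp θ (θ + s))
        = (Ici (2 - θ) ∪ Iio (-(1 + θ))).indicator (singKer p) s := fun s => by
      rw [jmp_phase hθ.1 hθ.2]
      simp only [indicator]
      split_ifs <;> simp
    simp_rw [this]
    have p1 : 0 < 2 - θ := by linarith [hθ.2]
    have p2 : 0 < 1 + θ := by linarith [hθ.1]
    rw [lintegral_indicator hm, lintegral_union measurableSet_Iio hd,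
      lintegral_singKer_Ici hp p1, lintegral_singKer_Iio hp p2,
      ENNReal.ofReal_add (by positivity) (by positivity)]
  -- The endpoint `θ = 1`, where `⌊θ⌋ = 1`, is negligible.
  rw [setLIntegral_congr Ioo_ae_eq_Ioc.symm, setLIntegral_congr_fun measurableSet_Ioo e2,
    setLIntegral_congr Ioo_ae_eq_Ioc, lintegral_Ioc_eq, shape_integral hp]
  · refine ContinuousOn.intervalIntegrable ?_
    rw [uIcc_of_le zero_le_one]
    refine ContinuousOn.add
      (ContinuousOn.div_const (ContinuousOn.rpow_const (by fun_prop) fun x hx => ?_) _)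
      (ContinuousOn.div_const (ContinuousOn.rpow_const (by fun_prop) fun x hx => ?_) _)
    · left; have := hx.2; intro h; linarith
    · left; have := hx.1; intro h; linarith
  · intro x hx
    have p1 : 0 ≤ 2 - x := by linarith [hx.2]
    have p2 : 0 ≤ 1 + x := by linarith [hx.1]
    have := Real.rpow_nonneg p1 (-p)
    have := Real.rpow_nonneg p2 (-p)
    positivity

/-- The substitution `s = h a` extracts the factor `|a|^p`. -/
lemma lintegral_singKer_scaled {p : ℝ} (hp : 1 < p) (a : ℝ) :
    ∫⁻ h, singKer p h * phaseAvg (h * a)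
      = ENNReal.ofReal (|a| ^ p) * ∫⁻ s, singKer p s * phaseAvg s := by
  by_cases ha : a = 0
  · have : phaseAvg 0 = 0 := by simp [phaseAvg, jmp]
    simp [ha, this, Real.zero_rpow (by linarith : p ≠ 0)]
  · have ha' : 0 < |a| := abs_pos.2 ha
    rw [lintegral_scale ha (fun s => singKer p s * phaseAvg s) (by fun_prop), ← mul_assoc,
      ← ENNReal.ofReal_mul (by positivity),
      ← lintegral_const_mul _ (by fun_prop)]
    refine lintegral_congr fun h => ?_
    rw [← mul_assoc, mul_comm h a]
    congr 1
    unfold singKer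
    rw [← ENNReal.ofReal_mul (by positivity), abs_mul, Real.mul_rpow ha'.le (abs_nonneg h),
      Real.rpow_add ha', Real.rpow_one]
    congr 1
    have : |a| ^ p ≠ 0 := (Real.rpow_pos_of_pos ha' p).ne'
    rw [mul_comm (|a| ^ p) |a|, mul_one_div, ← div_div, div_self (by positivity)]

lemma limit_eq {u : ℝ → ℝ} (hu : ContDiff ℝ 1 u) (hsupp : HasCompactSupport u) {p : ℝ}
    (hp : 1 < p) : ∫⁻ h, singKer p h * ∫⁻ x, phaseAvg (h * deriv u x)
      = ENNReal.ofReal ((2 / p) * ((1 - (2 : ℝ) ^ (1 - p)) / (p - 1)) *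
        ∫ x : ℝ, |deriv u x| ^ p) := by
  have hcd : Continuous (deriv u) := hu.continuous_deriv le_rfl
  have hm : Measurable (deriv u) := hcd.measurable
  have e1 : ∀ h, singKer p h * ∫⁻ x, phaseAvg (h * deriv u x)
      = ∫⁻ x, singKer p h * phaseAvg (h * deriv u x) := fun h =>
    (lintegral_const_mul _ (by fun_prop)).symm
  simp_rw [e1]
  rw [lintegral_lintegral_swap (by unfold Function.uncurry; fun_prop)]
  simp_rw [lintegral_singKer_scaled hp, lintegral_singKer_phaseAvg hp]
  have hcont : Continuous fun x => |deriv u x| ^ p :=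
    hcd.abs.rpow_const fun _ => Or.inr (by linarith)
  have hcs : HasCompactSupport fun x => |deriv u x| ^ p :=
    hsupp.deriv.comp_left (g := fun t : ℝ => |t| ^ p) (by
      simp [Real.zero_rpow (by linarith : p ≠ 0)])
  rw [lintegral_mul_const _ (by fun_prop),
    ← ofReal_integral_eq_lintegral_ofReal (hcont.integrable_of_hasCompactSupport hcs)
      (ae_of_all _ fun x => by positivity), mul_comm, ← ENNReal.ofReal_mul']
  exact integral_nonneg fun x => by positivity

/-! ### Convergence of the segmentations and conclusion -/

lemma tendsto_eLpNorm_segmentation {u : ℝ → ℝ} {ρ : ℝ} (hρ : ∀ x, ρ < |x| → u x = 0)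
    (q : ℝ≥0∞) :
    Tendsto (fun δ : ℝ => eLpNorm (fun x => δ * (⌊u x / δ⌋ : ℝ) - u x) q volume)
      (𝓝[>] 0) (𝓝 0) := by
  set K := Icc (-ρ) ρ with hK
  set c : ℝ≥0∞ := volume K ^ (1 / q.toReal) with hc
  have hcfin : c ≠ ∞ := ENNReal.rpow_ne_top_of_nonneg (by positivity) (by simp [hK])
  have hlim : Tendsto (fun δ : ℝ => ENNReal.ofReal δ * c) (𝓝[>] 0) (𝓝 0) := by
    have : Tendsto (fun δ : ℝ => ENNReal.ofReal δ) (𝓝[>] 0) (𝓝 (ENNReal.ofReal 0)) :=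
      ENNReal.tendsto_ofReal nhdsWithin_le_nhds
    rw [ENNReal.ofReal_zero] at this
    simpa using ENNReal.Tendsto.mul_const this (Or.inr hcfin)
  refine tendsto_of_tendsto_of_tendsto_of_le_of_le' tendsto_const_nhds hlim
    (Eventually.of_forall fun _ => bot_le) ?_
  filter_upwards [self_mem_nhdsWithin] with δ hδ
  have hδ : 0 < δ := hδ
  calc eLpNorm (fun x => δ * (⌊u x / δ⌋ : ℝ) - u x) q volume
      ≤ eLpNorm (K.indicator fun _ => δ) q volume := by
        refine eLpNorm_mono fun x => ?_
        by_cases hx : x ∈ K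
        · rw [indicator_of_mem hx, Real.norm_eq_abs, Real.norm_eq_abs, abs_of_pos hδ]
          have f1 := Int.floor_le (u x / δ)
          have f2 := Int.lt_floor_add_one (u x / δ)
          rw [le_div_iff₀ hδ] at f1
          rw [div_lt_iff₀ hδ] at f2
          rw [abs_le]; constructor <;> linarith
        · have hx' : ρ < |x| := by
            by_contra hc
            exact hx (abs_le.1 (not_lt.1 hc))
          simp [hρ x hx']
    _ ≤ ENNReal.ofReal δ * c := by
        refine (eLpNorm_indicator_const_le δ q).trans_eq ?_
        rw [Real.enorm_of_nonneg hδ.le]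

/-- the vertical `δ`-segmentations `S_δ u(x) = δ⌊u(x)/δ⌋` form a recovery
family for `u ∈ C¹_c(ℝ)` with `φ = φ_1` and `p > 1`. -/
theorem segmentation_recovery_p (u : ℝ → ℝ) (hu : ContDiff ℝ 1 u)
    (hsupp : HasCompactSupport u) (p : ℝ) (hp : 1 < p) :
    Tendsto (fun δ : ℝ => eLpNorm (fun x => δ * (⌊u x / δ⌋ : ℝ) - u x) (ENNReal.ofReal p) volume)
      (𝓝[>] 0) (𝓝 0) ∧
    Tendsto (fun δ : ℝ => Lambda1 (phik 1) p δ (fun x => δ * (⌊u x / δ⌋ : ℝ)) Set.univ)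
      (𝓝[>] 0)
      (𝓝 (ENNReal.ofReal ((2 / p) * ((1 - (2 : ℝ) ^ (1 - p)) / (p - 1)) *
        ∫ x : ℝ, |deriv u x| ^ p))) := by
  obtain ⟨ρ, hρ⟩ : ∃ ρ : ℝ, ∀ x, ρ < |x| → u x = 0 := by
    obtain ⟨ρ, hρ⟩ := hsupp.isCompact.isBounded.subset_closedBall (0 : ℝ)
    refine ⟨ρ, fun x hx => ?_⟩
    by_contra hne
    have := hρ (subset_tsupport u hne)
    rw [mem_closedBall_zero_iff, Real.norm_eq_abs] at this
    linarith
  obtain ⟨L, hL, hlip⟩ : ∃ L : ℝ, 0 < L ∧ ∀ x y, |u x - u y| ≤ L * |x - y| := by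
    obtain ⟨C, hC⟩ := hu.lipschitzWith_of_hasCompactSupport hsupp one_ne_zero
    refine ⟨C + 1, by positivity, fun x y => ?_⟩
    have := hC.dist_le_mul x y
    rw [Real.dist_eq, Real.dist_eq] at this
    linarith [abs_nonneg (x - y)]
  refine ⟨tendsto_eLpNorm_segmentation hρ _, ?_⟩
  rw [← limit_eq hu hsupp hp]
  refine (tendsto_integral hu hρ hL hlip hp).congr' ?_
  filter_upwards [self_mem_nhdsWithin] with δ hδ
  exact (Lambda_eq hu.continuous.measurable hδ).symm
end

section
/- Let u : ℝ → ℝ be integrable, right-continuous, and with TV(u) < ∞. Then there exists a family (u_δ)_{δ>0} with u_δ ∈ C^∞_c(ℝ) for every δ > 0, such that u_δ → u in L¹(ℝ) as δ → 0⁺ and lim_{δ→0⁺} Λ_{δ,1}(φ_1, u_δ, ℝ) = 2 log 2 · TV(u). -/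
/-!
The difficulty is the upper bound: for a fixed smooth `v`, the energies `Λ_{δ,1}(φ_1, v, ℝ)`
converge to `2 ∫ |v'|`, which is larger than `2 log 2 ∫ |v'|`. A smaller energy is reached
by rounding the values of `v` to a grid of mesh `δ` (vertical segmentation): after rounding, two
values differ by more than `δ` only if two grid levels lie between them. If the grid has a
uniformly random phase and `|v y - v x| = δ t`, this happens with probability
`min ((t - 1)₊, 1)`. So the average over the phase of the energies of the segmentations is the
energy of `v` for this trapezoidal law, and some phase does at least as well. For a test function
`v`, the scaling `y = x + δ s` and dominated convergence show that the trapezoidal energies converge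
to `∫ ∫ min ((|v'(x) s| - 1)₊, 1) / s² ds dx = 2 log 2 ∫ |v'|` (`eventually_pairEn_ramp_le`,
`lintegral_ramp_kern_le`).

Rounding is made smooth by replacing the floor function by a smooth staircase whose climbing parts
have relative width `ε`. This costs at most `ε` times a trapezoidal energy of `4 v`
(`volume_stair_le`, `exists_segm_le`), which stays bounded as `δ → 0`. A function `u` of bounded
variation is first mollified and truncated, which hardly changes it in `L¹` and hardly increases the
variation (`exists_smooth_approx`).

No lower bound for the energies is needed. If the energy is too small, it is raised: the functional
is invariant under affine reparametrization, hence a copy of the bump `δ ψ` can be contracted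
until it is negligible in `L¹` while it keeps its energy, which is `δ` times a constant, and placed
so far away that it hardly interacts with the rest. Adding the right number of copies reaches the
target up to `O(δ)` (`exists_add_copy`, `exists_raise`). Finally a nearly optimal candidate is
selected for each `δ` (`exists_diagonal`).
-/

open MeasureTheory Filter Set Topology ENNReal

/-! ### The energy and the trapezoidal law -/

/-- The trapezoidal interaction law `t ↦ max (min (t - 1) 1) 0`. -/
noncomputable def ramp (t : ℝ) : ℝ≥0∞ := ENNReal.ofReal (min (t - 1) 1)

/-- The one-dimensional kernel `1 / s ^ 2`, with the junk value `0` at `s = 0`. -/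
noncomputable def kern (s : ℝ) : ℝ≥0∞ := ENNReal.ofReal (1 / s ^ 2)

/-- The functional `Λ_{δ,1}(F,u,ℝ)` for a law `F` with values in `[0,∞]`. -/
noncomputable def pairEn (F : ℝ → ℝ≥0∞) (δ : ℝ) (u : ℝ → ℝ) : ℝ≥0∞ :=
  ∫⁻ x, ∫⁻ y, F (|u y - u x| / δ) * ENNReal.ofReal (δ / (y - x) ^ 2)

/-- The law `φ_1` with values in `[0,∞]`. -/
noncomputable def jump (t : ℝ) : ℝ≥0∞ := if t ≤ 1 then 0 else 1

lemma Lambda1_eq_pairEn (δ : ℝ) (u : ℝ → ℝ) :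
    Lambda1 (phik 1) 1 δ u Set.univ = pairEn jump δ u := by
  unfold Lambda1 pairEn
  simp only [Measure.restrict_univ]
  refine lintegral_congr fun x => lintegral_congr fun y => ?_
  have h : |y - x| ^ ((1 : ℝ) + 1) = (y - x) ^ 2 := by
    rw [show (1 : ℝ) + 1 = ((2 : ℕ) : ℝ) by norm_num, Real.rpow_natCast, sq_abs]
  rw [h, Real.rpow_one]
  unfold phik jump
  split_ifs <;> simp

lemma lintegral_affine {a : ℝ} (ha : a ≠ 0) (c : ℝ) (f : ℝ → ℝ≥0∞) :
    ∫⁻ y, f y = ENNReal.ofReal |a| * ∫⁻ s, f (c + a * s) := by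
  rw [← lintegral_add_left_eq_self f c]
  conv_lhs => rw [← Real.smul_map_volume_mul_left ha]
  rw [lintegral_smul_measure, smul_eq_mul]
  congr 1
  exact lintegral_map_equiv _ (MeasurableEquiv.mulLeft₀ a ha)

/-- Substituting `y = x + δ s` makes the kernel independent of `δ`. -/
lemma pairEn_eq_scaled (F : ℝ → ℝ≥0∞) {δ : ℝ} (hδ : 0 < δ) (v : ℝ → ℝ) :
    pairEn F δ v = ∫⁻ x, ∫⁻ s, F (|v (x + δ * s) - v x| / δ) * kern s := by
  refine lintegral_congr fun x => ?_
  rw [lintegral_affine hδ.ne' x, ← lintegral_const_mul' _ _ ENNReal.ofReal_ne_top]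
  refine lintegral_congr fun s => ?_
  rw [mul_left_comm, kern, ← ENNReal.ofReal_mul (abs_nonneg _), abs_of_pos hδ]
  congr 2
  -- at `s = 0` both sides are the junk value `0`
  by_cases hs : s = 0
  · simp [hs]
  · field_simp
    ring

/-- In dimension one with `p = 1` the functional is invariant under affine reparametrization. -/
lemma pairEn_comp_affine (F : ℝ → ℝ≥0∞) (δ : ℝ) (v : ℝ → ℝ) {a : ℝ} (ha : 0 < a) (c : ℝ) :
    pairEn F δ (fun x => v (c + a * x)) = pairEn F δ v := by
  unfold pairEn
  rw [lintegral_affine ha.ne' c (fun x => ∫⁻ y, F (|v y - v x| / δ) *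
    ENNReal.ofReal (δ / (y - x) ^ 2)), ← lintegral_const_mul' _ _ ENNReal.ofReal_ne_top]
  refine lintegral_congr fun x => ?_
  rw [lintegral_affine ha.ne' c (fun y => F (|v y - v (c + a * x)| / δ) *
    ENNReal.ofReal (δ / (y - (c + a * x)) ^ 2)), ← mul_assoc,
    ← lintegral_const_mul' _ _ (by finiteness)]
  refine lintegral_congr fun y => ?_
  rw [mul_left_comm, ← ENNReal.ofReal_mul (abs_nonneg _), ← ENNReal.ofReal_mul (by positivity),
    abs_of_pos ha]
  congr 2
  by_cases hs : y - x = 0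
  · have : y = x := by linarith
    simp [this]
  · have : c + a * y - (c + a * x) = a * (y - x) := by ring
    rw [this]
    field_simp

lemma measurable_ramp : Measurable ramp := by unfold ramp; fun_prop

lemma continuous_ramp : Continuous ramp := by
  unfold ramp
  exact ENNReal.continuous_ofReal.comp (by fun_prop)

lemma measurable_kern : Measurable kern := by unfold kern; fun_prop

lemma measurable_jump : Measurable jump :=
  Measurable.ite measurableSet_Iic measurable_const measurable_const

lemma ramp_le_one (t : ℝ) : ramp t ≤ 1 := by
  unfold ramp
  exact ENNReal.ofReal_le_one.2 (min_le_right _ _)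

lemma ramp_eq_zero {t : ℝ} (h : t ≤ 1) : ramp t = 0 := by
  unfold ramp
  exact ENNReal.ofReal_eq_zero.2 ((min_le_left _ _).trans (by linarith))

lemma lintegral_even (f : ℝ → ℝ≥0∞) (hf : ∀ x, f (-x) = f x) :
    ∫⁻ x, f x = 2 * ∫⁻ x in Ioi 0, f x := by
  have h := lintegral_add_compl f (measurableSet_Ioi (a := (0 : ℝ))) (μ := volume)
  have h2 : ∫⁻ x in (Ioi (0 : ℝ))ᶜ, f x = ∫⁻ x in Ioi 0, f x := by
    rw [Set.compl_Ioi, setLIntegral_congr Iio_ae_eq_Iic.symm]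
    have hm : MeasurePreserving (MeasurableEquiv.neg ℝ) volume volume :=
      Measure.measurePreserving_neg volume
    have := hm.setLIntegral_comp_preimage_emb (MeasurableEquiv.neg ℝ).measurableEmbedding f (Iio 0)
    rw [← this]
    have e : (MeasurableEquiv.neg ℝ) ⁻¹' Iio (0 : ℝ) = Ioi 0 := by ext x; simp
    rw [e]
    exact lintegral_congr fun x => hf x
  rw [← h, h2, two_mul]

lemma lintegral_kern_Ioi {a : ℝ} (ha : 0 < a) :
    ∫⁻ s in Ioi a, kern s = ENNReal.ofReal (1 / a) := by
  have hd : ∀ x ∈ Ici a, HasDerivAt (fun x : ℝ => -(1 / x)) (1 / x ^ 2) x := by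
    intro x hx
    have hx0 : x ≠ 0 := (ha.trans_le hx).ne'
    have := (hasDerivAt_inv hx0).fun_neg
    simpa [one_div] using this
  have ht : Tendsto (fun x : ℝ => -(1 / x)) atTop (𝓝 0) := by
    simpa [one_div] using (tendsto_inv_atTop_zero (𝕜 := ℝ)).neg
  have hi := integrableOn_Ioi_deriv_of_nonneg' hd (fun x _ => by positivity) ht
  have he := integral_Ioi_of_hasDerivAt_of_nonneg' hd (fun x _ => by positivity) ht
  unfold kern
  rw [← ofReal_integral_eq_lintegral_ofReal hi (Eventually.of_forall fun x => by positivity), he]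
  simp

/-- The origin of the constant: `2 log 2` is the integral of `min((|s|-1)₊,1) / s²`. Only this
inequality is needed. -/
lemma lintegral_ramp_kern_le :
    ∫⁻ s, ramp |s| * kern s ≤ ENNReal.ofReal (2 * Real.log 2) := by
  rw [lintegral_even _ (fun x => by simp [kern])]
  have hsub : ∫⁻ s in Ioi 0, ramp |s| * kern s ≤
      (∫⁻ s in Ioc 1 2, ramp |s| * kern s) + ∫⁻ s in Ioi 2, kern s := by
    rw [← Ioc_union_Ioi_eq_Ioi (show (0 : ℝ) ≤ 1 by norm_num)]
    refine (lintegral_union_le _ _ _).trans ?_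
    have h0 : ∫⁻ s in Ioc 0 1, ramp |s| * kern s = 0 := by
      rw [setLIntegral_congr_fun (g := fun _ => 0) measurableSet_Ioc]
      · simp
      · intro s hs
        simp only
        rw [ramp_eq_zero (by rw [abs_of_pos hs.1]; exact hs.2), zero_mul]
    rw [h0, zero_add, ← Ioc_union_Ioi_eq_Ioi (show (1 : ℝ) ≤ 2 by norm_num)]
    refine (lintegral_union_le _ _ _).trans ?_
    gcongr
    calc _ ≤ 1 * kern _ := by gcongr; exact ramp_le_one _
      _ = _ := one_mul _
  have h1 : ∫⁻ s in Ioc 1 2, ramp |s| * kern s = ENNReal.ofReal (Real.log 2 - 1 / 2) := by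
    have hc : ContinuousOn (fun s : ℝ => (s - 1) / s ^ 2) (Icc 1 2) := by
      refine ContinuousOn.div (by fun_prop) (by fun_prop) fun s hs => ?_
      have : (0 : ℝ) < s := by linarith [hs.1]
      positivity
    have hi : IntegrableOn (fun s : ℝ => (s - 1) / s ^ 2) (Ioc 1 2) :=
      (hc.integrableOn_Icc).mono_set Ioc_subset_Icc_self
    have hv : ∫ s in (1 : ℝ)..2, (s - 1) / s ^ 2 = Real.log 2 - 1 / 2 := by
      rw [intervalIntegral.integral_eq_sub_of_hasDerivAt (f := fun s => Real.log s + s⁻¹)]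
      · norm_num; ring
      · intro s hs
        rw [uIcc_of_le (by norm_num)] at hs
        have hs0 : s ≠ 0 := by linarith [hs.1]
        convert! (Real.hasDerivAt_log hs0).add (hasDerivAt_inv hs0) using 1
        field_simp
        ring
      · rw [intervalIntegrable_iff_integrableOn_Ioc_of_le (by norm_num)]
        exact hi
    rw [← hv, intervalIntegral.integral_of_le (by norm_num),
      ofReal_integral_eq_lintegral_ofReal hi]
    · refine setLIntegral_congr_fun measurableSet_Ioc fun s hs => ?_
      have hs0 : (0 : ℝ) < s := by linarith [hs.1]
      simp only [ramp, kern]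
      rw [abs_of_pos hs0, min_eq_left (by linarith [hs.2]),
        ← ENNReal.ofReal_mul (by linarith [hs.1])]
      congr 1
      field_simp
    · filter_upwards [ae_restrict_mem measurableSet_Ioc] with s hs
      have : 0 ≤ s - 1 := by linarith [hs.1]
      simp only [Pi.zero_apply]
      positivity
  have hlog : (1 : ℝ) / 2 ≤ Real.log 2 := by linarith [Real.log_two_gt_d9]
  calc _ ≤ 2 * (ENNReal.ofReal (Real.log 2 - 1 / 2) + ENNReal.ofReal (1 / 2)) := by
        gcongr
        refine hsub.trans ?_
        rw [h1, lintegral_kern_Ioi (by norm_num)]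
    _ = _ := by
        rw [← ENNReal.ofReal_add (by linarith) (by norm_num),
          ENNReal.ofReal_mul (by norm_num)]
        congr 2
        · simp
        · ring

/-! ### Test functions: asymptotics of the trapezoidal energy -/

/-- The integrand lives on the supports of `v` and of its translate. -/
lemma lintegral_inner_le {v : ℝ → ℝ} {R : ℝ} (hR : ∀ x, R < |x| → v x = 0)
    (δ s : ℝ) : ∫⁻ x, ramp (|v (x + δ * s) - v x| / δ) ≤ ENNReal.ofReal (4 * R) := by
  calc ∫⁻ x, ramp (|v (x + δ * s) - v x| / δ)
      ≤ ∫⁻ x, ((Icc (-R) R).indicator 1 x + (Icc (-R - δ * s) (R - δ * s)).indicator 1 x) := by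
        refine lintegral_mono fun x => ?_
        by_cases h1 : x ∈ Icc (-R) R
        · rw [indicator_of_mem h1]
          exact (ramp_le_one _).trans le_self_add
        by_cases h2 : x ∈ Icc (-R - δ * s) (R - δ * s)
        · rw [indicator_of_mem h2]
          exact (ramp_le_one _).trans le_add_self
        have e1 : v x = 0 := hR x (by
          by_contra h; exact h1 (abs_le.1 (not_lt.1 h)))
        have e2 : v (x + δ * s) = 0 := hR _ (by
          by_contra h
          have := abs_le.1 (not_lt.1 h)
          exact h2 ⟨by linarith [this.1], by linarith [this.2]⟩)
        rw [e1, e2, ramp_eq_zero (by simp)]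
        exact zero_le
    _ = ENNReal.ofReal (4 * R) := by
        rw [lintegral_add_left (measurable_one.indicator measurableSet_Icc),
          lintegral_indicator_one measurableSet_Icc, lintegral_indicator_one measurableSet_Icc,
          Real.volume_Icc, Real.volume_Icc]
        rcases le_or_gt 0 R with h | h
        · rw [← ENNReal.ofReal_add (by linarith) (by linarith)]
          congr 1
          ring
        · rw [ENNReal.ofReal_of_nonpos (by linarith), ENNReal.ofReal_of_nonpos (by linarith),
            ENNReal.ofReal_of_nonpos (by linarith), zero_add]

/-- An integrable function dominating, uniformly in `δ`, the inner integrals of the rescaled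
energy of an `L`-Lipschitz function supported in `[-R, R]`. -/
noncomputable def domin (R L s : ℝ) : ℝ≥0∞ :=
  ENNReal.ofReal (4 * R) * (Ioi (1 / L)).indicator kern |s|

lemma lintegral_domin_lt_top (R : ℝ) {L : ℝ} (hL : 0 < L) : ∫⁻ s, domin R L s < ⊤ := by
  unfold domin
  rw [lintegral_const_mul' _ _ ENNReal.ofReal_ne_top, lintegral_even _ (fun x => by simp)]
  have : ∫⁻ s in Ioi 0, (Ioi (1 / L)).indicator kern |s| ≤ ENNReal.ofReal (1 / (1 / L)) := by
    rw [← lintegral_kern_Ioi (show 0 < 1 / L by positivity),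
      ← lintegral_indicator (s := Ioi (1 / L)) measurableSet_Ioi kern]
    calc _ = ∫⁻ s in Ioi 0, (Ioi (1 / L)).indicator kern s :=
          setLIntegral_congr_fun measurableSet_Ioi fun s hs => by
            simp only [abs_of_pos (show (0 : ℝ) < s from hs)]
      _ ≤ _ := setLIntegral_le_lintegral _ _
  have h2 : ∫⁻ s in Ioi 0, (Ioi (1 / L)).indicator kern |s| < ⊤ :=
    this.trans_lt ENNReal.ofReal_lt_top
  finiteness

/-- The Lipschitz bound kills the singularity of the kernel: for `|s| ≤ 1 / L` the increments of
`v` do not exceed `δ`. -/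
lemma inner_mul_kern_le {v : ℝ → ℝ} {R : ℝ} (hR : ∀ x, R < |x| → v x = 0) {L : ℝ} (hL : 0 < L)
    (hLip : ∀ x y, |v y - v x| ≤ L * |y - x|) {δ : ℝ} (hδ : 0 < δ) (s : ℝ) :
    (∫⁻ x, ramp (|v (x + δ * s) - v x| / δ)) * kern s ≤ domin R L s := by
  by_cases hs : 1 / L < |s|
  · unfold domin
    rw [indicator_of_mem (show |s| ∈ Ioi (1 / L) from hs)]
    have : kern |s| = kern s := by simp [kern]
    rw [this]
    gcongr
    exact lintegral_inner_le hR δ s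
  · have : ∀ x, ramp (|v (x + δ * s) - v x| / δ) = 0 := by
      intro x
      apply ramp_eq_zero
      rw [div_le_one hδ]
      refine (hLip _ _).trans ?_
      rw [add_sub_cancel_left, abs_mul, abs_of_pos hδ]
      have h1 : L * |s| ≤ 1 := by
        have := mul_le_mul_of_nonneg_left (not_lt.1 hs) hL.le
        rwa [mul_one_div_cancel hL.ne'] at this
      nlinarith
    simp [this]

lemma pairEn_ramp_eq_swap {v : ℝ → ℝ} (hv : Continuous v) {δ : ℝ} (hδ : 0 < δ) :
    pairEn ramp δ v = ∫⁻ s, (∫⁻ x, ramp (|v (x + δ * s) - v x| / δ)) * kern s := by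
  rw [pairEn_eq_scaled ramp hδ, lintegral_lintegral_swap]
  · refine lintegral_congr fun s => ?_
    rw [lintegral_mul_const]
    exact measurable_ramp.comp (by fun_prop)
  · refine Measurable.aemeasurable ?_
    refine Measurable.mul (measurable_ramp.comp ?_) (measurable_kern.comp measurable_snd)
    exact Continuous.measurable (by fun_prop)

lemma exists_radius {v : ℝ → ℝ} (hv : HasCompactSupport v) :
    ∃ R : ℝ, 0 < R ∧ ∀ x, R < |x| → v x = 0 := by
  obtain ⟨R, hR⟩ := hv.isBounded.subset_closedBall 0
  refine ⟨max R 1, by positivity, fun x hx => ?_⟩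
  by_contra h
  have := hR (subset_tsupport _ h)
  rw [Metric.mem_closedBall, Real.dist_eq, sub_zero] at this
  linarith [le_max_left R 1]

lemma exists_lipschitz {v : ℝ → ℝ} (hc : ContDiff ℝ 1 v) (hv : HasCompactSupport v) :
    ∃ L : ℝ, 0 < L ∧ ∀ x y, |v y - v x| ≤ L * |y - x| := by
  obtain ⟨C, hC⟩ := hc.lipschitzWith_of_hasCompactSupport hv one_ne_zero
  refine ⟨C + 1, by positivity, fun x y => ?_⟩
  have := hC.dist_le_mul y x
  rw [Real.dist_eq, Real.dist_eq] at this
  nlinarith [abs_nonneg (y - x)]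

lemma pairEn_ramp_lt_top {v : ℝ → ℝ} (hc : ContDiff ℝ 1 v) (hv : HasCompactSupport v) {δ : ℝ}
    (hδ : 0 < δ) : pairEn ramp δ v < ⊤ := by
  obtain ⟨R, hR0, hR⟩ := exists_radius hv
  obtain ⟨L, hL0, hL⟩ := exists_lipschitz hc hv
  rw [pairEn_ramp_eq_swap hc.continuous hδ]
  exact (lintegral_mono fun s => inner_mul_kern_le hR hL0 hL hδ s).trans_lt
    (lintegral_domin_lt_top R hL0)

/-- The limiting energy density at a point with slope `m`. -/
lemma lintegral_ramp_mul_le (m : ℝ) :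
    ∫⁻ s, ramp (|m * s|) * kern s ≤ ENNReal.ofReal (2 * Real.log 2) * ‖m‖ₑ := by
  rcases eq_or_ne m 0 with rfl | hm
  · simp [ramp_eq_zero]
  · calc ∫⁻ s, ramp (|m * s|) * kern s
        = ‖m‖ₑ * ∫⁻ s, ramp |s| * kern s := by
          rw [lintegral_affine (a := m⁻¹) (by positivity) 0, ← lintegral_const_mul'
            _ _ (by finiteness), ← lintegral_const_mul' _ _ (by finiteness)]
          refine lintegral_congr fun s => ?_
          rw [zero_add, mul_inv_cancel_left₀ hm, mul_left_comm, mul_left_comm (‖m‖ₑ)]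
          congr 1
          rw [Real.enorm_eq_ofReal_abs, kern, kern, ← ENNReal.ofReal_mul (by positivity),
            ← ENNReal.ofReal_mul (by positivity)]
          congr 1
          rw [abs_inv, mul_pow, inv_pow, ← sq_abs m]
          have : |m| ≠ 0 := by positivity
          by_cases hs : s = 0
          · simp [hs]
          · field_simp
      _ ≤ _ := by
          rw [mul_comm]
          gcongr
          exact lintegral_ramp_kern_le

/-- The increments `|v(x + δ s) - v(x)| / δ` converge to `|v'(x) s|`, and the integrands are
supported in a fixed interval for `δ ≤ 1`. -/
lemma tendsto_inner {v : ℝ → ℝ} (hc : ContDiff ℝ 1 v) (hv : HasCompactSupport v) (s : ℝ) :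
    Tendsto (fun δ : ℝ => ∫⁻ x, ramp (|v (x + δ * s) - v x| / δ)) (𝓝[>] 0)
      (𝓝 (∫⁻ x, ramp |deriv v x * s|)) := by
  obtain ⟨R, hR0, hR⟩ := exists_radius hv
  have hcont := hc.continuous
  refine tendsto_lintegral_filter_of_dominated_convergence
    ((Icc (-(R + |s|)) (R + |s|)).indicator 1) ?_ ?_ ?_ ?_
  · exact Eventually.of_forall fun δ => measurable_ramp.comp (by fun_prop)
  · filter_upwards [Ioc_mem_nhdsGT (show (0 : ℝ) < 1 by norm_num)] with δ hδ
    refine Eventually.of_forall fun x => ?_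
    by_cases hx : x ∈ Icc (-(R + |s|)) (R + |s|)
    · rw [indicator_of_mem hx]
      exact ramp_le_one _
    · have hx' : R + |s| < |x| := by
        by_contra h; exact hx (abs_le.1 (not_lt.1 h))
      have h1 : |δ * s| ≤ |s| := by
        rw [abs_mul, abs_of_pos hδ.1]
        nlinarith [abs_nonneg s, hδ.2]
      have h2 : |x| ≤ |x + δ * s| + |δ * s| := by
        have := abs_sub (x + δ * s) (δ * s)
        rwa [add_sub_cancel_right] at this
      rw [hR x (by linarith [abs_nonneg s]), hR (x + δ * s) (by linarith), ramp_eq_zero (by simp)]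
      exact zero_le
  · rw [lintegral_indicator_one measurableSet_Icc, Real.volume_Icc]
    exact ENNReal.ofReal_ne_top
  · refine Eventually.of_forall fun x => ?_
    refine (continuous_ramp.tendsto _).comp ?_
    have hd : HasDerivAt (fun t => v (x + t * s)) (deriv v x * s) 0 := by
      have h1 : HasDerivAt v (deriv v x) (x + 0 * s) := by
        rw [zero_mul, add_zero]
        exact (hc.differentiable one_ne_zero x).hasDerivAt
      have h2 : HasDerivAt (fun t : ℝ => x + t * s) (1 * s) 0 :=
        ((hasDerivAt_id (0 : ℝ)).mul_const s).const_add x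
      rw [one_mul] at h2
      exact h1.comp 0 h2
    have := (hd.tendsto_slope.mono_left (nhdsGT_le_nhdsNE 0)).abs
    refine this.congr' ?_
    filter_upwards [self_mem_nhdsWithin] with δ hδ
    have hδ' : (0 : ℝ) < δ := hδ
    rw [slope_def_field, abs_div]
    simp [abs_of_pos hδ']

/-- The energies with the trapezoidal law are asymptotically at most `2 log 2 ∫ |v'|`. -/
lemma eventually_pairEn_ramp_le {v : ℝ → ℝ} (hc : ContDiff ℝ 1 v) (hv : HasCompactSupport v)
    {η : ℝ≥0∞} (hη : η ≠ 0) :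
    ∀ᶠ δ in 𝓝[>] (0 : ℝ), pairEn ramp δ v ≤
      ENNReal.ofReal (2 * Real.log 2) * (∫⁻ x, ‖deriv v x‖ₑ) + η := by
  obtain ⟨R, hR0, hR⟩ := exists_radius hv
  obtain ⟨L, hL0, hL⟩ := exists_lipschitz hc hv
  have hcont := hc.continuous
  have hcd : Continuous (deriv v) := hc.continuous_deriv le_rfl
  have hlim : Tendsto (fun δ => pairEn ramp δ v) (𝓝[>] 0)
      (𝓝 (∫⁻ s, (∫⁻ x, ramp |deriv v x * s|) * kern s)) := by
    refine (tendsto_lintegral_filter_of_dominated_convergence (domin R L)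
      (F := fun δ s => (∫⁻ x, ramp (|v (x + δ * s) - v x| / δ)) * kern s)
      ?_ ?_ (lintegral_domin_lt_top R hL0).ne ?_).congr' ?_
    · refine Eventually.of_forall fun δ => Measurable.mul ?_ measurable_kern
      refine Measurable.lintegral_prod_right
        (f := fun s x => ramp (|v (x + δ * s) - v x| / δ)) ?_
      exact measurable_ramp.comp (Continuous.measurable (by fun_prop))
    · filter_upwards [self_mem_nhdsWithin] with δ hδ
      exact Eventually.of_forall fun s => inner_mul_kern_le hR hL0 hL hδ s
    · refine Eventually.of_forall fun s => ?_
      exact ENNReal.Tendsto.mul_const (tendsto_inner hc hv s)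
        (Or.inr (by unfold kern; exact ENNReal.ofReal_ne_top))
    · filter_upwards [self_mem_nhdsWithin] with δ hδ
      exact (pairEn_ramp_eq_swap hcont hδ).symm
  have hle : ∫⁻ s, (∫⁻ x, ramp |deriv v x * s|) * kern s ≤
      ENNReal.ofReal (2 * Real.log 2) * (∫⁻ x, ‖deriv v x‖ₑ) := by
    calc ∫⁻ s, (∫⁻ x, ramp |deriv v x * s|) * kern s
        = ∫⁻ s, ∫⁻ x, ramp |deriv v x * s| * kern s := by
          refine lintegral_congr fun s => ?_
          rw [lintegral_mul_const]
          exact measurable_ramp.comp (by fun_prop)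
      _ = ∫⁻ x, ∫⁻ s, ramp |deriv v x * s| * kern s := by
          rw [lintegral_lintegral_swap]
          refine Measurable.aemeasurable ?_
          exact Measurable.mul (measurable_ramp.comp (Continuous.measurable (by fun_prop)))
            (measurable_kern.comp measurable_fst)
      _ ≤ ∫⁻ x, ENNReal.ofReal (2 * Real.log 2) * ‖deriv v x‖ₑ :=
          lintegral_mono fun x => lintegral_ramp_mul_le _
      _ = _ := lintegral_const_mul' _ _ ENNReal.ofReal_ne_top
  by_cases htop : ENNReal.ofReal (2 * Real.log 2) * (∫⁻ x, ‖deriv v x‖ₑ) = ⊤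
  · rw [htop]; simp
  · exact (hlim.eventually_lt_const (hle.trans_lt (ENNReal.lt_add_right htop hη))).mono
      fun _ h => h.le

/-! ### Smooth vertical segmentation -/

/-- A smooth nondecreasing staircase: on `[k, k + ε]` it climbs from `k` to `k + 1`, and on
`[k + ε, k + 1]` it is constant, for every integer `k`. -/
noncomputable def stair (ε t : ℝ) : ℝ := ⌊t⌋ + Real.smoothTransition (Int.fract t / ε)

lemma contDiff_stair {ε : ℝ} (h0 : 0 < ε) (h1 : ε < 1) : ContDiff ℝ (⊤ : ℕ∞) (stair ε) := by
  rw [contDiff_iff_contDiffAt]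
  intro t
  have hloc : stair ε =ᶠ[𝓝 t] fun r => (⌊t⌋ : ℝ) + Real.smoothTransition ((r - ⌊t⌋) / ε) := by
    have hm : Ioo ((⌊t⌋ : ℝ) - 1 + ε) (⌊t⌋ + 1) ∈ 𝓝 t :=
      Ioo_mem_nhds (by linarith [Int.floor_le t]) (Int.lt_floor_add_one t)
    filter_upwards [hm] with r hr
    rcases lt_or_ge r ⌊t⌋ with h | h
    · have hf : ⌊r⌋ = ⌊t⌋ - 1 := by
        rw [Int.floor_eq_iff]
        push_cast
        exact ⟨by linarith [hr.1], by linarith⟩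
      unfold stair
      rw [Int.fract, hf, Real.smoothTransition.one_of_one_le,
        Real.smoothTransition.zero_of_nonpos]
      · push_cast; ring
      · exact div_nonpos_of_nonpos_of_nonneg (by linarith) h0.le
      · rw [le_div_iff₀ h0]
        push_cast
        linarith [hr.1]
    · have hf : ⌊r⌋ = ⌊t⌋ := by
        rw [Int.floor_eq_iff]
        exact ⟨h, hr.2⟩
      unfold stair
      rw [Int.fract, hf]
  refine ContDiffAt.congr_of_eventuallyEq ?_ hloc
  refine contDiffAt_const.add (Real.smoothTransition.contDiff.contDiffAt.comp t ?_)
  exact ((contDiff_id.sub contDiff_const).div_const _).contDiffAt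

lemma floor_le_stair (ε t : ℝ) : (⌊t⌋ : ℝ) ≤ stair ε t := by
  unfold stair
  linarith [Real.smoothTransition.nonneg (Int.fract t / ε)]

lemma stair_le (ε t : ℝ) : stair ε t ≤ ⌊t⌋ + 1 := by
  unfold stair
  linarith [Real.smoothTransition.le_one (Int.fract t / ε)]

lemma abs_stair_sub_le (ε t : ℝ) : |stair ε t - t| ≤ 1 := by
  rw [abs_le]
  constructor <;>
  linarith [floor_le_stair ε t, stair_le ε t, Int.floor_le t, Int.lt_floor_add_one t]

lemma stair_of_fract {ε t : ℝ} (h0 : 0 < ε) (h : ε ≤ Int.fract t) : stair ε t = ⌊t⌋ + 1 := by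
  unfold stair
  rw [Real.smoothTransition.one_of_one_le]
  rwa [le_div_iff₀ h0, one_mul]

lemma stair_mono {ε : ℝ} (h0 : 0 < ε) {a b : ℝ} (hab : a ≤ b) : stair ε a ≤ stair ε b := by
  have h := Int.floor_mono hab
  rcases h.lt_or_eq with h | h
  · have : (⌊a⌋ : ℝ) + 1 ≤ ⌊b⌋ := by exact_mod_cast h
    linarith [stair_le ε a, floor_le_stair ε b]
  · unfold stair
    rw [Int.fract, Int.fract, ← h]
    gcongr
    exact Real.smoothTransition.monotone (by gcongr)

/-- If the images of `a` and `a + τ` under the staircase are more than one unit apart, then either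
`a` lies on a climbing part and `τ` exceeds `1 / 2`, or `a + τ` lies beyond the integer
`⌊a⌋ + 2`. -/
lemma fract_of_one_lt {ε : ℝ} (h0 : 0 < ε) (h2 : ε ≤ 1 / 2) {a τ : ℝ} (hτ : 0 ≤ τ)
    (h : 1 < |stair ε (a + τ) - stair ε a|) :
    (Int.fract a < ε ∧ 1 / 2 < τ) ∨ 2 - τ < Int.fract a := by
  rw [abs_of_nonneg (sub_nonneg.2 (stair_mono h0 (by linarith)))] at h
  have ha : (⌊a⌋ : ℝ) + Int.fract a = a := Int.floor_add_fract a
  rcases lt_or_ge (Int.fract a) ε with hf | hf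
  · refine Or.inl ⟨hf, ?_⟩
    by_contra hc
    have hfl : ⌊a + τ⌋ ≤ ⌊a⌋ := by
      rw [← Int.lt_add_one_iff, Int.floor_lt]
      push_cast
      linarith [not_lt.1 hc, show Int.fract a < 1 / 2 by linarith]
    have : (⌊a + τ⌋ : ℝ) ≤ ⌊a⌋ := by exact_mod_cast hfl
    linarith [stair_le ε (a + τ), floor_le_stair ε a]
  · right
    rw [stair_of_fract h0 hf] at h
    have h3 : (⌊a⌋ : ℝ) + 1 < ⌊a + τ⌋ := by linarith [stair_le ε (a + τ)]
    have h4 : ⌊a⌋ + 2 ≤ ⌊a + τ⌋ := by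
      have : ⌊a⌋ + 1 < ⌊a + τ⌋ := by exact_mod_cast h3
      omega
    rcases h4.lt_or_eq with h5 | h5
    · have : ((⌊a⌋ + 3 : ℤ) : ℝ) ≤ ⌊a + τ⌋ := by exact_mod_cast (by omega)
      push_cast at this
      linarith [Int.floor_le (a + τ)]
    · have h6 : (⌊a + τ⌋ : ℝ) = ⌊a⌋ + 2 := by rw [← h5]; push_cast; ring
      have h7 : 0 < Int.fract (a + τ) := by
        by_contra hc
        have h8 : Int.fract (a + τ) = 0 := le_antisymm (not_lt.1 hc) (Int.fract_nonneg _)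
        have : stair ε (a + τ) = ⌊a + τ⌋ := by
          unfold stair
          rw [h8, zero_div, Real.smoothTransition.zero, add_zero]
        linarith
      have h9 : (⌊a + τ⌋ : ℝ) + Int.fract (a + τ) = a + τ := Int.floor_add_fract _
      linarith

/-- The fractional part of `a + θ` is uniformly distributed when `θ` runs over a period. -/
lemma volume_fract (a : ℝ) {S : Set ℝ} (hS : MeasurableSet S) :
    volume {θ ∈ Ioc (0 : ℝ) 1 | Int.fract (a + θ) ∈ S} ≤ volume (S ∩ Ico 0 1) := by
  have hA : MeasurableSet {θ : ℝ | Int.fract (a + θ) ∈ S} :=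
    (measurable_fract.comp (measurable_const_add a)) hS
  have h1 := isAddFundamentalDomain_Ioc (T := 1) one_pos 0
  have h2 := isAddFundamentalDomain_Ioc (T := 1) one_pos (-a)
  have key := h1.measure_set_eq h2 hA (fun g => by
    obtain ⟨g, n, rfl⟩ := g
    ext θ
    have : a + ((n : ℝ) + θ) = a + θ + n := by ring
    simp [AddSubgroup.vadd_def, this])
  have e : {θ ∈ Ioc (0 : ℝ) 1 | Int.fract (a + θ) ∈ S} =
      {θ : ℝ | Int.fract (a + θ) ∈ S} ∩ Ioc 0 (0 + 1) := by
    ext θ; simp [and_comm]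
  rw [e, key]
  have hae : ({θ : ℝ | Int.fract (a + θ) ∈ S} ∩ Ioc (-a) (-a + 1) : Set ℝ) ≤ᵐ[volume]
      ((fun θ => a + θ) ⁻¹' (S ∩ Ico 0 1) : Set ℝ) := by
    have hne : ∀ᵐ θ : ℝ, θ ≠ -a + 1 := by simp [ae_iff, measure_singleton]
    filter_upwards [hne] with θ hθ
    rintro ⟨h, h3, h4⟩
    have h5 : θ < -a + 1 := lt_of_le_of_ne h4 hθ
    have h6 : Int.fract (a + θ) = a + θ := Int.fract_eq_self.2 ⟨by linarith, by linarith⟩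
    rw [mem_ofPred_eq, h6] at h
    exact ⟨h, by linarith, by linarith⟩
  refine (measure_mono_ae hae).trans ?_
  rw [measure_preimage_add]

/-- Averaging the staircase over its phase turns the sharp law `φ_1` into the trapezoidal one, up
to an error proportional to the width `ε` of the climbing parts. The error is written as an energy
density of `4 v` so that, like the main term, it vanishes for nearby points. -/
lemma volume_stair_le {ε : ℝ} (h0 : 0 < ε) (h2 : ε ≤ 1 / 2) (a b : ℝ) :
    volume {θ ∈ Ioc (0 : ℝ) 1 | 1 < |stair ε (b + θ) - stair ε (a + θ)|} ≤
      ramp |b - a| + ENNReal.ofReal ε * ramp |4 * (b - a)| := by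
  wlog hab : a ≤ b generalizing a b
  · have := this b a (le_of_not_ge hab)
    rw [abs_sub_comm b a, show 4 * (b - a) = -(4 * (a - b)) by ring, abs_neg]
    simpa only [abs_sub_comm] using this
  obtain ⟨τ, rfl⟩ : ∃ τ, b = a + τ := ⟨b - a, by ring⟩
  have hτ : 0 ≤ τ := by linarith
  rw [add_sub_cancel_left]
  have hsub : {θ ∈ Ioc (0 : ℝ) 1 | 1 < |stair ε (a + τ + θ) - stair ε (a + θ)|} ⊆
      {θ ∈ Ioc (0 : ℝ) 1 | Int.fract (a + θ) ∈ Ioi (2 - τ)} ∪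
      {θ ∈ Ioc (0 : ℝ) 1 | Int.fract (a + θ) ∈ {f | f < ε ∧ 1 / 2 < τ}} := by
    rintro θ ⟨hθ, h⟩
    rw [add_right_comm] at h
    rcases fract_of_one_lt h0 h2 hτ h with h | h
    · exact Or.inr ⟨hθ, h⟩
    · exact Or.inl ⟨hθ, h⟩
  refine (measure_mono hsub).trans ((measure_union_le _ _).trans ?_)
  rw [abs_of_nonneg hτ, abs_of_nonneg (by positivity : 0 ≤ 4 * τ)]
  refine add_le_add ((volume_fract a measurableSet_Ioi).trans ?_) ?_
  · calc _ ≤ volume (Ioo (max (2 - τ) 0) 1 ∪ {0} ∩ Ioi (2 - τ)) := by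
          refine measure_mono ?_
          rintro f ⟨h, h3, h4⟩
          rcases h3.lt_or_eq with h5 | h5
          · exact Or.inl ⟨max_lt h h5, h4⟩
          · exact Or.inr ⟨h5.symm, h⟩
      _ ≤ volume (Ioo (max (2 - τ) 0) 1) + 0 := by
          refine (measure_union_le _ _).trans ?_
          gcongr
          exact (measure_mono inter_subset_left).trans (by simp)
      _ ≤ ramp τ := by
          rw [Real.volume_Ioo, add_zero]
          unfold ramp
          refine ENNReal.ofReal_le_ofReal ?_
          rcases le_total (2 - τ) 0 with h | h
          · rw [max_eq_right h]; simp; linarith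
          · rw [max_eq_left h]
            exact le_min (by linarith) (by linarith)
  · by_cases h : 1 / 2 < τ
    · refine (volume_fract a ?_).trans ?_
      · simp only [h, and_true]
        exact measurableSet_lt measurable_id measurable_const
      · have : ramp (4 * τ) = 1 := by
          unfold ramp
          rw [min_eq_right (by linarith), ENNReal.ofReal_one]
        rw [this, mul_one]
        calc _ ≤ volume (Ico 0 ε) := by
              refine measure_mono ?_
              rintro f ⟨h, h3, h4⟩
              exact ⟨h3, h.1⟩
          _ = _ := by simp
    · simp only [h, and_false, ofPred_false, mem_empty_iff_false, measure_empty]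
      exact zero_le

/-- The smoothed vertical `δ`-segmentation of `v` with phase `θ`: the values of `v` are rounded to
a grid of mesh `δ`. The subtracted constant makes it vanish where `v` does. -/
noncomputable def segm (ε δ θ : ℝ) (v : ℝ → ℝ) (x : ℝ) : ℝ :=
  δ * (stair ε (v x / δ + θ) - stair ε θ)

lemma contDiff_segm {ε : ℝ} (h0 : 0 < ε) (h1 : ε < 1) (δ θ : ℝ) {v : ℝ → ℝ}
    (hv : ContDiff ℝ (⊤ : ℕ∞) v) : ContDiff ℝ (⊤ : ℕ∞) (segm ε δ θ v) := by
  unfold segm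
  refine contDiff_const.mul (((contDiff_stair h0 h1).comp ?_).sub contDiff_const)
  exact (hv.div_const _).add contDiff_const

lemma hasCompactSupport_segm (ε δ θ : ℝ) {v : ℝ → ℝ} (hv : HasCompactSupport v) :
    HasCompactSupport (segm ε δ θ v) :=
  hv.comp_left (g := fun r => δ * (stair ε (r / δ + θ) - stair ε θ)) (by simp)

lemma abs_segm_sub_le (ε : ℝ) {δ : ℝ} (hδ : 0 < δ) (θ : ℝ) (v : ℝ → ℝ) (x : ℝ) :
    |segm ε δ θ v x - v x| ≤ 2 * δ := by
  have e : segm ε δ θ v x - v x =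
      δ * ((stair ε (v x / δ + θ) - (v x / δ + θ)) - (stair ε θ - θ)) := by
    unfold segm
    field_simp
    ring
  rw [e, abs_mul, abs_of_pos hδ, mul_comm]
  gcongr
  refine (abs_sub _ _).trans ?_
  linarith [abs_stair_sub_le ε (v x / δ + θ), abs_stair_sub_le ε θ]

/-- Some phase does at least as well as the average over all phases. -/
lemma exists_segm_le {ε : ℝ} (h0 : 0 < ε) (h2 : ε ≤ 1 / 2) {δ : ℝ} (hδ : 0 < δ) {v : ℝ → ℝ}
    (hv : Continuous v) :
    ∃ θ, pairEn jump δ (segm ε δ θ v) ≤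
      pairEn ramp δ v + ENNReal.ofReal ε * pairEn ramp δ (fun x => 4 * v x) := by
  have hst : Continuous (stair ε) := (contDiff_stair h0 (by linarith)).continuous
  have : IsProbabilityMeasure (volume.restrict (Ioc (0 : ℝ) 1)) := ⟨by simp⟩
  have hmeas : Measurable fun p : (ℝ × ℝ) × ℝ =>
      jump (|segm ε δ p.1.1 v p.2 - segm ε δ p.1.1 v p.1.2| / δ) *
        ENNReal.ofReal (δ / (p.2 - p.1.2) ^ 2) := by
    refine Measurable.mul (measurable_jump.comp ?_) (by fun_prop)
    unfold segm
    exact Continuous.measurable (by fun_prop)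
  have hm1 : Measurable fun p : ℝ × ℝ => ∫⁻ y,
      jump (|segm ε δ p.1 v y - segm ε δ p.1 v p.2| / δ) *
        ENNReal.ofReal (δ / (y - p.2) ^ 2) := hmeas.lintegral_prod_right'
  have hm2 : Measurable fun θ => pairEn jump δ (segm ε δ θ v) := hm1.lintegral_prod_right'
  obtain ⟨θ, hθ⟩ := exists_le_lintegral (μ := volume.restrict (Ioc (0 : ℝ) 1)) hm2.aemeasurable
  refine ⟨θ, hθ.trans ?_⟩
  have hsw : ∫⁻ θ in Ioc (0 : ℝ) 1, pairEn jump δ (segm ε δ θ v) =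
      ∫⁻ x, ∫⁻ y, ∫⁻ θ in Ioc (0 : ℝ) 1, jump (|segm ε δ θ v y - segm ε δ θ v x| / δ) *
        ENNReal.ofReal (δ / (y - x) ^ 2) := by
    unfold pairEn
    rw [lintegral_lintegral_swap hm1.aemeasurable]
    refine lintegral_congr fun x => ?_
    rw [lintegral_lintegral_swap]
    exact (hmeas.comp (show Measurable fun q : ℝ × ℝ => (((q.1, x), q.2) : (ℝ × ℝ) × ℝ) by
      fun_prop)).aemeasurable
  rw [hsw]
  have hpt : ∀ x y, ∫⁻ θ in Ioc (0 : ℝ) 1, jump (|segm ε δ θ v y - segm ε δ θ v x| / δ) *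
        ENNReal.ofReal (δ / (y - x) ^ 2) ≤
      ramp (|v y - v x| / δ) * ENNReal.ofReal (δ / (y - x) ^ 2) + ENNReal.ofReal ε *
        (ramp (|4 * v y - 4 * v x| / δ) * ENNReal.ofReal (δ / (y - x) ^ 2)) := by
    intro x y
    rw [lintegral_mul_const' _ _ ENNReal.ofReal_ne_top, ← mul_assoc, ← add_mul]
    gcongr
    have hj : ∀ θ, jump (|segm ε δ θ v y - segm ε δ θ v x| / δ) =
        {θ | 1 < |stair ε (v y / δ + θ) - stair ε (v x / δ + θ)|}.indicator 1 θ := by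
      intro θ
      have : |segm ε δ θ v y - segm ε δ θ v x| / δ =
          |stair ε (v y / δ + θ) - stair ε (v x / δ + θ)| := by
        unfold segm
        rw [← mul_sub, sub_sub_sub_cancel_right, abs_mul, abs_of_pos hδ,
          mul_div_cancel_left₀ _ hδ.ne']
      rw [this]
      unfold jump
      by_cases h : |stair ε (v y / δ + θ) - stair ε (v x / δ + θ)| ≤ 1
      · simp [h, indicator]
      · simp [h, indicator, not_le.1 h]
    have hS : MeasurableSet {θ | 1 < |stair ε (v y / δ + θ) - stair ε (v x / δ + θ)|} :=
      measurableSet_lt measurable_const (Continuous.measurable (by fun_prop))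
    simp only [hj]
    rw [lintegral_indicator_one hS, Measure.restrict_apply hS, inter_comm]
    refine (volume_stair_le h0 h2 (v x / δ) (v y / δ)).trans (le_of_eq ?_)
    congr 3
    · rw [← sub_div, abs_div, abs_of_pos hδ]
    · rw [← sub_div, ← mul_sub, ← mul_div_assoc, abs_div, abs_of_pos hδ]
  have hmr : ∀ w : ℝ → ℝ, Continuous w → Measurable fun p : ℝ × ℝ =>
      ramp (|w p.2 - w p.1| / δ) * ENNReal.ofReal (δ / (p.2 - p.1) ^ 2) := fun w hw =>
    Measurable.mul (measurable_ramp.comp (Continuous.measurable (by fun_prop))) (by fun_prop)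
  calc _ ≤ ∫⁻ x, ∫⁻ y, (ramp (|v y - v x| / δ) * ENNReal.ofReal (δ / (y - x) ^ 2) +
        ENNReal.ofReal ε *
        (ramp (|4 * v y - 4 * v x| / δ) * ENNReal.ofReal (δ / (y - x) ^ 2))) :=
        lintegral_mono fun x => lintegral_mono fun y => hpt x y
    _ = _ := by
        unfold pairEn
        rw [← lintegral_const_mul' _ _ ENNReal.ofReal_ne_top,
          ← lintegral_add_left (hmr v hv).lintegral_prod_right']
        refine lintegral_congr fun x => ?_
        have hm : Measurable fun y => ramp (|v y - v x| / δ) * ENNReal.ofReal (δ / (y - x) ^ 2) :=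
          Measurable.mul (measurable_ramp.comp (Continuous.measurable (by fun_prop)))
            (by fun_prop)
        rw [lintegral_add_left hm, lintegral_const_mul' _ _ ENNReal.ofReal_ne_top]

/-! ### Raising the energy -/

lemma measurable_pair {v : ℝ → ℝ} (hv : Continuous v) (δ : ℝ) : Measurable fun p : ℝ × ℝ =>
    jump (|v p.2 - v p.1| / δ) * ENNReal.ofReal (δ / (p.2 - p.1) ^ 2) :=
  Measurable.mul (measurable_jump.comp (Continuous.measurable (by fun_prop))) (by fun_prop)

lemma jump_le_one (t : ℝ) : jump t ≤ 1 := by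
  unfold jump
  split_ifs <;> simp

/-- The energy is almost additive on functions with far apart supports: the interaction is
controlled by the size of the supports and the inverse square of their distance `M`. -/
lemma pairEn_add {U B : ℝ → ℝ} (hU : Continuous U) (hB : Continuous B) {R M p δ : ℝ}
    (hM : 0 < M) (hp : p = 2 * R + M) (hδ : 0 < δ)
    (hUR : ∀ x, R < |x| → U x = 0) (hBR : ∀ x, R < |x - p| → B x = 0) :
    pairEn jump δ (fun x => U x + B x) ≤ pairEn jump δ U + pairEn jump δ B +
      2 * (ENNReal.ofReal (δ / M ^ 2) * (2 * ENNReal.ofReal (2 * R) ^ 2)) ∧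
    pairEn jump δ U + pairEn jump δ B ≤ pairEn jump δ (fun x => U x + B x) +
      2 * (ENNReal.ofReal (δ / M ^ 2) * (2 * ENNReal.ofReal (2 * R) ^ 2)) := by
  set A : Set ℝ := Icc (-R) R with hA
  set A' : Set ℝ := Icc (p - R) (p + R) with hA'
  -- `q` is the indicator of the pairs that see both supports
  set q : ℝ → ℝ → ℝ≥0∞ := fun x y => A.indicator 1 x * A'.indicator 1 y +
    A'.indicator 1 x * A.indicator 1 y with hq
  have hqm : Measurable fun z : ℝ × ℝ => q z.1 z.2 := by
    have h1 : Measurable (A.indicator (1 : ℝ → ℝ≥0∞)) := measurable_one.indicator measurableSet_Icc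
    have h2 : Measurable (A'.indicator (1 : ℝ → ℝ≥0∞)) := measurable_one.indicator measurableSet_Icc
    exact ((h1.comp measurable_fst).mul (h2.comp measurable_snd)).add
      ((h2.comp measurable_fst).mul (h1.comp measurable_snd))
  have hA0 : ∀ x, x ∉ A → U x = 0 := fun x hx => hUR x (by
    by_contra h; exact hx (abs_le.1 (not_lt.1 h)))
  have hA0' : ∀ x, x ∉ A' → B x = 0 := fun x hx => hBR x (by
    by_contra h
    have := abs_le.1 (not_lt.1 h)
    exact hx ⟨by linarith [this.1], by linarith [this.2]⟩)
  have hfar : ∀ x ∈ A, ∀ y ∈ A', ENNReal.ofReal (δ / (y - x) ^ 2) ≤ ENNReal.ofReal (δ / M ^ 2) := by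
    intro x hx y hy
    have : M ≤ y - x := by linarith [hx.2, hy.1]
    gcongr
  have hfar' : ∀ x ∈ A', ∀ y ∈ A, ENNReal.ofReal (δ / (y - x) ^ 2) ≤
      ENNReal.ofReal (δ / M ^ 2) := by
    intro x hx y hy
    have := hfar y hy x hx
    rwa [← neg_sub y x, neg_sq] at this
  set J : (ℝ → ℝ) → ℝ → ℝ → ℝ≥0∞ := fun v x y =>
    jump (|v y - v x| / δ) * ENNReal.ofReal (δ / (y - x) ^ 2) with hJ
  have hJle : ∀ v x y, q x y ≠ 0 → J v x y ≤ ENNReal.ofReal (δ / M ^ 2) * q x y := by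
    intro v x y hne
    have hJk : J v x y ≤ ENNReal.ofReal (δ / (y - x) ^ 2) := by
      calc _ ≤ 1 * ENNReal.ofReal (δ / (y - x) ^ 2) := by
            simp only [hJ]; gcongr; exact jump_le_one _
        _ = _ := one_mul _
    have h3 : (x ∈ A ∧ y ∈ A') ∨ (x ∈ A' ∧ y ∈ A) := by
      by_contra hc
      push Not at hc
      apply hne
      simp only [hq]
      by_cases h1 : x ∈ A <;> by_cases h2 : x ∈ A' <;> simp [h1, h2, hc.1, hc.2]
    have h4 : 1 ≤ q x y := by
      rcases h3 with ⟨h1, h2⟩ | ⟨h1, h2⟩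
      · simp [hq, h1, h2]
      · simp [hq, h1, h2]
    calc J v x y ≤ ENNReal.ofReal (δ / M ^ 2) * 1 := by
          rw [mul_one]
          refine hJk.trans ?_
          rcases h3 with ⟨h1, h2⟩ | ⟨h1, h2⟩
          · exact hfar x h1 y h2
          · exact hfar' x h1 y h2
      _ ≤ _ := by gcongr
  have hJeq : ∀ x y, q x y = 0 → J (fun x => U x + B x) x y = J U x y + J B x y := by
    intro x y h0
    have h3 : (x ∉ A ∧ y ∉ A) ∨ (x ∉ A' ∧ y ∉ A') := by
      by_contra hc
      push Not at hc
      have hdis : ∀ z, z ∈ A → z ∉ A' := fun z hz hz' => by linarith [hz.2, hz'.1]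
      by_cases h1 : x ∈ A
      · simp [hq, h1, hc.2 (hdis x h1)] at h0
      · have h2 := hc.1 h1
        have h5 : x ∈ A' := by
          by_contra h6
          exact hdis y h2 (hc.2 h6)
        simp [hq, h5, h2] at h0
    have hz : jump (|(0 : ℝ) - 0| / δ) = 0 := by simp [jump]
    rcases h3 with ⟨h1, h2⟩ | ⟨h1, h2⟩
    · simp only [hJ, hA0 x h1, hA0 y h2, hz, zero_add, zero_mul]
    · simp only [hJ, hA0' x h1, hA0' y h2, hz, add_zero, zero_mul]
  have hle1 : ∀ x y, J (fun x => U x + B x) x y ≤ J U x y + J B x y +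
      2 * (ENNReal.ofReal (δ / M ^ 2) * q x y) := by
    intro x y
    by_cases h0 : q x y = 0
    · rw [hJeq x y h0]
      exact le_self_add
    · refine le_trans ?_ le_add_self
      rw [two_mul]
      exact (hJle (fun x => U x + B x) x y h0).trans le_self_add
  have hle2 : ∀ x y, J U x y + J B x y ≤ J (fun x => U x + B x) x y +
      2 * (ENNReal.ofReal (δ / M ^ 2) * q x y) := by
    intro x y
    by_cases h0 : q x y = 0
    · rw [hJeq x y h0]
      exact le_self_add
    · refine le_trans ?_ le_add_self
      rw [two_mul]
      exact add_le_add (hJle _ x y h0) (hJle _ x y h0)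
  have hJm : ∀ v, Continuous v → Measurable fun z : ℝ × ℝ => J v z.1 z.2 := fun v hv =>
    measurable_pair hv δ
  have hadd : ∀ f g : ℝ → ℝ → ℝ≥0∞, Measurable (fun z : ℝ × ℝ => f z.1 z.2) →
      ∫⁻ x, ∫⁻ y, (f x y + g x y) = (∫⁻ x, ∫⁻ y, f x y) + ∫⁻ x, ∫⁻ y, g x y := by
    intro f g hf
    rw [← lintegral_add_left (hf.lintegral_prod_right' (ν := volume))]
    refine lintegral_congr fun x => ?_
    exact lintegral_add_left (hf.comp measurable_prodMk_left) _
  have hqi : ∫⁻ x, ∫⁻ y, 2 * (ENNReal.ofReal (δ / M ^ 2) * q x y) =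
      2 * (ENNReal.ofReal (δ / M ^ 2) * (2 * ENNReal.ofReal (2 * R) ^ 2)) := by
    have h1 : Measurable (A.indicator (1 : ℝ → ℝ≥0∞)) := measurable_one.indicator measurableSet_Icc
    have h2 : Measurable (A'.indicator (1 : ℝ → ℝ≥0∞)) := measurable_one.indicator measurableSet_Icc
    have hq0 : ∫⁻ x, ∫⁻ y, q x y = 2 * ENNReal.ofReal (2 * R) ^ 2 := by
      simp only [hq]
      rw [hadd (fun x y => A.indicator 1 x * A'.indicator 1 y) _
        ((h1.comp measurable_fst).mul (h2.comp measurable_snd))]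
      simp_rw [lintegral_const_mul _ h1, lintegral_const_mul _ h2]
      rw [lintegral_mul_const _ h1, lintegral_mul_const _ h2,
        lintegral_indicator_one measurableSet_Icc, lintegral_indicator_one measurableSet_Icc,
        Real.volume_Icc, Real.volume_Icc]
      ring_nf
    rw [← hq0, ← lintegral_const_mul' _ _ ENNReal.ofReal_ne_top, ← lintegral_const_mul' _ _
      ENNReal.ofNat_ne_top]
    refine lintegral_congr fun x => ?_
    rw [← lintegral_const_mul' _ _ ENNReal.ofReal_ne_top, ← lintegral_const_mul' _ _
      ENNReal.ofNat_ne_top]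
  rw [← hqi]
  change (∫⁻ x, ∫⁻ y, J (fun x => U x + B x) x y) ≤ (∫⁻ x, ∫⁻ y, J U x y) +
      (∫⁻ x, ∫⁻ y, J B x y) + _ ∧ (∫⁻ x, ∫⁻ y, J U x y) + (∫⁻ x, ∫⁻ y, J B x y) ≤
      (∫⁻ x, ∫⁻ y, J (fun x => U x + B x) x y) + _
  rw [← hadd _ _ (hJm U hU), ← hadd (fun x y => J U x y + J B x y) _
    ((hJm U hU).add (hJm B hB)), ← hadd (fun x y => J (fun x => U x + B x) x y) _
    (hJm _ (hU.add hB))]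
  exact ⟨lintegral_mono fun x => lintegral_mono fun y => hle1 x y,
    lintegral_mono fun x => lintegral_mono fun y => hle2 x y⟩

/-- Adding to `U` a far away, strongly contracted copy of `b` adds the energy of `b`, at an
arbitrarily small cost in `L¹`. -/
lemma exists_add_copy {U b : ℝ → ℝ} (hU : ContDiff ℝ (⊤ : ℕ∞) U) (hUc : HasCompactSupport U)
    (hb : ContDiff ℝ (⊤ : ℕ∞) b) (hbc : HasCompactSupport b) {δ : ℝ} (hδ : 0 < δ)
    {η : ℝ≥0∞} (hη : η ≠ 0) :
    ∃ W : ℝ → ℝ, ContDiff ℝ (⊤ : ℕ∞) W ∧ HasCompactSupport W ∧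
      ∫⁻ x, ‖W x - U x‖ₑ ≤ η ∧
      pairEn jump δ W ≤ pairEn jump δ U + pairEn jump δ b + η ∧
      pairEn jump δ U + pairEn jump δ b ≤ pairEn jump δ W + η := by
  obtain ⟨R₁, hR₁, hUR⟩ := exists_radius hUc
  obtain ⟨R₂, hR₂, hbR⟩ := exists_radius hbc
  set R := max R₁ R₂ with hR
  have hR0 : 0 < R := lt_max_of_lt_left hR₁
  obtain ⟨M, hM0, hM⟩ : ∃ M : ℝ, 0 < M ∧
      2 * (ENNReal.ofReal (δ / M ^ 2) * (2 * ENNReal.ofReal (2 * R) ^ 2)) < η := by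
    have ht : Tendsto (fun M : ℝ => 2 * (ENNReal.ofReal (δ / M ^ 2) *
        (2 * ENNReal.ofReal (2 * R) ^ 2))) atTop (𝓝 (2 * (ENNReal.ofReal 0 *
        (2 * ENNReal.ofReal (2 * R) ^ 2)))) := by
      refine ENNReal.Tendsto.const_mul (ENNReal.Tendsto.mul_const
        (ENNReal.tendsto_ofReal ?_) (Or.inr (by finiteness))) (Or.inr (by finiteness))
      exact tendsto_const_nhds.div_atTop (tendsto_pow_atTop two_ne_zero)
    simp only [ENNReal.ofReal_zero, zero_mul, mul_zero] at ht
    exact ((eventually_gt_atTop 0).and (ht.eventually_lt_const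
      (pos_iff_ne_zero.2 hη))).exists
  obtain ⟨a, ha1, ha⟩ : ∃ a : ℝ, 1 ≤ a ∧ ENNReal.ofReal a⁻¹ * ∫⁻ x, ‖b x‖ₑ < η := by
    have hfin : ∫⁻ x, ‖b x‖ₑ ≠ ⊤ :=
      (hb.continuous.integrable_of_hasCompactSupport hbc).2.ne
    have ht : Tendsto (fun a : ℝ => ENNReal.ofReal a⁻¹ * ∫⁻ x, ‖b x‖ₑ) atTop
        (𝓝 (ENNReal.ofReal 0 * ∫⁻ x, ‖b x‖ₑ)) :=
      ENNReal.Tendsto.mul_const (ENNReal.tendsto_ofReal tendsto_inv_atTop_zero) (Or.inr hfin)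
    simp only [ENNReal.ofReal_zero, zero_mul] at ht
    exact ((eventually_ge_atTop 1).and (ht.eventually_lt_const
      (pos_iff_ne_zero.2 hη))).exists
  have ha0 : 0 < a := by linarith
  set p := 2 * R + M with hp
  set B : ℝ → ℝ := fun x => b (-(a * p) + a * x) with hB
  have hBsm : ContDiff ℝ (⊤ : ℕ∞) B :=
    hb.comp (contDiff_const.add (contDiff_const.mul contDiff_id))
  have hBR : ∀ x, R < |x - p| → B x = 0 := by
    intro x hx
    apply hbR
    have : -(a * p) + a * x = a * (x - p) := by ring
    rw [this, abs_mul, abs_of_pos ha0]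
    have := le_max_right R₁ R₂
    nlinarith [abs_nonneg (x - p)]
  have hBc : HasCompactSupport B := by
    refine HasCompactSupport.intro (isCompact_closedBall p R) fun x hx => hBR x ?_
    rw [Metric.mem_closedBall, Real.dist_eq, not_le] at hx
    exact hx
  have hBe : pairEn jump δ B = pairEn jump δ b := pairEn_comp_affine jump δ b ha0 _
  have hBi : ∫⁻ x, ‖B x‖ₑ = ENNReal.ofReal a⁻¹ * ∫⁻ x, ‖b x‖ₑ := by
    rw [lintegral_affine ha0.ne' (-(a * p)) (fun x => ‖b x‖ₑ), ← mul_assoc,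
      ← ENNReal.ofReal_mul (by positivity), abs_of_pos ha0, inv_mul_cancel₀ ha0.ne']
    simp [hB]
  have key := pairEn_add hU.continuous hBsm.continuous hM0 hp hδ
    (fun x hx => hUR x ((le_max_left _ _).trans_lt hx)) hBR
  rw [hBe] at key
  refine ⟨fun x => U x + B x, hU.add hBsm, hUc.add hBc, ?_, key.1.trans (by gcongr),
    key.2.trans (by gcongr)⟩
  simp only [add_sub_cancel_left]
  rw [hBi]
  exact ha.le

lemma exists_add_copies {U b : ℝ → ℝ} (hU : ContDiff ℝ (⊤ : ℕ∞) U) (hUc : HasCompactSupport U)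
    (hb : ContDiff ℝ (⊤ : ℕ∞) b) (hbc : HasCompactSupport b) {δ : ℝ} (hδ : 0 < δ) (N : ℕ)
    {η : ℝ≥0∞} (hη : η ≠ 0) :
    ∃ W : ℝ → ℝ, ContDiff ℝ (⊤ : ℕ∞) W ∧ HasCompactSupport W ∧
      ∫⁻ x, ‖W x - U x‖ₑ ≤ η ∧
      pairEn jump δ W ≤ pairEn jump δ U + N * pairEn jump δ b + η ∧
      pairEn jump δ U + N * pairEn jump δ b ≤ pairEn jump δ W + η := by
  induction N generalizing η with
  | zero => exact ⟨U, hU, hUc, by simp, by simp, by simp⟩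
  | succ N ih =>
    have hη2 : η / 2 ≠ 0 := (ENNReal.half_pos hη).ne'
    obtain ⟨V, hV, hVc, h1, h2, h3⟩ := ih hη2
    obtain ⟨W, hW, hWc, k1, k2, k3⟩ := exists_add_copy hV hVc hb hbc hδ hη2
    have e : η = η / 2 + η / 2 := (ENNReal.add_halves η).symm
    refine ⟨W, hW, hWc, ?_, ?_, ?_⟩
    · calc ∫⁻ x, ‖W x - U x‖ₑ ≤ ∫⁻ x, (‖W x - V x‖ₑ + ‖V x - U x‖ₑ) := by
            refine lintegral_mono fun x => ?_
            rw [← sub_add_sub_cancel (W x) (V x) (U x)]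
            exact enorm_add_le _ _
        _ = (∫⁻ x, ‖W x - V x‖ₑ) + ∫⁻ x, ‖V x - U x‖ₑ :=
            lintegral_add_left (by have := hW.continuous; have := hV.continuous; fun_prop) _
        _ ≤ η / 2 + η / 2 := add_le_add k1 h1
        _ = η := e.symm
    · calc _ ≤ pairEn jump δ V + pairEn jump δ b + η / 2 := k2
        _ ≤ (pairEn jump δ U + N * pairEn jump δ b + η / 2) + pairEn jump δ b + η / 2 := by gcongr
        _ = pairEn jump δ U + (N + 1 : ℕ) * pairEn jump δ b + (η / 2 + η / 2) := by
            push_cast; ring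
        _ = _ := by rw [← e]
    · calc _ = (pairEn jump δ U + N * pairEn jump δ b) + pairEn jump δ b := by push_cast; ring
        _ ≤ (pairEn jump δ V + η / 2) + pairEn jump δ b := by gcongr
        _ = (pairEn jump δ V + pairEn jump δ b) + η / 2 := by ring
        _ ≤ (pairEn jump δ W + η / 2) + η / 2 := by gcongr
        _ = _ := by rw [add_assoc, ← e]

/-- At scale `δ`, the profile `δ ψ` carries an energy quantum of order `δ`. -/
lemma pairEn_jump_smul {δ : ℝ} (hδ : 0 < δ) (ψ : ℝ → ℝ) :
    pairEn jump δ (fun x => δ * ψ x) = ENNReal.ofReal δ * pairEn jump 1 ψ := by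
  unfold pairEn
  rw [← lintegral_const_mul' _ _ ENNReal.ofReal_ne_top]
  refine lintegral_congr fun x => ?_
  rw [← lintegral_const_mul' _ _ ENNReal.ofReal_ne_top]
  refine lintegral_congr fun y => ?_
  rw [mul_left_comm, ← ENNReal.ofReal_mul hδ.le, ← mul_sub, abs_mul, abs_of_pos hδ,
    mul_div_cancel_left₀ _ hδ.ne', div_one, mul_one_div]

lemma jump_le_ramp (t : ℝ) : jump t ≤ ramp (2 * t) := by
  unfold jump ramp
  split_ifs with h
  · exact zero_le
  · rw [min_eq_right (by linarith), ENNReal.ofReal_one]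

/-- A smooth profile with nonzero finite energy at scale `1`. -/
lemma exists_profile : ∃ ψ : ℝ → ℝ, ContDiff ℝ (⊤ : ℕ∞) ψ ∧ HasCompactSupport ψ ∧
    pairEn jump 1 ψ ≠ 0 ∧ pairEn jump 1 ψ ≠ ⊤ := by
  let f : ContDiffBump (0 : ℝ) := ⟨1, 2, one_pos, one_lt_two⟩
  have hf : ContDiff ℝ (⊤ : ℕ∞) f := f.contDiff
  refine ⟨fun x => 2 * f x, contDiff_const.mul hf, f.hasCompactSupport.mul_left, ?_, ?_⟩
  · have hlow : ENNReal.ofReal (1 / 25) ≤ pairEn jump 1 (fun x => 2 * f x) := by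
      calc ENNReal.ofReal (1 / 25)
          = ∫⁻ x in Icc (0 : ℝ) 1, ∫⁻ y in Icc (3 : ℝ) 4, ENNReal.ofReal (1 / 25) := by
            simp only [lintegral_const, Measure.restrict_apply_univ, Real.volume_Icc]
            norm_num
        _ ≤ ∫⁻ x in Icc (0 : ℝ) 1, ∫⁻ y in Icc (3 : ℝ) 4,
            jump (|2 * f y - 2 * f x| / 1) * ENNReal.ofReal (1 / (y - x) ^ 2) := by
            refine setLIntegral_mono' measurableSet_Icc fun x hx =>
              setLIntegral_mono' measurableSet_Icc fun y hy => ?_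
            have h1 : f x = 1 := f.one_of_mem_closedBall (by
              rw [Metric.mem_closedBall, Real.dist_eq, sub_zero, abs_of_nonneg hx.1]; exact hx.2)
            have h2 : f y = 0 := f.zero_of_le_dist (by
              rw [Real.dist_eq, sub_zero]
              exact le_trans (show (2 : ℝ) ≤ y by linarith [hy.1]) (le_abs_self y))
            have h3 : jump (|2 * f y - 2 * f x| / 1) = 1 := by
              rw [h1, h2]
              unfold jump
              rw [if_neg]
              norm_num
            rw [h3, one_mul]
            refine ENNReal.ofReal_le_ofReal ?_
            have h4 : 0 < y - x := by linarith [hx.2, hy.1]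
            have h5 : y - x ≤ 5 := by linarith [hx.1, hy.2]
            gcongr
            nlinarith
        _ ≤ _ := (lintegral_mono fun x => setLIntegral_le_lintegral _ _).trans
            (setLIntegral_le_lintegral _ _)
    intro h0
    rw [h0] at hlow
    norm_num at hlow
  · have hle : pairEn jump 1 (fun x => 2 * f x) ≤ pairEn ramp 1 (fun x => 4 * f x) := by
      refine lintegral_mono fun x => lintegral_mono fun y => ?_
      dsimp only
      gcongr
      refine (jump_le_ramp _).trans (le_of_eq ?_)
      congr 1
      rw [div_one, div_one, ← mul_sub, ← mul_sub, abs_mul, abs_mul]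
      norm_num
      ring
    refine (hle.trans_lt ?_).ne
    refine pairEn_ramp_lt_top ?_ f.hasCompactSupport.mul_left one_pos
    exact contDiff_const.mul (hf.of_le (by exact_mod_cast le_top))

/-- If the energy of `U` exceeds the level `T` by at most `ζ`, then a perturbation that is small in
`L¹` brings it up to at least about `T`, adding at most `O(δ)` to the upper bound. -/
lemma exists_raise {ψ : ℝ → ℝ} (hψ : ContDiff ℝ (⊤ : ℕ∞) ψ) (hψc : HasCompactSupport ψ)
    (hψ0 : pairEn jump 1 ψ ≠ 0) {U : ℝ → ℝ} (hU : ContDiff ℝ (⊤ : ℕ∞) U)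
    (hUc : HasCompactSupport U) {δ : ℝ} (hδ : 0 < δ) {T η ζ : ℝ≥0∞} (hT : T ≠ ⊤) (hη : η ≠ 0)
    (hUT : pairEn jump δ U ≤ T + ζ) :
    ∃ W : ℝ → ℝ, ContDiff ℝ (⊤ : ℕ∞) W ∧ HasCompactSupport W ∧
      ∫⁻ x, ‖W x - U x‖ₑ ≤ η ∧
      pairEn jump δ W ≤ T + ζ + ENNReal.ofReal δ * pairEn jump 1 ψ + η ∧
      T ≤ pairEn jump δ W + η := by
  classical
  set κ := ENNReal.ofReal δ * pairEn jump 1 ψ with hκ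
  have hκ0 : κ ≠ 0 := mul_ne_zero (by simpa using hδ) hψ0
  -- the first number of energy quanta reaching `T` overshoots by at most one quantum
  have hex : ∃ N : ℕ, T ≤ pairEn jump δ U + N * κ := by
    obtain ⟨n, hn⟩ := ENNReal.exists_nat_mul_gt hκ0 hT
    exact ⟨n, hn.le.trans le_add_self⟩
  have hN := Nat.find_spec hex
  have hNle : pairEn jump δ U + (Nat.find hex : ℕ) * κ ≤ T + ζ + κ := by
    rcases h : Nat.find hex with _ | M
    · simp only [Nat.cast_zero, zero_mul, add_zero]
      exact hUT.trans le_self_add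
    · have hlt := Nat.find_min hex (show M < Nat.find hex by omega)
      calc _ = (pairEn jump δ U + M * κ) + κ := by push_cast; ring
        _ ≤ T + κ := by gcongr; exact (not_le.1 hlt).le
        _ ≤ _ := by gcongr; exact le_self_add
  obtain ⟨W, hW, hWc, h1, h2, h3⟩ := exists_add_copies hU hUc
    (b := fun x => δ * ψ x) (contDiff_const.mul hψ) hψc.mul_left hδ (Nat.find hex) hη
  rw [pairEn_jump_smul hδ] at h2 h3
  refine ⟨W, hW, hWc, h1, h2.trans ?_, hN.trans h3⟩
  gcongr

/-! ### Approximation of functions of bounded variation -/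

lemma measurable_of_eVariationOn_lt_top {u : ℝ → ℝ} (hTV : eVariationOn u univ < ⊤) :
    Measurable u := by
  have hbv : BoundedVariationOn u univ := hTV.ne
  obtain ⟨p, q, hp, hq, rfl⟩ :=
    hbv.locallyBoundedVariationOn.exists_monotoneOn_sub_monotoneOn
  exact (monotoneOn_univ.1 hp).measurable.sub (monotoneOn_univ.1 hq).measurable

/-- The variation of `u` over `(-∞, x]` dominates the increments of `u`; integrating its
increments over a bounded interval telescopes. -/
lemma lintegral_translate_le_of_nonneg {u : ℝ → ℝ} (hTV : eVariationOn u univ < ⊤) {h : ℝ}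
    (hh : 0 ≤ h) :
    ∫⁻ x, ‖u (x + h) - u x‖ₑ ≤ ENNReal.ofReal h * eVariationOn u univ := by
  have hum := measurable_of_eVariationOn_lt_top hTV
  set V : ℝ → ℝ≥0∞ := fun x => eVariationOn u (Iic x) with hV
  have hVmono : Monotone V := fun x y hxy => eVariationOn.mono u (Iic_subset_Iic.2 hxy)
  have hVle : ∀ x, V x ≤ eVariationOn u univ := fun x => eVariationOn.mono u (subset_univ _)
  have hVm : Measurable V := hVmono.measurable
  have hstep : ∀ x, ‖u (x + h) - u x‖ₑ + V x ≤ V (x + h) := by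
    intro x
    have hx : x ≤ x + h := by linarith
    calc ‖u (x + h) - u x‖ₑ + V x
        ≤ eVariationOn u (Icc x (x + h)) + eVariationOn u (Iic x) := by
          gcongr
          rw [← edist_eq_enorm_sub]
          exact eVariationOn.edist_le u (right_mem_Icc.2 hx) (left_mem_Icc.2 hx)
      _ = eVariationOn u (Iic x) + eVariationOn u (Icc x (x + h)) := add_comm _ _
      _ ≤ eVariationOn u (Iic x ∪ Icc x (x + h)) :=
          eVariationOn.add_le_union u fun a ha b hb => le_trans ha hb.1
      _ ≤ V (x + h) := eVariationOn.mono u (union_subset (Iic_subset_Iic.2 hx) Icc_subset_Iic_self)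
  have hM : ∀ M : ℝ, 0 ≤ M →
      ∫⁻ x in Ioc (-M) M, ‖u (x + h) - u x‖ₑ ≤ ENNReal.ofReal h * eVariationOn u univ := by
    intro M hM0
    have hfin : ∫⁻ x in Ioc (-M) M, V x ≠ ⊤ := by
      refine ((setLIntegral_mono measurable_const fun x _ => hVle x).trans_lt ?_).ne
      rw [setLIntegral_const, Real.volume_Ioc]
      exact ENNReal.mul_lt_top hTV ENNReal.ofReal_lt_top
    -- add the finite quantity `∫ V` to both sides, so that the telescoping stays in `[0,∞]`
    refine (ENNReal.add_le_add_iff_right hfin).1 ?_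
    calc (∫⁻ x in Ioc (-M) M, ‖u (x + h) - u x‖ₑ) + ∫⁻ x in Ioc (-M) M, V x
        = ∫⁻ x in Ioc (-M) M, (‖u (x + h) - u x‖ₑ + V x) := (lintegral_add_right _ hVm).symm
      _ ≤ ∫⁻ x in Ioc (-M) M, V (x + h) := lintegral_mono fun x => hstep x
      _ = ∫⁻ x in Ioc (-M + h) (M + h), V x := by
          rw [← (measurePreserving_add_right volume h).setLIntegral_comp_preimage
            measurableSet_Ioc hVm]
          simp
      _ ≤ ∫⁻ x in Ioc (-M) M ∪ Ioc M (M + h), V x := by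
          refine lintegral_mono_set fun x hx => ?_
          rcases le_or_gt x M with h1 | h1
          · exact Or.inl ⟨by linarith [hx.1], h1⟩
          · exact Or.inr ⟨h1, hx.2⟩
      _ ≤ (∫⁻ x in Ioc (-M) M, V x) + ∫⁻ x in Ioc M (M + h), V x := lintegral_union_le _ _ _
      _ ≤ (∫⁻ x in Ioc (-M) M, V x) + ∫⁻ x in Ioc M (M + h), eVariationOn u univ := by
          gcongr
          exact hVle _
      _ = ENNReal.ofReal h * eVariationOn u univ + ∫⁻ x in Ioc (-M) M, V x := by
          rw [setLIntegral_const, Real.volume_Ioc, add_sub_cancel_left, add_comm, mul_comm]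
  have hcov : AECover volume atTop fun M : ℝ => Ioc (-M) M :=
    aecover_Ioc tendsto_neg_atTop_atBot tendsto_id
  refine le_of_tendsto (hcov.lintegral_tendsto_of_countably_generated
    (f := fun x => ‖u (x + h) - u x‖ₑ) (by fun_prop)) ?_
  filter_upwards [eventually_ge_atTop 0] with M hM0 using hM M hM0

lemma lintegral_translate_le {u : ℝ → ℝ} (hTV : eVariationOn u univ < ⊤) (h : ℝ) :
    ∫⁻ x, ‖u (x + h) - u x‖ₑ ≤ ENNReal.ofReal |h| * eVariationOn u univ := by
  rcases le_total 0 h with hh | hh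
  · rw [abs_of_nonneg hh]
    exact lintegral_translate_le_of_nonneg hTV hh
  · rw [abs_of_nonpos hh]
    refine le_trans (le_of_eq ?_) (lintegral_translate_le_of_nonneg hTV (neg_nonneg.2 hh))
    rw [← lintegral_add_right_eq_self (fun x => ‖u (x + h) - u x‖ₑ) (-h)]
    refine lintegral_congr fun x => ?_
    rw [neg_add_cancel_right, ← enorm_neg, neg_sub]

/-- If the `L¹` modulus of continuity of `v` is at most `h * K`, then `‖v'‖₁ ≤ K`, by Fatou. -/
lemma lintegral_deriv_le {v : ℝ → ℝ} (hv : ContDiff ℝ 1 v) {K : ℝ≥0∞}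
    (hK : ∀ h > 0, ∫⁻ x, ‖v (x + h) - v x‖ₑ ≤ ENNReal.ofReal h * K) :
    ∫⁻ x, ‖deriv v x‖ₑ ≤ K := by
  set s : ℕ → ℝ := fun n => 1 / ((n : ℝ) + 1) with hs
  have hs0 : ∀ n, 0 < s n := fun n => by positivity
  have hst : Tendsto s atTop (𝓝[>] 0) :=
    tendsto_nhdsWithin_iff.2 ⟨tendsto_one_div_add_atTop_nhds_zero_nat, .of_forall hs0⟩
  have hvc := hv.continuous
  calc ∫⁻ x, ‖deriv v x‖ₑ
      = ∫⁻ x, liminf (fun n => ‖(s n)⁻¹ • (v (x + s n) - v x)‖ₑ) atTop := by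
        refine lintegral_congr fun x => ?_
        have hd := ((hv.differentiable one_ne_zero) x).hasDerivAt.tendsto_slope_zero_right
        exact ((hd.comp hst).enorm.liminf_eq).symm
    _ ≤ liminf (fun n => ∫⁻ x, ‖(s n)⁻¹ • (v (x + s n) - v x)‖ₑ) atTop :=
        lintegral_liminf_le fun n => by fun_prop
    _ ≤ liminf (fun _ : ℕ => K) atTop := by
        refine liminf_le_liminf (.of_forall fun n => ?_)
        simp_rw [enorm_smul]
        rw [lintegral_const_mul' _ _ enorm_ne_top]
        calc _ ≤ ‖(s n)⁻¹‖ₑ * (ENNReal.ofReal (s n) * K) := by gcongr; exact hK _ (hs0 n)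
          _ = K := by
            rw [Real.enorm_eq_ofReal (inv_nonneg.2 (hs0 n).le), ← mul_assoc,
              ← ENNReal.ofReal_mul (inv_nonneg.2 (hs0 n).le), inv_mul_cancel₀ (hs0 n).ne',
              ENNReal.ofReal_one, one_mul]
    _ = K := by simp

/-- Young's inequality for a kernel of mass one. -/
lemma lintegral_conv_le {k w : ℝ → ℝ} (hk : Measurable k) (hk1 : ∫⁻ t, ‖k t‖ₑ = 1)
    (hw : Measurable w) : ∫⁻ x, ‖∫ t, k t * w (x - t)‖ₑ ≤ ∫⁻ x, ‖w x‖ₑ := by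
  calc ∫⁻ x, ‖∫ t, k t * w (x - t)‖ₑ ≤ ∫⁻ x, ∫⁻ t, ‖k t‖ₑ * ‖w (x - t)‖ₑ := by
        refine lintegral_mono fun x => (enorm_integral_le_lintegral_enorm _).trans ?_
        simp_rw [enorm_mul]
        exact le_rfl
    _ = ∫⁻ t, ‖k t‖ₑ * ∫⁻ x, ‖w (x - t)‖ₑ := by
        rw [lintegral_lintegral_swap (by fun_prop)]
        exact lintegral_congr fun t => lintegral_const_mul' _ _ enorm_ne_top
    _ = _ := by
        simp_rw [lintegral_sub_right_eq_self (fun x => ‖w x‖ₑ)]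
        rw [lintegral_mul_const _ (by fun_prop), hk1, one_mul]

/-- Mollification at scale `r` moves `u` by at most `r * TV(u)` in `L¹` and does not increase its
total variation. -/
lemma exists_mollify {u : ℝ → ℝ} (hu : Integrable u) (hTV : eVariationOn u univ < ⊤) {r : ℝ}
    (hr : 0 < r) : ∃ v : ℝ → ℝ, ContDiff ℝ (⊤ : ℕ∞) v ∧ Integrable v ∧
      ∫⁻ x, ‖v x - u x‖ₑ ≤ ENNReal.ofReal r * eVariationOn u univ ∧
      ∫⁻ x, ‖deriv v x‖ₑ ≤ eVariationOn u univ := by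
  have hum := measurable_of_eVariationOn_lt_top hTV
  let φ : ContDiffBump (0 : ℝ) := ⟨r / 2, r, by linarith, by linarith⟩
  set k : ℝ → ℝ := φ.normed volume with hk
  have hkc : Continuous k := φ.continuous_normed
  have hks : HasCompactSupport k := φ.hasCompactSupport_normed
  have hki : Integrable k := φ.integrable_normed
  have hk0 : ∀ t, 0 ≤ k t := φ.nonneg_normed
  have hkint : ∫ t, k t = 1 := φ.integral_normed
  have hk1 : ∫⁻ t, ‖k t‖ₑ = 1 := by
    have : ∫⁻ t, ENNReal.ofReal (k t) = ENNReal.ofReal (∫ t, k t) :=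
      (ofReal_integral_eq_lintegral_ofReal hki (.of_forall hk0)).symm
    rw [hkint, ENNReal.ofReal_one] at this
    rw [← this]
    exact lintegral_congr fun t => Real.enorm_eq_ofReal (hk0 t)
  have hkr : ∀ t, r < |t| → k t = 0 := by
    intro t ht
    have : t ∉ Function.support k := by
      rw [hk, φ.support_normed_eq, Metric.mem_ball, Real.dist_eq, sub_zero]
      exact not_lt.2 ht.le
    exact Function.notMem_support.1 this
  obtain ⟨C, hC⟩ := hks.exists_bound_of_continuous hkc
  have hint : ∀ x, Integrable fun t => k t * u (x - t) := fun x =>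
    (hu.comp_sub_left x).bdd_mul hkc.aestronglyMeasurable (.of_forall hC)
  set v : ℝ → ℝ := fun x => ∫ t, k t * u (x - t) with hv
  have hvs : ContDiff ℝ (⊤ : ℕ∞) v :=
    hks.contDiff_convolution_left (ContinuousLinearMap.lsmul ℝ ℝ) φ.contDiff_normed
      hu.locallyIntegrable
  refine ⟨v, hvs, ⟨hvs.continuous.aestronglyMeasurable, ?_⟩, ?_, ?_⟩
  · exact (lintegral_conv_le hkc.measurable hk1 hum).trans_lt hu.2
  · have e : ∀ x, v x - u x = ∫ t, k t * (u (x - t) - u x) := by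
      intro x
      simp_rw [mul_sub]
      rw [integral_sub (hint x) (hki.mul_const _), integral_mul_const, hkint, one_mul]
    calc ∫⁻ x, ‖v x - u x‖ₑ ≤ ∫⁻ x, ∫⁻ t, ‖k t‖ₑ * ‖u (x - t) - u x‖ₑ := by
          refine lintegral_mono fun x => ?_
          dsimp only
          rw [e]
          refine (enorm_integral_le_lintegral_enorm _).trans ?_
          simp_rw [enorm_mul]
          exact le_rfl
      _ = ∫⁻ t, ‖k t‖ₑ * ∫⁻ x, ‖u (x - t) - u x‖ₑ := by
          rw [lintegral_lintegral_swap (by fun_prop)]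
          exact lintegral_congr fun t => lintegral_const_mul' _ _ enorm_ne_top
      _ ≤ ∫⁻ t, ‖k t‖ₑ * (ENNReal.ofReal r * eVariationOn u univ) := by
          refine lintegral_mono fun t => ?_
          dsimp only
          rcases lt_or_ge r |t| with h | h
          · simp [hkr t h]
          · gcongr
            simp_rw [sub_eq_add_neg _ t]
            refine (lintegral_translate_le hTV (-t)).trans ?_
            rw [abs_neg]
            gcongr
      _ = _ := by rw [lintegral_mul_const _ (by fun_prop), hk1, one_mul]
  · refine lintegral_deriv_le (hvs.of_le (by exact_mod_cast le_top)) fun h hh => ?_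
    have e : ∀ x, v (x + h) - v x = ∫ t, k t * (fun y => u (y + h) - u y) (x - t) := by
      intro x
      simp_rw [mul_sub]
      rw [integral_sub _ (hint x)]
      · simp_rw [hv, sub_add_eq_add_sub]
      · simpa only [sub_add_eq_add_sub] using hint (x + h)
    simp_rw [e]
    refine (lintegral_conv_le hkc.measurable hk1
      (show Measurable fun y => u (y + h) - u y by fun_prop)).trans ?_
    exact lintegral_translate_le_of_nonneg hTV hh.le

/-- Functions of bounded variation are approximated in `L¹` by test functions whose total
variation is not much larger. -/
lemma exists_smooth_approx {u : ℝ → ℝ} (hu : Integrable u) (hTV : eVariationOn u univ < ⊤)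
    {ε : ℝ≥0∞} (hε : ε ≠ 0) : ∃ v : ℝ → ℝ, ContDiff ℝ (⊤ : ℕ∞) v ∧ HasCompactSupport v ∧
      ∫⁻ x, ‖v x - u x‖ₑ ≤ ε ∧ ∫⁻ x, ‖deriv v x‖ₑ ≤ eVariationOn u univ + ε := by
  have hε2 : 0 < ε / 2 := ENNReal.half_pos hε
  obtain ⟨r, hr0, hr⟩ : ∃ r : ℝ, 0 < r ∧ ENNReal.ofReal r * eVariationOn u univ < ε / 2 := by
    have ht : Tendsto (fun r : ℝ => ENNReal.ofReal r * eVariationOn u univ) (𝓝[>] 0)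
        (𝓝 (ENNReal.ofReal 0 * eVariationOn u univ)) :=
      (ENNReal.Tendsto.mul_const (ENNReal.tendsto_ofReal tendsto_id) (Or.inr hTV.ne)).mono_left
        nhdsWithin_le_nhds
    rw [ENNReal.ofReal_zero, zero_mul] at ht
    exact (eventually_mem_nhdsWithin.and (ht.eventually_lt_const hε2)).exists
  obtain ⟨w, hw, hwi, hwu, hwd⟩ := exists_mollify hu hTV hr0
  have hwc := hw.continuous
  have hwdiff : Differentiable ℝ w := hw.differentiable (by simp)
  let f : ContDiffBump (0 : ℝ) := ⟨1, 2, one_pos, one_lt_two⟩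
  have hf : ContDiff ℝ (⊤ : ℕ∞) f := f.contDiff
  have hfdiff : Differentiable ℝ f := hf.differentiable (by simp)
  have hfd : Continuous (deriv f) := hf.continuous_deriv (by simp)
  obtain ⟨C, hC⟩ := f.hasCompactSupport.deriv.exists_bound_of_continuous hfd
  have hC0 : 0 ≤ C := (norm_nonneg _).trans (hC 0)
  -- truncate at radius about `n`; the cut-off contributes `O(1 / n)` to the variation
  set z : ℕ → ℝ → ℝ := fun n x => f (x / (n + 1)) * w x with hz
  have hpos : ∀ n : ℕ, (0 : ℝ) < n + 1 := fun n => by positivity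
  have hzs : ∀ n, ContDiff ℝ (⊤ : ℕ∞) (z n) := fun n => (hf.comp (contDiff_id.div_const _)).mul hw
  have hzc : ∀ n, HasCompactSupport (z n) := by
    intro n
    refine HasCompactSupport.mul_right ?_
    refine HasCompactSupport.intro (isCompact_closedBall 0 (2 * ((n : ℝ) + 1))) fun x hx => ?_
    rw [Metric.mem_closedBall, Real.dist_eq, sub_zero, not_le] at hx
    refine f.zero_of_le_dist ?_
    rw [Real.dist_eq, sub_zero, abs_div, abs_of_pos (hpos n), le_div_iff₀ (hpos n)]
    exact hx.le
  have hzd : ∀ n x, ‖deriv (z n) x‖ₑ ≤ ‖deriv w x‖ₑ + ENNReal.ofReal (C / (n + 1)) * ‖w x‖ₑ := by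
    intro n x
    have h1 : HasDerivAt (fun x : ℝ => f (x / ((n : ℝ) + 1)))
        (deriv f (x / (n + 1)) * (1 / (n + 1))) x :=
      (hfdiff _).hasDerivAt.comp x ((hasDerivAt_id x).div_const _)
    have h2 : HasDerivAt (z n) (deriv f (x / (n + 1)) * (1 / (n + 1)) * w x +
        f (x / (n + 1)) * deriv w x) x := h1.mul (hwdiff x).hasDerivAt
    rw [h2.deriv, add_comm]
    refine (enorm_add_le _ _).trans ?_
    rw [enorm_mul, enorm_mul]
    gcongr
    · calc _ ≤ 1 * ‖deriv w x‖ₑ := by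
            gcongr
            rw [Real.enorm_eq_ofReal f.nonneg]
            exact ENNReal.ofReal_le_one.2 f.le_one
        _ = _ := one_mul _
    · rw [← ofReal_norm]
      refine ENNReal.ofReal_le_ofReal ?_
      rw [norm_mul, Real.norm_of_nonneg (by positivity : (0 : ℝ) ≤ 1 / (n + 1)),
        div_eq_mul_one_div C]
      gcongr
      exact hC _
  have hlim1 : Tendsto (fun n => ∫⁻ x, ‖z n x - w x‖ₑ) atTop (𝓝 0) := by
    have h0 : ∫⁻ _x : ℝ, (0 : ℝ≥0∞) = 0 := lintegral_zero
    rw [← h0]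
    refine tendsto_lintegral_of_dominated_convergence (fun x => ‖w x‖ₑ)
      (fun n => ?_) (fun n => .of_forall fun x => ?_) hwi.2.ne (.of_forall fun x => ?_)
    · have := (hzs n).continuous
      fun_prop
    · have : z n x - w x = -((1 - f (x / (n + 1))) * w x) := by simp only [hz]; ring
      dsimp only
      rw [this, enorm_neg, enorm_mul]
      calc _ ≤ 1 * ‖w x‖ₑ := by
            gcongr
            rw [Real.enorm_eq_ofReal (by linarith [f.le_one (x := x / (n + 1))])]
            exact ENNReal.ofReal_le_one.2 (by linarith [f.nonneg (x := x / (n + 1))])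
        _ = _ := one_mul _
    · refine tendsto_const_nhds.congr' ?_
      obtain ⟨N, hN⟩ := exists_nat_ge |x|
      filter_upwards [eventually_ge_atTop N] with n hn
      have h1 : f (x / (n + 1)) = 1 := f.one_of_mem_closedBall (by
        rw [Metric.mem_closedBall, Real.dist_eq, sub_zero, abs_div, abs_of_pos (hpos n),
          div_le_one (hpos n)]
        have : (N : ℝ) ≤ n := by exact_mod_cast hn
        linarith)
      simp [hz, h1]
  have hlim2 : Tendsto (fun n : ℕ => ENNReal.ofReal (C / (n + 1)) * ∫⁻ x, ‖w x‖ₑ) atTop (𝓝 0) := by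
    have h1 : Tendsto (fun n : ℕ => C / ((n : ℝ) + 1)) atTop (𝓝 0) :=
      tendsto_const_nhds.div_atTop
        (tendsto_atTop_add_const_right _ _ tendsto_natCast_atTop_atTop)
    have := ENNReal.Tendsto.mul_const (b := ∫⁻ x, ‖w x‖ₑ) (ENNReal.tendsto_ofReal h1)
      (Or.inr hwi.2.ne)
    simpa using this
  obtain ⟨n, hn1, hn2⟩ := ((hlim1.eventually_lt_const hε2).and
    (hlim2.eventually_lt_const hε2)).exists
  refine ⟨z n, hzs n, hzc n, ?_, ?_⟩
  · have hum := measurable_of_eVariationOn_lt_top hTV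
    have hzn := (hzs n).continuous
    calc ∫⁻ x, ‖z n x - u x‖ₑ ≤ ∫⁻ x, (‖z n x - w x‖ₑ + ‖w x - u x‖ₑ) := by
          refine lintegral_mono fun x => ?_
          dsimp only
          rw [← sub_add_sub_cancel (z n x) (w x) (u x)]
          exact enorm_add_le _ _
      _ = (∫⁻ x, ‖z n x - w x‖ₑ) + ∫⁻ x, ‖w x - u x‖ₑ := lintegral_add_left (by fun_prop) _
      _ ≤ ε / 2 + ε / 2 := add_le_add hn1.le (hwu.trans hr.le)
      _ = ε := ENNReal.add_halves ε
  · calc ∫⁻ x, ‖deriv (z n) x‖ₑ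
        ≤ ∫⁻ x, (‖deriv w x‖ₑ + ENNReal.ofReal (C / (n + 1)) * ‖w x‖ₑ) :=
          lintegral_mono fun x => hzd n x
      _ = (∫⁻ x, ‖deriv w x‖ₑ) + ENNReal.ofReal (C / (n + 1)) * ∫⁻ x, ‖w x‖ₑ := by
          rw [lintegral_add_right _ (by fun_prop), lintegral_const_mul' _ _ ENNReal.ofReal_ne_top]
      _ ≤ eVariationOn u univ + ε := by
          gcongr
          exact hn2.le.trans ENNReal.half_le_self

/-! ### Recovery families -/

/-- For every tolerance and all small `δ` there is a test function close to `u` in `L¹` whose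
energy is close to the target. -/
lemma eventually_exists_near {u : ℝ → ℝ} (hu : Integrable u) (hTV : eVariationOn u univ < ⊤)
    {ε : ℝ≥0∞} (hε : ε ≠ 0) : ∀ᶠ δ in 𝓝[>] (0 : ℝ), ∃ W : ℝ → ℝ, ContDiff ℝ (⊤ : ℕ∞) W ∧
      HasCompactSupport W ∧ ∫⁻ x, ‖W x - u x‖ₑ ≤ ε ∧
      pairEn jump δ W ≤ ENNReal.ofReal (2 * Real.log 2) * eVariationOn u univ + ε ∧
      ENNReal.ofReal (2 * Real.log 2) * eVariationOn u univ ≤ pairEn jump δ W + ε := by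
  set c := ENNReal.ofReal (2 * Real.log 2) with hc
  set TV := eVariationOn u univ with hTVdef
  obtain ⟨ψ, hψ, hψc, hψ0, hψt⟩ := exists_profile
  -- the energy errors below add up to `c * η + 4 * η`, the errors in `L¹` to `3 * η`
  obtain ⟨η, hη0, hη⟩ : ∃ η : ℝ≥0∞, 0 < η ∧ (c + 5) * η < ε := by
    have ht : Tendsto (fun η : ℝ≥0∞ => (c + 5) * η) (𝓝[>] 0) (𝓝 ((c + 5) * 0)) :=
      (ENNReal.Tendsto.const_mul tendsto_id (Or.inr (by finiteness))).mono_left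
        nhdsWithin_le_nhds
    rw [mul_zero] at ht
    exact (eventually_mem_nhdsWithin.and (ht.eventually_lt_const (pos_iff_ne_zero.2 hε))).exists
  have hTfin : c * TV ≠ ⊤ := ENNReal.mul_ne_top ENNReal.ofReal_ne_top hTV.ne
  obtain ⟨v, hv, hvc, hvu, hvd⟩ := exists_smooth_approx hu hTV hη0.ne'
  have hv4 : ContDiff ℝ (⊤ : ℕ∞) fun x => 4 * v x := contDiff_const.mul hv
  -- `D` bounds the error energy of the staircase, uniformly for small `δ`; the width `s` of the
  -- climbing parts is chosen before `δ`
  set D : ℝ≥0∞ := c * (∫⁻ x, ‖deriv (fun x => 4 * v x) x‖ₑ) + 1 with hD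
  have hDt : D ≠ ⊤ := by
    have h1 : ∫⁻ x, ‖deriv (fun x => 4 * v x) x‖ₑ ≠ ⊤ :=
      ((hv4.continuous_deriv (by simp)).integrable_of_hasCompactSupport
        hvc.mul_left.deriv).2.ne
    exact ENNReal.add_ne_top.2 ⟨ENNReal.mul_ne_top ENNReal.ofReal_ne_top h1, ENNReal.one_ne_top⟩
  obtain ⟨s, ⟨hs0, hs2⟩, hs⟩ : ∃ s : ℝ, (0 < s ∧ s ≤ 1 / 2) ∧ ENNReal.ofReal s * D < η := by
    have ht : Tendsto (fun s : ℝ => ENNReal.ofReal s * D) (𝓝[>] 0) (𝓝 (ENNReal.ofReal 0 * D)) :=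
      (ENNReal.Tendsto.mul_const (ENNReal.tendsto_ofReal tendsto_id) (Or.inr hDt)).mono_left
        nhdsWithin_le_nhds
    rw [ENNReal.ofReal_zero, zero_mul] at ht
    have hI : ∀ᶠ s in 𝓝[>] (0 : ℝ), 0 < s ∧ s ≤ 1 / 2 :=
      Ioc_mem_nhdsGT (show (0 : ℝ) < 1 / 2 by norm_num)
    exact (hI.and
      (ht.eventually_lt_const hη0)).exists
  obtain ⟨R, hR0, hR⟩ := exists_radius hvc
  have hev1 : ∀ᶠ δ in 𝓝[>] (0 : ℝ),
      ENNReal.ofReal (2 * δ) * ENNReal.ofReal (2 * R) < η := by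
    have ht : Tendsto (fun δ : ℝ => ENNReal.ofReal (2 * δ) * ENNReal.ofReal (2 * R)) (𝓝[>] 0)
        (𝓝 (ENNReal.ofReal (2 * 0) * ENNReal.ofReal (2 * R))) :=
      (ENNReal.Tendsto.mul_const (ENNReal.tendsto_ofReal (tendsto_id.const_mul 2))
        (Or.inr ENNReal.ofReal_ne_top)).mono_left nhdsWithin_le_nhds
    rw [mul_zero, ENNReal.ofReal_zero, zero_mul] at ht
    exact ht.eventually_lt_const hη0
  have hev2 : ∀ᶠ δ in 𝓝[>] (0 : ℝ), ENNReal.ofReal δ * pairEn jump 1 ψ < η := by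
    have ht : Tendsto (fun δ : ℝ => ENNReal.ofReal δ * pairEn jump 1 ψ) (𝓝[>] 0)
        (𝓝 (ENNReal.ofReal 0 * pairEn jump 1 ψ)) :=
      (ENNReal.Tendsto.mul_const (ENNReal.tendsto_ofReal tendsto_id) (Or.inr hψt)).mono_left
        nhdsWithin_le_nhds
    rw [ENNReal.ofReal_zero, zero_mul] at ht
    exact ht.eventually_lt_const hη0
  have h1top : (1 : WithTop ℕ∞) ≤ ((⊤ : ℕ∞) : WithTop ℕ∞) := by exact_mod_cast le_top
  filter_upwards [eventually_pairEn_ramp_le (hv.of_le h1top) hvc hη0.ne',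
    eventually_pairEn_ramp_le (hv4.of_le h1top) hvc.mul_left one_ne_zero, hev1, hev2,
    eventually_mem_nhdsWithin] with δ hE1 hE4 hδ1 hδ2 hδ
  have hδ0 : 0 < δ := hδ
  obtain ⟨θ, hθ⟩ := exists_segm_le hs0 hs2 hδ0 hv.continuous
  have hSs := contDiff_segm hs0 (by linarith) δ θ hv
  have hSc := hasCompactSupport_segm s δ θ hvc
  have hSen : pairEn jump δ (segm s δ θ v) ≤ c * TV + (c * η + η + η) := by
    calc _ ≤ _ := hθ
      _ ≤ (c * (TV + η) + η) + η := by
          refine add_le_add (hE1.trans (by gcongr)) (le_trans ?_ hs.le)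
          gcongr
      _ = _ := by ring
  have hSL : ∫⁻ x, ‖segm s δ θ v x - v x‖ₑ ≤ η := by
    calc ∫⁻ x, ‖segm s δ θ v x - v x‖ₑ
        ≤ ∫⁻ x, (Icc (-R) R).indicator (fun _ => ENNReal.ofReal (2 * δ)) x := by
          refine lintegral_mono fun x => ?_
          by_cases hx : x ∈ Icc (-R) R
          · rw [indicator_of_mem hx, ← ofReal_norm, Real.norm_eq_abs]
            exact ENNReal.ofReal_le_ofReal (abs_segm_sub_le s hδ0 θ v x)
          · have h0 : v x = 0 := hR x (by
              by_contra h
              exact hx (abs_le.1 (not_lt.1 h)))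
            simp [segm, h0]
      _ = ENNReal.ofReal (2 * δ) * ENNReal.ofReal (2 * R) := by
          rw [lintegral_indicator_const measurableSet_Icc, Real.volume_Icc]
          ring_nf
      _ ≤ η := hδ1.le
  obtain ⟨W, hW, hWc, hWL, hWu, hWl⟩ := exists_raise hψ hψc hψ0 hSs hSc hδ0 hTfin hη0.ne' hSen
  have hη5 : 5 * η ≤ ε := le_trans (by gcongr; exact le_add_self) hη.le
  refine ⟨W, hW, hWc, ?_, ?_, hWl.trans ?_⟩
  · have hum := measurable_of_eVariationOn_lt_top hTV
    have := hW.continuous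
    have := hSs.continuous
    have := hv.continuous
    calc ∫⁻ x, ‖W x - u x‖ₑ
        ≤ ∫⁻ x, (‖W x - segm s δ θ v x‖ₑ + (‖segm s δ θ v x - v x‖ₑ + ‖v x - u x‖ₑ)) := by
          refine lintegral_mono fun x => ?_
          dsimp only
          rw [← sub_add_sub_cancel (W x) (segm s δ θ v x) (u x),
            ← sub_add_sub_cancel (segm s δ θ v x) (v x) (u x)]
          refine (enorm_add_le _ _).trans ?_
          gcongr
          exact enorm_add_le _ _
      _ = (∫⁻ x, ‖W x - segm s δ θ v x‖ₑ) + ((∫⁻ x, ‖segm s δ θ v x - v x‖ₑ) +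
          ∫⁻ x, ‖v x - u x‖ₑ) := by
          rw [lintegral_add_left (by fun_prop), lintegral_add_left (by fun_prop)]
      _ ≤ η + (η + η) := by gcongr
      _ = 3 * η := by ring
      _ ≤ 5 * η := by gcongr; norm_num
      _ ≤ ε := hη5
  · calc _ ≤ _ := hWu
      _ ≤ c * TV + (c * η + η + η) + η + η := by gcongr
      _ = c * TV + ((c + 4) * η) := by ring
      _ ≤ c * TV + ((c + 5) * η) := by gcongr; norm_num
      _ ≤ _ := by gcongr
  · gcongr
    calc η = 1 * η := (one_mul _).symm
      _ ≤ 5 * η := by gcongr; norm_num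
      _ ≤ ε := hη5

/-- Selecting a nearly optimal candidate for each `δ` turns approximability at every fixed
tolerance into convergence of the defect. -/
lemma exists_diagonal {ι : Type*} {P : ι → Prop} (hP : ∃ i, P i) (r : ℝ → ι → ℝ≥0∞)
    (h : ∀ ε : ℝ≥0∞, ε ≠ 0 → ∀ᶠ δ in 𝓝[>] (0 : ℝ), ∃ i, P i ∧ r δ i ≤ ε) :
    ∃ U : ℝ → ι, (∀ δ, P (U δ)) ∧ Tendsto (fun δ => r δ (U δ)) (𝓝[>] 0) (𝓝 0) := by
  have hch : ∀ δ : ℝ, ∃ i, P i ∧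
      (0 < δ → ∀ j, P j → r δ i ≤ r δ j + ENNReal.ofReal δ) := by
    intro δ
    by_cases hinf : ⨅ j : {j // P j}, r δ j = ⊤
    · obtain ⟨i, hi⟩ := hP
      refine ⟨i, hi, fun _ j hj => ?_⟩
      have : r δ j = ⊤ := iInf_eq_top.1 hinf ⟨j, hj⟩
      simp [this]
    · by_cases hδ : 0 < δ
      · have hlt : ⨅ j : {j // P j}, r δ j < (⨅ j : {j // P j}, r δ j) + ENNReal.ofReal δ :=
          ENNReal.lt_add_right hinf (by simpa using hδ)
        obtain ⟨⟨i, hi⟩, hlt⟩ := iInf_lt_iff.1 hlt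
        refine ⟨i, hi, fun _ j hj => hlt.le.trans ?_⟩
        gcongr
        exact iInf_le (fun j : {j // P j} => r δ j) ⟨j, hj⟩
      · obtain ⟨i, hi⟩ := hP
        exact ⟨i, hi, fun h => absurd h hδ⟩
  choose U hU hUr using hch
  refine ⟨U, hU, ENNReal.tendsto_nhds_zero.2 fun ε hε => ?_⟩
  have hε2 : 0 < ε / 2 := ENNReal.half_pos hε.ne'
  have ht : Tendsto (fun δ : ℝ => ENNReal.ofReal δ) (𝓝[>] 0) (𝓝 (ENNReal.ofReal 0)) :=
    (ENNReal.tendsto_ofReal tendsto_id).mono_left nhdsWithin_le_nhds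
  rw [ENNReal.ofReal_zero] at ht
  filter_upwards [h _ hε2.ne', ht.eventually_lt_const hε2, eventually_mem_nhdsWithin]
    with δ ⟨i, hi, hri⟩ hδ hδ0
  calc r δ (U δ) ≤ r δ i + ENNReal.ofReal δ := hUr δ hδ0 i hi
    _ ≤ ε / 2 + ε / 2 := by gcongr
    _ = ε := ENNReal.add_halves ε

/-- smooth recovery families exist for `φ_1`, `p = 1`, in dimension one. -/
theorem smooth_recovery (u : ℝ → ℝ) (hu : Integrable u)
    (hrc : ∀ x : ℝ, ContinuousWithinAt u (Set.Ici x) x)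
    (hTV : eVariationOn u Set.univ < ⊤) :
    ∃ U : ℝ → ℝ → ℝ,
      (∀ δ > (0 : ℝ), ContDiff ℝ (⊤ : ℕ∞) (U δ) ∧ HasCompactSupport (U δ)) ∧
      Tendsto (fun δ : ℝ => eLpNorm (fun x => U δ x - u x) 1 volume) (𝓝[>] 0) (𝓝 0) ∧
      Tendsto (fun δ : ℝ => Lambda1 (phik 1) 1 δ (U δ) Set.univ) (𝓝[>] 0)
        (𝓝 (ENNReal.ofReal (2 * Real.log 2) * eVariationOn u Set.univ)) := by
  set T := ENNReal.ofReal (2 * Real.log 2) * eVariationOn u Set.univ with hT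
  have hTfin : T ≠ ⊤ := ENNReal.mul_ne_top ENNReal.ofReal_ne_top hTV.ne
  -- the defect is the largest of the `L¹` distance and the two one-sided truncated differences
  -- of the energy and its target
  obtain ⟨U, hU, hlim⟩ := exists_diagonal
    (P := fun W : ℝ → ℝ => ContDiff ℝ (⊤ : ℕ∞) W ∧ HasCompactSupport W)
    ⟨fun _ => 0, contDiff_const, HasCompactSupport.zero⟩
    (fun δ W => (∫⁻ x, ‖W x - u x‖ₑ) ⊔ ((pairEn jump δ W - T) ⊔ (T - pairEn jump δ W)))
    (fun ε hε => by
      filter_upwards [eventually_exists_near hu hTV hε] with δ ⟨W, h1, h2, h3, h4, h5⟩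
      exact ⟨W, ⟨h1, h2⟩, sup_le h3 (sup_le (tsub_le_iff_left.2 h4) (tsub_le_iff_left.2 h5))⟩)
  refine ⟨U, fun δ _ => hU δ, ?_, ?_⟩
  · simp_rw [eLpNorm_one_eq_lintegral_enorm]
    exact tendsto_of_tendsto_of_tendsto_of_le_of_le tendsto_const_nhds hlim
      (fun _ => zero_le) fun _ => le_sup_left
  · simp_rw [Lambda1_eq_pairEn]
    refine (ENNReal.tendsto_nhds hTfin).2 fun ε hε => ?_
    filter_upwards [ENNReal.tendsto_nhds_zero.1 hlim ε hε] with δ hδ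
    have hδ2 := sup_le_iff.1 (sup_le_iff.1 hδ).2
    exact ⟨tsub_le_iff_right.2 (tsub_le_iff_left.1 hδ2.2), tsub_le_iff_left.1 hδ2.1⟩
end

section
/- Let φ ∈ 𝒜, let δ > 0 and p ≥ 1 be fixed, and let S : ℝ → ℝ be a function with finite image, vanishing outside a compact set, each of whose level sets {x : S(x) = c} for c ≠ 0 is a finite union of bounded intervals. Then there exists a family (u_ε)_{ε>0} with u_ε ∈ C^∞_c(ℝ) such that u_ε → S in L^p(ℝ) as ε → 0⁺ and lim_{ε→0⁺} Λ_{δ,p}(φ, u_ε, ℝ) = Λ_{δ,p}(φ, S, ℝ). -/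
/-!
The approximants are mollifications of `S` by bump functions shrinking to the origin.

`S` is constant near every point outside a discrete, hence null, set of jumps, so the
mollifications agree with `S` at almost every point from some index on. Convergence in `L ^ p`
is then dominated convergence, and the energy integrands converge almost everywhere on the plane
without any continuity of `φ`.

For the energies there are two cases. If the energy of `S` is infinite, Fatou's lemma concludes.
If it is finite, then `φ (|b - a| / δ) = 0` at each jump from `a` to `b`, because `p ≥ 1` makes the
kernel non-integrable across a jump that `φ` sees (`Lambda1_eq_top_of_jump`). By compactness there
are `T` with `φ (T / δ) = 0` and a scale `r > 0` such that values of `S` at almost all pairs of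
points closer than `r` differ by at most `T` (`exists_invisible_scale`). Averaging preserves this
bound (`mollify_sub_le`), so by monotonicity of `φ` the integrands of all mollifications vanish at
distances below `r`. At distances at least `r` they are dominated by an integrable kernel, since
`φ` is bounded and all mollifications vanish off a common bounded set (`offDiag_bound`).
-/

open MeasureTheory Filter Set Topology ENNReal

/-- The class `𝒜` of admissible interaction laws. -/
structure IsAdmissible (φ : ℝ → ℝ) : Prop where
  nonneg : ∀ t, 0 ≤ t → 0 ≤ φ t
  nontrivial : ∃ t, 0 ≤ t ∧ φ t ≠ 0
  mono : MonotoneOn φ (Set.Ici 0)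
  lsc : LowerSemicontinuousOn φ (Set.Ici 0)
  cont : ∃ S : Finset ℝ, (∀ s ∈ S, 0 < s) ∧
    ∀ t ∈ Set.Ici (0 : ℝ), t ∉ S → ContinuousWithinAt φ (Set.Ici 0) t
  quad : ∃ a : ℝ, ∀ t ∈ Set.Icc (0 : ℝ) 1, φ t ≤ a * t ^ 2
  bdd : ∃ b : ℝ, ∀ t, 0 ≤ t → φ t ≤ b

/-! ### Local structure of step functions -/

lemma ordConnected_eventually_right {I : Set ℝ} (hI : I.OrdConnected) (x : ℝ) :
    (∀ᶠ y in 𝓝[>] x, y ∈ I) ∨ (∀ᶠ y in 𝓝[>] x, y ∉ I) := by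
  by_cases h : ∀ᶠ y in 𝓝[>] x, y ∉ I
  · exact Or.inr h
  · left
    have hf : ∃ᶠ y in 𝓝[>] x, y ∈ I := (Filter.not_eventually.1 h).mono fun y hy => not_not.1 hy
    obtain ⟨y₀, hy₀, hxy₀⟩ := (hf.and_eventually self_mem_nhdsWithin).exists
    filter_upwards [Ioo_mem_nhdsGT hxy₀] with y hy
    obtain ⟨w, hw, hxw⟩ := (hf.and_eventually (Ioo_mem_nhdsGT hy.1)).exists
    exact hI.out hw hy₀ ⟨hxw.2.le, hy.2.le⟩

lemma ordConnected_eventually_left {I : Set ℝ} (hI : I.OrdConnected) (x : ℝ) :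
    (∀ᶠ y in 𝓝[<] x, y ∈ I) ∨ (∀ᶠ y in 𝓝[<] x, y ∉ I) := by
  by_cases h : ∀ᶠ y in 𝓝[<] x, y ∉ I
  · exact Or.inr h
  · left
    have hf : ∃ᶠ y in 𝓝[<] x, y ∈ I := (Filter.not_eventually.1 h).mono fun y hy => not_not.1 hy
    obtain ⟨y₀, hy₀, hxy₀⟩ := (hf.and_eventually self_mem_nhdsWithin).exists
    filter_upwards [Ioo_mem_nhdsLT hxy₀] with y hy
    obtain ⟨w, hw, hxw⟩ := (hf.and_eventually (Ioo_mem_nhdsLT hy.2)).exists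
    exact hI.out hy₀ hw ⟨hy.1.le, hxw.1.le⟩

/-- A step function is eventually constant along any filter that decides membership in every
order-connected set; this is applied to one-sided neighbourhoods of a point. The level set of `0`
needs no hypothesis: it is what remains once all nonzero values are excluded. -/
lemma step_eventually_const {S : ℝ → ℝ} (hfin : (Set.range S).Finite)
    (hlev : ∀ c : ℝ, c ≠ 0 → ∃ I : Finset (Set ℝ),
      (∀ s ∈ I, s.OrdConnected ∧ Bornology.IsBounded s) ∧
      {x : ℝ | S x = c} = ⋃₀ (I : Set (Set ℝ)))
    {l : Filter ℝ} (hl : ∀ I : Set ℝ, I.OrdConnected → (∀ᶠ y in l, y ∈ I) ∨ (∀ᶠ y in l, y ∉ I)) :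
    ∃ a, ∀ᶠ y in l, S y = a := by
  have key : ∀ c : ℝ, c ≠ 0 → (∀ᶠ y in l, S y = c) ∨ (∀ᶠ y in l, S y ≠ c) := by
    intro c hc
    obtain ⟨I, hI, hIc⟩ := hlev c hc
    have hmem : ∀ y, S y = c ↔ ∃ s ∈ I, y ∈ s := by
      intro y
      have : y ∈ {x : ℝ | S x = c} ↔ y ∈ ⋃₀ (I : Set (Set ℝ)) := by rw [hIc]
      simpa using this
    by_cases h : ∃ s ∈ I, ∀ᶠ y in l, y ∈ s
    · obtain ⟨s, hs, h⟩ := h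
      left
      filter_upwards [h] with y hy
      exact (hmem y).2 ⟨s, hs, hy⟩
    · right
      have : ∀ᶠ y in l, ∀ s ∈ (I : Set (Set ℝ)), y ∉ s := by
        rw [Filter.eventually_all_finite I.finite_toSet]
        intro s hs
        exact (hl s (hI s hs).1).resolve_left fun h' => h ⟨s, hs, h'⟩
      filter_upwards [this] with y hy hyc
      obtain ⟨s, hs, hys⟩ := (hmem y).1 hyc
      exact hy s hs hys
  by_cases h : ∃ c, c ≠ 0 ∧ ∀ᶠ y in l, S y = c
  · obtain ⟨c, -, h⟩ := h
    exact ⟨c, h⟩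
  · refine ⟨0, ?_⟩
    have : ∀ᶠ y in l, ∀ c ∈ Set.range S, c ≠ 0 → S y ≠ c := by
      rw [Filter.eventually_all_finite hfin]
      intro c _
      by_cases hc : c = 0
      · simp [hc]
      · rcases key c hc with h1 | h1
        · exact absurd ⟨c, hc, h1⟩ h
        · exact h1.mono fun y hy _ => hy
    filter_upwards [this] with y hy
    by_contra h0
    exact hy (S y) ⟨y, rfl⟩ h0 rfl

lemma step_measurable {S : ℝ → ℝ} (hfin : (Set.range S).Finite)
    (hlev : ∀ c : ℝ, c ≠ 0 → ∃ I : Finset (Set ℝ),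
      (∀ s ∈ I, s.OrdConnected ∧ Bornology.IsBounded s) ∧
      {x : ℝ | S x = c} = ⋃₀ (I : Set (Set ℝ))) : Measurable S := by
  have h1 : ∀ c : ℝ, c ≠ 0 → MeasurableSet {x | S x = c} := by
    intro c hc
    obtain ⟨I, hI, hIc⟩ := hlev c hc
    rw [hIc]
    exact MeasurableSet.sUnion I.finite_toSet.countable fun s hs => (hI s hs).1.measurableSet
  have h0 : MeasurableSet {x | S x = 0} := by
    have : {x | S x = 0} = (⋃ c ∈ Set.range S \ {0}, {x | S x = c})ᶜ := by
      ext x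
      simp only [mem_ofPred_eq, mem_compl_iff, mem_iUnion, Set.mem_sdiff, mem_singleton_iff]
      refine ⟨fun h => ?_, fun h => ?_⟩
      · rintro ⟨c, ⟨-, hc⟩, hx⟩
        exact hc (hx.symm.trans h)
      · by_contra h0
        exact h ⟨S x, ⟨⟨x, rfl⟩, h0⟩, rfl⟩
    rw [this]
    exact ((hfin.subset sdiff_subset).measurableSet_biUnion fun c hc => h1 c hc.2).compl
  intro s _
  have : S ⁻¹' s = ⋃ c ∈ Set.range S ∩ s, {x | S x = c} := by
    ext x; simp
  rw [this]
  refine (hfin.subset inter_subset_left).measurableSet_biUnion fun c _ => ?_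
  by_cases hc : c = 0
  · rw [hc]; exact h0
  · exact h1 c hc

/-! ### The energy as an integral over the plane -/

/-- The integrand of `Lambda1`, as a function on the plane. -/
noncomputable def energyDensity (φ : ℝ → ℝ) (p δ : ℝ) (u : ℝ → ℝ) (z : ℝ × ℝ) : ℝ≥0∞ :=
  ENNReal.ofReal (φ (|u z.2 - u z.1| / δ) * δ ^ p / |z.2 - z.1| ^ (1 + p))

lemma measurable_energyDensity {φ : ℝ → ℝ} (hφ : MonotoneOn φ (Set.Ici 0)) {δ : ℝ} (hδ : 0 < δ)
    (p : ℝ) {u : ℝ → ℝ} (hu : Measurable u) : Measurable (energyDensity φ p δ u) := by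
  have hm : Measurable fun t => φ (max t 0) :=
    Monotone.measurable fun a b hab =>
      hφ (Set.mem_Ici.2 (le_max_right _ _)) (Set.mem_Ici.2 (le_max_right _ _)) (max_le_max_right 0 hab)
  have : energyDensity φ p δ u = fun z : ℝ × ℝ => ENNReal.ofReal
      ((fun t => φ (max t 0)) (|u z.2 - u z.1| / δ) * δ ^ p / |z.2 - z.1| ^ (1 + p)) := by
    funext z
    have : 0 ≤ |u z.2 - u z.1| / δ := by positivity
    simp [energyDensity, max_eq_left this]
  rw [this]
  have h2 : Measurable fun z : ℝ × ℝ => |u z.2 - u z.1| / δ := by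
    simp only [← Real.norm_eq_abs]; fun_prop
  have h3 : Measurable fun z : ℝ × ℝ => |z.2 - z.1| := by
    simp only [← Real.norm_eq_abs]; fun_prop
  have h4 := hm.comp h2
  exact (((h4.mul_const _).div (h3.pow_const _))).ennreal_ofReal

lemma Lambda1_eq_lintegral_prod {φ : ℝ → ℝ} (hφ : MonotoneOn φ (Set.Ici 0)) {δ : ℝ} (hδ : 0 < δ)
    (p : ℝ) {u : ℝ → ℝ} (hu : Measurable u) :
    Lambda1 φ p δ u Set.univ
      = ∫⁻ z, energyDensity φ p δ u z ∂((volume : Measure ℝ).prod volume) := by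
  rw [lintegral_prod _ (measurable_energyDensity hφ hδ p hu).aemeasurable]
  simp [Lambda1, energyDensity]

/-- A jump seen by `φ` forces infinite energy: on the two sides of the jump the integrand is at
least a multiple of `|y - z| ^ (-(1 + p))`, and for `z = x - s` integrating this over
`y ∈ (x, x + s)` leaves a multiple of `s ^ (-p)`, which is not integrable at `0` as `p ≥ 1`. -/
lemma Lambda1_eq_top_of_jump {φ : ℝ → ℝ} {p δ : ℝ} (hδ : 0 < δ) (hp : 1 ≤ p) {S : ℝ → ℝ}
    {x a b : ℝ} (ha : ∀ᶠ y in 𝓝[<] x, S y = a) (hb : ∀ᶠ y in 𝓝[>] x, S y = b)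
    (hab : 0 < φ (|b - a| / δ)) : Lambda1 φ p δ S Set.univ = ⊤ := by
  obtain ⟨l, hl, hla⟩ := (mem_nhdsLT_iff_exists_Ioo_subset).1 ha
  obtain ⟨r, hr, hrb⟩ := (mem_nhdsGT_iff_exists_Ioo_subset).1 hb
  simp only [mem_Iio, mem_Ioi] at hl hr
  set e := min (x - l) (r - x) with he
  have he0 : 0 < e := lt_min (by linarith) (by linarith)
  have hel : e ≤ x - l := min_le_left _ _
  have her : e ≤ r - x := min_le_right _ _
  set C : ℝ := φ (|b - a| / δ) * δ ^ p / 2 ^ (1 + p) with hC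
  have hC0 : 0 < C := by positivity
  set f : ℝ → ℝ≥0∞ := (Ioo 0 e).indicator fun s => ENNReal.ofReal (C * s ^ (-p)) with hf
  have hftop : ∫⁻ s, f s = ⊤ := by
    rw [hf, lintegral_indicator measurableSet_Ioo]
    by_contra hne
    have hint : IntegrableOn (fun s : ℝ => C * s ^ (-p)) (Ioo 0 e) := by
      refine ⟨by fun_prop, ?_⟩
      rw [hasFiniteIntegral_iff_ofReal]
      · exact lt_top_iff_ne_top.2 hne
      · rw [Filter.EventuallyLE, ae_restrict_iff' measurableSet_Ioo]
        refine Eventually.of_forall fun s hs => ?_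
        have := hs.1
        simp only [Pi.zero_apply]
        positivity
    have h2 : IntegrableOn (fun s : ℝ => s ^ (-p)) (Ioo 0 e) := by
      have := hint.const_mul C⁻¹
      simpa [IntegrableOn, hC0.ne'] using this
    rw [intervalIntegral.integrableOn_Ioo_rpow_iff he0] at h2
    linarith
  rw [← top_le_iff, ← hftop, ← lintegral_sub_left_eq_self f x]
  simp only [Lambda1, Measure.restrict_univ]
  refine lintegral_mono fun z => ?_
  by_cases hz : x - z ∈ Ioo 0 e
  swap
  · simp [hf, indicator_of_notMem hz]
  simp only [hf, indicator_of_mem hz]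
  obtain ⟨hz0, hze⟩ := hz
  set s := x - z with hs
  have hSz : S z = a := hla ⟨by linarith, by linarith⟩
  calc ENNReal.ofReal (C * s ^ (-p))
      = ENNReal.ofReal (φ (|b - a| / δ) * δ ^ p / (2 * s) ^ (1 + p)) * ENNReal.ofReal s := by
        rw [← ENNReal.ofReal_mul (by positivity)]
        congr 1
        rw [hC, Real.mul_rpow (by norm_num) hz0.le, Real.rpow_neg hz0.le, Real.rpow_add hz0,
          Real.rpow_one]
        field_simp
    _ = ∫⁻ y in Ioo x (x + s),
          ENNReal.ofReal (φ (|b - a| / δ) * δ ^ p / (2 * s) ^ (1 + p)) := by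
        rw [setLIntegral_const, Real.volume_Ioo]; congr 2; ring
    _ ≤ ∫⁻ y in Ioo x (x + s),
          ENNReal.ofReal (φ (|S y - S z| / δ) * δ ^ p / |y - z| ^ (1 + p)) := by
        refine setLIntegral_mono' measurableSet_Ioo fun y hy => ?_
        have hSy : S y = b := hrb ⟨hy.1, by linarith [hy.2]⟩
        rw [hSy, hSz]
        have h1 : 0 < y - z := by linarith [hy.1]
        have h2 : y - z ≤ 2 * s := by linarith [hy.2]
        rw [abs_of_pos h1]
        gcongr
    _ ≤ _ := setLIntegral_le_lintegral _ _

/-- Off the diagonal, and with one variable confined to a bounded set, the kernel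
`|y - x| ^ (-(1 + p))` has finite integral. -/
lemma offDiag_bound {p : ℝ} (hp : 1 ≤ p) {r : ℝ} (hr : 0 < r) (M : ℝ) {A : Set ℝ}
    (hA : MeasurableSet A) (hAf : volume A ≠ ⊤) :
    ∫⁻ z, (A.indicator (1 : ℝ → ℝ≥0∞) z.1 + A.indicator (1 : ℝ → ℝ≥0∞) z.2) *
      ((Metric.ball (0 : ℝ) r)ᶜ.indicator (fun t => ENNReal.ofReal (M / |t| ^ (1 + p))) (z.2 - z.1))
      ∂((volume : Measure ℝ).prod volume) ≠ ⊤ := by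
  set H : ℝ → ℝ≥0∞ :=
    (Metric.ball (0 : ℝ) r)ᶜ.indicator (fun t => ENNReal.ofReal (M / |t| ^ (1 + p))) with hH
  have hHm : Measurable H := by
    refine Measurable.indicator ?_ Metric.isOpen_ball.measurableSet.compl
    simp only [← Real.norm_eq_abs]
    fun_prop
  set g : ℝ → ℝ≥0∞ := A.indicator 1 with hg
  have hgm : Measurable g := measurable_one.indicator hA
  have hgi : ∫⁻ t, g t ≠ ⊤ := by
    simpa [hg, lintegral_indicator hA] using hAf
  have hHi : ∫⁻ t, H t ≠ ⊤ := by
    have hint : Integrable (fun t : ℝ => |M| * ((1 + r) / r) ^ (1 + p) * (1 + ‖t‖) ^ (-(1 + p))) :=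
      (integrable_one_add_norm (by simp; linarith)).const_mul _
    have := hint.hasFiniteIntegral
    rw [hasFiniteIntegral_iff_ofReal (Eventually.of_forall fun t => by positivity)] at this
    refine ne_top_of_le_ne_top this.ne (lintegral_mono fun t => ?_)
    by_cases ht : t ∈ (Metric.ball (0 : ℝ) r)ᶜ
    swap
    · simp [hH, indicator_of_notMem ht]
    simp only [hH, indicator_of_mem ht]
    have hrt : r ≤ |t| := by simpa using ht
    have ht0 : 0 < |t| := hr.trans_le hrt
    apply ENNReal.ofReal_le_ofReal
    -- `|t| ≥ r` gives `1 + |t| ≤ ((1 + r) / r) |t|`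
    have h1 : (1 + |t|) ≤ (1 + r) / r * |t| := by
      rw [div_mul_eq_mul_div, le_div_iff₀ hr]; nlinarith
    have h2 : (1 + |t|) ^ (1 + p) ≤ ((1 + r) / r) ^ (1 + p) * |t| ^ (1 + p) := by
      rw [← Real.mul_rpow (by positivity) (by positivity)]
      exact Real.rpow_le_rpow (by positivity) h1 (by linarith)
    rw [Real.norm_eq_abs, Real.rpow_neg (by positivity), ← div_eq_mul_inv]
    rw [div_le_div_iff₀ (by positivity) (by positivity)]
    calc M * (1 + |t|) ^ (1 + p) ≤ |M| * (1 + |t|) ^ (1 + p) := by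
          gcongr; exact le_abs_self M
      _ ≤ |M| * (((1 + r) / r) ^ (1 + p) * |t| ^ (1 + p)) := by gcongr
      _ = _ := by ring
  have e1 : ∫⁻ z, g z.1 * H (z.2 - z.1) ∂((volume : Measure ℝ).prod volume)
      = (∫⁻ t, g t) * ∫⁻ t, H t := by
    rw [lintegral_prod _ (by fun_prop)]
    simp only
    rw [← lintegral_mul_const _ hgm]
    refine lintegral_congr fun x => ?_
    rw [lintegral_const_mul _ (by fun_prop), lintegral_sub_right_eq_self H x]
  have e2 : ∫⁻ z, g z.2 * H (z.2 - z.1) ∂((volume : Measure ℝ).prod volume)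
      = (∫⁻ t, g t) * ∫⁻ t, H t := by
    rw [lintegral_prod_symm _ (by fun_prop)]
    simp only
    rw [← lintegral_mul_const _ hgm]
    refine lintegral_congr fun x => ?_
    rw [lintegral_const_mul _ (by fun_prop), lintegral_sub_left_eq_self H x]
  simp only [add_mul]
  rw [lintegral_add_left (by fun_prop), e1, e2]
  exact ENNReal.add_ne_top.2 ⟨ENNReal.mul_ne_top hgi hHi, ENNReal.mul_ne_top hgi hHi⟩

/-! ### The jump set and the scale below which only invisible jumps are seen -/

/-- The points near which `S` is not constant. -/
def jumpSet (S : ℝ → ℝ) : Set ℝ := {x | ¬ ∀ᶠ y in 𝓝 x, S y = S x}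

lemma notMem_jumpSet_of_eventually {S : ℝ → ℝ} {l u a : ℝ} (h : ∀ y ∈ Ioo l u, S y = a) {x : ℝ}
    (hx : x ∈ Ioo l u) : x ∉ jumpSet S := by
  simp only [jumpSet, mem_ofPred_eq, not_not]
  filter_upwards [Ioo_mem_nhds hx.1 hx.2] with y hy
  rw [h y hy, h x hx]

/-- One-sided local constancy makes the jump set discrete, hence null. -/
lemma volume_jumpSet {S : ℝ → ℝ}
    (hloc : ∀ x, (∃ a, ∀ᶠ y in 𝓝[<] x, S y = a) ∧ (∃ b, ∀ᶠ y in 𝓝[>] x, S y = b)) :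
    volume (jumpSet S) = 0 := by
  refine measure_null_of_locally_null _ fun x hx => ⟨{x}, ?_, by simp⟩
  obtain ⟨⟨a, ha⟩, ⟨b, hb⟩⟩ := hloc x
  obtain ⟨l, hl, hla⟩ := (mem_nhdsLT_iff_exists_Ioo_subset).1 ha
  obtain ⟨r, hr, hrb⟩ := (mem_nhdsGT_iff_exists_Ioo_subset).1 hb
  simp only [mem_Iio, mem_Ioi] at hl hr
  rw [mem_nhdsWithin_iff_eventually]
  filter_upwards [Ioo_mem_nhds hl hr] with y hy hyN
  rcases lt_trichotomy y x with h | h | h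
  · exact absurd hyN (notMem_jumpSet_of_eventually (a := a) (fun w hw => hla hw) ⟨hy.1, h⟩)
  · exact h
  · exact absurd hyN (notMem_jumpSet_of_eventually (a := b) (fun w hw => hrb hw) ⟨h, hy.2⟩)

/-- If `S` has finite energy then every jump is invisible to `φ`. Taking `T` to be the largest
invisible difference of values, a Lebesgue number of the support yields a uniform scale `r`
below which almost all pairs of points have values differing by at most `T`. -/
lemma exists_invisible_scale {φ : ℝ → ℝ} {p δ : ℝ} (hδ : 0 < δ) (hp : 1 ≤ p)
    (hnn : ∀ t, 0 ≤ t → 0 ≤ φ t) (hφ0 : φ 0 = 0)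
    {S : ℝ → ℝ} (hfin : (Set.range S).Finite) (hsupp : HasCompactSupport S)
    (hloc : ∀ x, (∃ a, ∀ᶠ y in 𝓝[<] x, S y = a) ∧ (∃ b, ∀ᶠ y in 𝓝[>] x, S y = b))
    (hΛ : Lambda1 φ p δ S Set.univ ≠ ⊤) :
    ∃ T r : ℝ, 0 ≤ T ∧ φ (T / δ) = 0 ∧ 0 < r ∧
      ∀ z ∉ jumpSet S, ∀ y ∉ jumpSet S, |z - y| < r → |S z - S y| ≤ T := by
  have hQ : ({t : ℝ | t ∈ Set.image2 (fun a b => |a - b|) (Set.range S) (Set.range S)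
      ∧ φ (t / δ) = 0}).Finite := (hfin.image2 _ hfin).subset fun t ht => ht.1
  obtain ⟨T, ⟨hTmem, hT0⟩, hTmax⟩ := Set.exists_max_image _ id hQ
    ⟨0, ⟨S 0, ⟨0, rfl⟩, S 0, ⟨0, rfl⟩, by simp⟩, by simpa using hφ0⟩
  have hTnn : 0 ≤ T := by
    obtain ⟨a, -, b, -, rfl⟩ := hTmem
    exact abs_nonneg _
  have hball : ∀ x, ∃ e > 0, ∀ z ∈ Metric.ball x e, ∀ y ∈ Metric.ball x e,
      z ∉ jumpSet S → y ∉ jumpSet S → |S z - S y| ≤ T := by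
    intro x
    by_cases hx : x ∈ jumpSet S
    swap
    · simp only [jumpSet, mem_ofPred_eq, not_not] at hx
      obtain ⟨e, he, h⟩ := Metric.eventually_nhds_iff_ball.1 hx
      refine ⟨e, he, fun z hz y hy _ _ => ?_⟩
      rw [h z hz, h y hy]
      simpa using hTnn
    obtain ⟨⟨a, ha⟩, ⟨b, hb⟩⟩ := hloc x
    have hφab : φ (|b - a| / δ) = 0 := by
      refine le_antisymm (not_lt.1 fun h => ?_) (hnn _ (by positivity))
      exact hΛ (Lambda1_eq_top_of_jump hδ hp ha hb h)
    obtain ⟨_, ha'⟩ := ha.exists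
    obtain ⟨_, hb'⟩ := hb.exists
    have hab : |b - a| ≤ T := hTmax _ ⟨⟨b, ⟨_, hb'⟩, a, ⟨_, ha'⟩, rfl⟩, hφab⟩
    obtain ⟨l, hl, hla⟩ := (mem_nhdsLT_iff_exists_Ioo_subset).1 ha
    obtain ⟨r, hr, hrb⟩ := (mem_nhdsGT_iff_exists_Ioo_subset).1 hb
    simp only [mem_Iio, mem_Ioi] at hl hr
    refine ⟨min (x - l) (r - x), lt_min (by linarith) (by linarith), ?_⟩
    have hval : ∀ z ∈ Metric.ball x (min (x - l) (r - x)), z ∉ jumpSet S → S z = a ∨ S z = b := by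
      intro z hz hzN
      rw [Metric.mem_ball, Real.dist_eq, lt_min_iff, abs_lt, abs_lt] at hz
      rcases lt_trichotomy z x with h | h | h
      · exact Or.inl (hla ⟨by linarith, h⟩)
      · exact absurd (h ▸ hx) hzN
      · exact Or.inr (hrb ⟨h, by linarith⟩)
    intro z hz y hy hzN hyN
    rcases hval z hz hzN with h1 | h1 <;> rcases hval y hy hyN with h2 | h2 <;> rw [h1, h2]
    · simpa using hTnn
    · rwa [abs_sub_comm]
    · exact hab
    · simpa using hTnn
  choose e he hball using hball
  obtain ⟨r, hr, hleb⟩ := lebesgue_number_lemma_of_metric (s := tsupport S)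
    (c := fun x => Metric.ball x (e x)) hsupp (fun _ => Metric.isOpen_ball)
    (fun x _ => mem_iUnion.2 ⟨x, Metric.mem_ball_self (he x)⟩)
  refine ⟨T, r, hTnn, hT0, hr, ?_⟩
  have hone : ∀ z ∈ tsupport S, ∀ y, z ∉ jumpSet S → y ∉ jumpSet S → |z - y| < r →
      |S z - S y| ≤ T := by
    intro z hz y hzN hyN hzy
    obtain ⟨x, hx⟩ := hleb z hz
    refine hball x z (hx (Metric.mem_ball_self hr)) y (hx ?_) hzN hyN
    rw [Metric.mem_ball, Real.dist_eq, abs_sub_comm]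
    exact hzy
  intro z hzN y hyN hzy
  by_cases hz : z ∈ tsupport S
  · exact hone z hz y hzN hyN hzy
  by_cases hy : y ∈ tsupport S
  · rw [abs_sub_comm]
    exact hone y hy z hyN hzN (by rwa [abs_sub_comm])
  rw [image_eq_zero_of_notMem_tsupport hz, image_eq_zero_of_notMem_tsupport hy]
  simpa using hTnn

/-! ### Mollification -/

/-- The mollification of `S` by a normalized bump function. -/
noncomputable def mollify (ψ : ContDiffBump (0 : ℝ)) (S : ℝ → ℝ) : ℝ → ℝ :=
  convolution (ψ.normed volume) S (ContinuousLinearMap.lsmul ℝ ℝ) volume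

/-- Averaging does not increase oscillation: a bound on `|S z - S y|` for almost all pairs at
distance less than `r` passes to every such pair for the mollification. -/
lemma mollify_sub_le (ψ : ContDiffBump (0 : ℝ)) {S : ℝ → ℝ} (hS : LocallyIntegrable S)
    {N : Set ℝ} (hN : volume N = 0) {T r : ℝ}
    (h : ∀ z ∉ N, ∀ y ∉ N, |z - y| < r → |S z - S y| ≤ T) {x y : ℝ} (hxy : |x - y| < r) :
    |mollify ψ S x - mollify ψ S y| ≤ T := by
  have hex : ConvolutionExists (ψ.normed volume) S (ContinuousLinearMap.lsmul ℝ ℝ) volume :=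
    ψ.hasCompactSupport_normed.convolutionExists_left _ ψ.continuous_normed hS
  have hae : ∀ w : ℝ, ∀ᵐ t, w - t ∉ N := fun w =>
    (quasiMeasurePreserving_sub_left_of_right_invariant volume w).ae
      (measure_eq_zero_iff_ae_notMem.1 hN)
  have h1 : mollify ψ S x - mollify ψ S y
      = ∫ t, ψ.normed volume t * (S (x - t) - S (y - t)) := by
    simp only [mollify, convolution_def]
    rw [← integral_sub (hex x) (hex y)]
    simp [mul_sub]
  rw [h1, ← Real.norm_eq_abs]
  calc _ ≤ ∫ t, ψ.normed volume t * T := by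
        refine norm_integral_le_of_norm_le (ψ.integrable_normed.mul_const T) ?_
        filter_upwards [hae x, hae y] with t hx hy
        rw [norm_mul, Real.norm_of_nonneg (ψ.nonneg_normed t), Real.norm_eq_abs]
        exact mul_le_mul_of_nonneg_left (h _ hx _ hy (by simpa using hxy)) (ψ.nonneg_normed t)
    _ = T := by rw [integral_mul_const, ψ.integral_normed, one_mul]

/-- The standard sequence of bump functions shrinking to the origin. -/
noncomputable def bumpSeq (n : ℕ) : ContDiffBump (0 : ℝ) :=
  ⟨1 / (2 * ((n : ℝ) + 1)), 1 / ((n : ℝ) + 1), by positivity, by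
    apply one_div_lt_one_div_of_lt <;> nlinarith [(n.cast_nonneg : (0 : ℝ) ≤ n)]⟩

lemma bumpSeq_rOut_le_one (n : ℕ) : (bumpSeq n).rOut ≤ 1 := by
  simp only [bumpSeq]
  rw [div_le_one (by positivity)]
  linarith [(n.cast_nonneg : (0 : ℝ) ≤ n)]

lemma eventually_mollify_eq {S : ℝ → ℝ} {x : ℝ} (hx : x ∉ jumpSet S) :
    ∀ᶠ n in atTop, mollify (bumpSeq n) S x = S x := by
  simp only [jumpSet, mem_ofPred_eq, not_not] at hx
  obtain ⟨e, he, h⟩ := Metric.eventually_nhds_iff_ball.1 hx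
  have hlim : Tendsto (fun n : ℕ => 1 / ((n : ℝ) + 1)) atTop (𝓝 0) :=
    tendsto_one_div_add_atTop_nhds_zero_nat
  filter_upwards [hlim.eventually (gt_mem_nhds he)] with n hn
  exact (bumpSeq n).normed_convolution_eq_right fun y hy =>
    h y (Metric.ball_subset_ball hn.le hy)

/-! ### Convergence of the mollifications -/

lemma tendsto_eLpNorm_mollify {p : ℝ} (hp : 1 ≤ p) {S : ℝ → ℝ} (hSm : Measurable S)
    (hN : volume (jumpSet S) = 0) (hVm : ∀ n, Measurable (mollify (bumpSeq n) S))
    {A : Set ℝ} (hA : MeasurableSet A) (hAf : volume A ≠ ⊤)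
    (hVA : ∀ n, ∀ x ∉ A, mollify (bumpSeq n) S x = 0) (hSA : ∀ x ∉ A, S x = 0)
    {M : ℝ} (hM : ∀ n x, |mollify (bumpSeq n) S x - S x| ≤ M) :
    Tendsto (fun n => eLpNorm (fun x => mollify (bumpSeq n) S x - S x) (ENNReal.ofReal p) volume)
      atTop (𝓝 0) := by
  have hp0 : 0 < p := by linarith
  have hmain : Tendsto (fun n => ∫⁻ x, ‖mollify (bumpSeq n) S x - S x‖ₑ ^ p) atTop
      (𝓝 (∫⁻ _ : ℝ, 0)) := by
    refine tendsto_lintegral_of_dominated_convergence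
      (A.indicator fun _ => ENNReal.ofReal M ^ p) (fun n => ?_) (fun n => ?_) ?_ ?_
    · exact ((hVm n).sub hSm).enorm.pow_const _
    · refine Eventually.of_forall fun x => ?_
      by_cases hx : x ∈ A
      · simp only [indicator_of_mem hx]
        refine ENNReal.rpow_le_rpow ?_ hp0.le
        rw [Real.enorm_eq_ofReal_abs]
        exact ENNReal.ofReal_le_ofReal (hM n x)
      · simp [hVA n x hx, hSA x hx, hp0]
    · rw [lintegral_indicator hA, setLIntegral_const]
      exact ENNReal.mul_ne_top (ENNReal.rpow_ne_top_of_nonneg hp0.le ENNReal.ofReal_ne_top) hAf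
    · filter_upwards [measure_eq_zero_iff_ae_notMem.1 hN] with x hx
      refine tendsto_const_nhds.congr' ?_
      filter_upwards [eventually_mollify_eq hx] with n hn
      simp [hn, hp0]
  have := hmain.ennrpow_const (1 / p)
  rw [lintegral_zero, ENNReal.zero_rpow_of_pos (by positivity)] at this
  refine this.congr fun n => ?_
  rw [eLpNorm_eq_lintegral_rpow_enorm_toReal (by simpa using hp0) ENNReal.ofReal_ne_top,
    ENNReal.toReal_ofReal hp0.le]

/-- If `S` has infinite energy, Fatou's lemma suffices. Otherwise the integrands of the
mollifications vanish at distances below the invisible scale, and at larger distances they are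
dominated because `φ` is bounded. -/
lemma tendsto_Lambda1_mollify {φ : ℝ → ℝ} (hφ : IsAdmissible φ) {δ p : ℝ} (hδ : 0 < δ)
    (hp : 1 ≤ p) {S : ℝ → ℝ} (hfin : (Set.range S).Finite) (hsupp : HasCompactSupport S)
    (hSm : Measurable S) (hSi : LocallyIntegrable S)
    (hloc : ∀ x, (∃ a, ∀ᶠ y in 𝓝[<] x, S y = a) ∧ (∃ b, ∀ᶠ y in 𝓝[>] x, S y = b))
    (hVm : ∀ n, Measurable (mollify (bumpSeq n) S))
    {A : Set ℝ} (hA : MeasurableSet A) (hAf : volume A ≠ ⊤)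
    (hVA : ∀ n, ∀ x ∉ A, mollify (bumpSeq n) S x = 0) :
    Tendsto (fun n => Lambda1 φ p δ (mollify (bumpSeq n) S) Set.univ) atTop
      (𝓝 (Lambda1 φ p δ S Set.univ)) := by
  have hφ0 : φ 0 = 0 := by
    obtain ⟨a, ha⟩ := hφ.quad
    refine le_antisymm ?_ (hφ.nonneg 0 le_rfl)
    simpa using ha 0 (by simp)
  obtain ⟨b, hb⟩ := hφ.bdd
  have hN : volume (jumpSet S) = 0 := volume_jumpSet hloc
  have hdm : ∀ n, Measurable (energyDensity φ p δ (mollify (bumpSeq n) S)) := fun n =>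
    measurable_energyDensity hφ.mono hδ p (hVm n)
  have hpt : ∀ᵐ z ∂((volume : Measure ℝ).prod volume),
      Tendsto (fun n => energyDensity φ p δ (mollify (bumpSeq n) S) z) atTop
        (𝓝 (energyDensity φ p δ S z)) := by
    have hae := measure_eq_zero_iff_ae_notMem.1 hN
    filter_upwards [Measure.quasiMeasurePreserving_fst.ae hae,
      Measure.quasiMeasurePreserving_snd.ae hae] with z h1 h2
    refine tendsto_const_nhds.congr' ?_
    filter_upwards [eventually_mollify_eq h1, eventually_mollify_eq h2] with n e1 e2
    simp only [energyDensity, e1, e2]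
  simp only [Lambda1_eq_lintegral_prod hφ.mono hδ p (hVm _)]
  by_cases hΛ : Lambda1 φ p δ S Set.univ = ⊤
  · have hfatou := lintegral_liminf_le (μ := (volume : Measure ℝ).prod volume) (u := atTop) hdm
    have hlim : ∫⁻ z, liminf (fun n => energyDensity φ p δ (mollify (bumpSeq n) S) z) atTop
        ∂((volume : Measure ℝ).prod volume) = ⊤ := by
      rw [← hΛ, Lambda1_eq_lintegral_prod hφ.mono hδ p hSm]
      exact lintegral_congr_ae (hpt.mono fun z hz => hz.liminf_eq)
    rw [hlim, top_le_iff] at hfatou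
    rw [hΛ]
    exact tendsto_of_le_liminf_of_limsup_le hfatou.ge le_top
  obtain ⟨T, r, hT, hφT, hr, hscale⟩ :=
    exists_invisible_scale hδ hp hφ.nonneg hφ0 hfin hsupp hloc hΛ
  rw [Lambda1_eq_lintegral_prod hφ.mono hδ p hSm]
  refine tendsto_lintegral_of_dominated_convergence _ hdm (fun n => ?_)
    (offDiag_bound hp hr (b * δ ^ p) hA hAf) hpt
  refine Eventually.of_forall fun z => ?_
  have hz0 : 0 ≤ |mollify (bumpSeq n) S z.2 - mollify (bumpSeq n) S z.1| / δ := by positivity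
  by_cases hz : |z.2 - z.1| < r
  · have hle := mollify_sub_le (bumpSeq n) hSi hN hscale hz
    have : φ (|mollify (bumpSeq n) S z.2 - mollify (bumpSeq n) S z.1| / δ) = 0 := by
      refine le_antisymm ?_ (hφ.nonneg _ hz0)
      rw [← hφT]
      exact hφ.mono hz0 (Set.mem_Ici.2 (by positivity)) (by gcongr)
    simp [energyDensity, this]
  have hzr : z.2 - z.1 ∈ (Metric.ball (0 : ℝ) r)ᶜ := by simpa using hz
  by_cases hzA : z.1 ∈ A ∨ z.2 ∈ A
  swap
  · push Not at hzA
    simp [energyDensity, hVA n _ hzA.1, hVA n _ hzA.2, hφ0]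
  have hone : 1 ≤ A.indicator (1 : ℝ → ℝ≥0∞) z.1 + A.indicator (1 : ℝ → ℝ≥0∞) z.2 := by
    rcases hzA with h | h
    · simp [indicator_of_mem h]
    · simp [indicator_of_mem h]
  simp only [indicator_of_mem hzr]
  refine le_trans ?_ (le_mul_of_one_le_left zero_le hone)
  refine ENNReal.ofReal_le_ofReal ?_
  gcongr
  exact hb _ hz0

/-- a step function (finite image, compact support, nonzero level sets being
finite unions of bounded intervals) can be approximated in energy by smooth functions with
compact support, for fixed `δ > 0` and `p ≥ 1`. -/
theorem smooth_approximation_step (φ : ℝ → ℝ) (hφ : IsAdmissible φ)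
    (δ p : ℝ) (hδ : 0 < δ) (hp : 1 ≤ p)
    (S : ℝ → ℝ) (hfin : (Set.range S).Finite) (hsupp : HasCompactSupport S)
    (hlev : ∀ c : ℝ, c ≠ 0 → ∃ I : Finset (Set ℝ),
      (∀ s ∈ I, s.OrdConnected ∧ Bornology.IsBounded s) ∧
      {x : ℝ | S x = c} = ⋃₀ (I : Set (Set ℝ))) :
    ∃ U : ℝ → ℝ → ℝ,
      (∀ ε > (0 : ℝ), ContDiff ℝ (⊤ : ℕ∞) (U ε) ∧ HasCompactSupport (U ε)) ∧
      Tendsto (fun ε : ℝ => eLpNorm (fun x => U ε x - S x) (ENNReal.ofReal p) volume)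
        (𝓝[>] 0) (𝓝 0) ∧
      Tendsto (fun ε : ℝ => Lambda1 φ p δ (U ε) Set.univ) (𝓝[>] 0)
        (𝓝 (Lambda1 φ p δ S Set.univ)) := by
  have hloc : ∀ x, (∃ a, ∀ᶠ y in 𝓝[<] x, S y = a) ∧ (∃ b, ∀ᶠ y in 𝓝[>] x, S y = b) := fun x =>
    ⟨step_eventually_const hfin hlev fun I hI => ordConnected_eventually_left hI x,
      step_eventually_const hfin hlev fun I hI => ordConnected_eventually_right hI x⟩
  have hSm : Measurable S := step_measurable hfin hlev
  obtain ⟨M, hM⟩ : ∃ M, ∀ x y, |S x - S y| ≤ M := by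
    obtain ⟨M, hM⟩ := (hfin.image2 (fun a b => |a - b|) hfin).bddAbove
    exact ⟨M, fun x y => hM ⟨S x, ⟨x, rfl⟩, S y, ⟨y, rfl⟩, rfl⟩⟩
  have hSi : LocallyIntegrable S := by
    obtain ⟨C, hC⟩ := (hfin.image (fun a => ‖a‖)).bddAbove
    refine LocallyIntegrable.mono (locallyIntegrable_const C) hSm.aestronglyMeasurable ?_
    exact Eventually.of_forall fun x =>
      (hC ⟨S x, ⟨x, rfl⟩, rfl⟩ : ‖S x‖ ≤ C).trans (Real.le_norm_self C)
  obtain ⟨R, hR⟩ := hsupp.isBounded.subset_closedBall (0 : ℝ)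
  have hSR : ∀ x, R < |x| → S x = 0 := fun x hx =>
    image_eq_zero_of_notMem_tsupport fun h => by
      have := hR h
      rw [mem_closedBall_zero_iff, Real.norm_eq_abs] at this
      linarith
  set A : Set ℝ := Metric.closedBall 0 (R + 1) with hA
  have hSA : ∀ x ∉ A, S x = 0 := fun x hx => hSR x (by
    rw [hA, mem_closedBall_zero_iff, Real.norm_eq_abs] at hx
    linarith)
  have hVA : ∀ n, ∀ x ∉ A, mollify (bumpSeq n) S x = 0 := by
    intro n x hx
    rw [← hSA x hx]
    refine (bumpSeq n).normed_convolution_eq_right fun y hy => ?_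
    rw [hSA x hx]
    apply hSR
    rw [hA, mem_closedBall_zero_iff, Real.norm_eq_abs] at hx
    have h1 : |x - y| < 1 := by
      rw [abs_sub_comm]
      exact (Metric.mem_ball.1 hy).trans_le (bumpSeq_rOut_le_one n)
    have := abs_sub_abs_le_abs_sub x y
    linarith
  have hVsm : ∀ n, ContDiff ℝ (⊤ : ℕ∞) (mollify (bumpSeq n) S) := fun n =>
    (bumpSeq n).hasCompactSupport_normed.contDiff_convolution_left _
      (bumpSeq n).contDiff_normed hSi
  have hVm : ∀ n, Measurable (mollify (bumpSeq n) S) := fun n => (hVsm n).continuous.measurable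
  have hVS : ∀ n x, |mollify (bumpSeq n) S x - S x| ≤ M := fun n x =>
    (bumpSeq n).dist_normed_convolution_le hSm.aestronglyMeasurable fun y _ => hM y x
  have hAm : MeasurableSet A := Metric.isClosed_closedBall.measurableSet
  have hAf : volume A ≠ ⊤ := (isCompact_closedBall (0 : ℝ) (R + 1)).measure_lt_top.ne
  have hidx : Tendsto (fun ε : ℝ => ⌈ε⁻¹⌉₊) (𝓝[>] 0) atTop :=
    tendsto_nat_ceil_atTop.comp tendsto_inv_nhdsGT_zero
  refine ⟨fun ε => mollify (bumpSeq ⌈ε⁻¹⌉₊) S, fun ε _ => ⟨hVsm _, ?_⟩, ?_, ?_⟩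
  · exact (bumpSeq _).hasCompactSupport_normed.convolution _ hsupp
  · exact (tendsto_eLpNorm_mollify hp hSm (volume_jumpSet hloc) hVm hAm hAf hVA hSA hVS).comp hidx
  · exact (tendsto_Lambda1_mollify hφ hδ hp hfin hsupp hSm hSi hloc hVm hAm hAf hVA).comp hidx
end
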